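/- arXiv:1710.02838 — 4 statements merged into one kernel-verified Lean document; each statement's English description precedes it below -/
import Mathlib

section
/- Let f_pre be the precision aggregation scheme defined below. For all real numbers x, y, z with 0 ≤ x ≤ y ≤ z ≤ 1 and x < z, ((z−y)/(z−x))·(f_pre(y,x) − x)² + ((y−x)/(z−x))·(f_pre(y,z) − z)² ≤ (5√5 − 11)/8. -/
noncomputable section

/-- The precision `φ(v) = 1/(v(1-v))` of a forecast `v`. -/
def phi (v : ℝ) : ℝ := 1 / (v * (1 - v))

/-- The precision aggregation scheme. -/
def fpre (x₁ x₂ : ℝ) : ℝ :=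
  if (x₁ = 0 ∧ x₂ = 1) ∨ (x₁ = 1 ∧ x₂ = 0) then 1/2
  else if x₁ = 0 ∨ x₂ = 0 then 0
  else if x₁ = 1 ∨ x₂ = 1 then 1
  else if |x₁ - x₂| ≤ 0.4 then
    (phi x₁ * x₁ + phi x₂ * x₂) / (phi x₁ + phi x₂)
  else
    (Real.sqrt (phi x₁) * x₁ + Real.sqrt (phi x₂) * x₂)
      / (Real.sqrt (phi x₁) + Real.sqrt (phi x₂))


theorem aux_long_gen {a b r : ℝ} (ha : 0 ≤ a) (hb : 0 < b) (hr : 0 < r) :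
    (a / (a + b))^2 ≤ (a^2 / b^2 + r^3) / (1 + r)^3 := by
  have h1 : 0 < a + b := by linarith
  rw [div_pow, div_add' _ _ _ (by positivity), div_div, div_le_div_iff₀ (by positivity) (by positivity)]
  have : 0 ≤ (a - r*b)^2 * (a^2 + (2+2*r)*a*b + r*b^2) := by positivity
  nlinarith [this]

theorem aux_short_gen {p q : ℝ} (hp : 0 ≤ p) (hq : 0 < q) :
    (p / (p + q))^2 ≤ p / (4 * q) := by
  have h1 : 0 < p + q := by linarith
  rw [div_pow, div_le_div_iff₀ (by positivity) (by positivity)]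
  nlinarith [mul_nonneg hp (sq_nonneg (p - q))]

-- short, region I
set_option maxHeartbeats 2000000 in
theorem s1 {t D : ℝ} (h0 : 0 ≤ t) (h1 : t ≤ 0.04) (hD1 : -0.4 ≤ D) (hD2 : D ≤ 0.4) :
    D^2 * (1/4-(D-t)^2) ≤ 4 * (0.02254 + 0.3125*t*D) * (1/4 - t^2) := by
  nlinarith [sq_nonneg (D^2 - 1/8), mul_nonneg h0 (sub_nonneg.2 h1), sq_nonneg (D*t), mul_nonneg (sub_nonneg.2 hD1) (sub_nonneg.2 hD2), mul_nonneg (mul_nonneg (sub_nonneg.2 hD1) (sub_nonneg.2 hD2)) h0, mul_nonneg (sub_nonneg.2 hD1) h0, mul_nonneg (sub_nonneg.2 hD2) h0]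

theorem bern_aux {p p' q q' : ℝ} (hp : 0 ≤ p) (hp' : 0 ≤ p') (hq : 0 ≤ q) (hq' : 0 ≤ q') :
    ∀ i j k l : ℕ, 0 ≤ p^i * p'^j * (q^k * q'^l) := by
  intro i j k l
  positivity

set_option maxHeartbeats 2000000 in
theorem s3L {t D : ℝ} (h0 : 0.04 ≤ t) (h1 : t ≤ 0.2) (hD1 : 0 ≤ D) (hD2 : D ≤ 0.4) :
    D^2 * (1/4-(D-t)^2) ≤ 4 * (0.02254 + (0.35*t-0.0005)*D) * (1/4 - t^2) := by
  have h := bern_aux (p := D - 0) (p' := 0.4 - D) (q := t - 0.04) (q' := 0.2 - t) (by linarith) (by linarith) (by linarith) (by linarith)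
  linarith [h 0 4 0 3, h 0 4 1 2, h 0 4 2 1, h 0 4 3 0,
      h 1 3 0 3, h 1 3 1 2, h 1 3 2 1, h 1 3 3 0,
      h 2 2 0 3, h 2 2 1 2, h 2 2 2 1, h 2 2 3 0,
      h 3 1 0 3, h 3 1 1 2, h 3 1 2 1, h 3 1 3 0,
      h 4 0 0 3, h 4 0 1 2, h 4 0 2 1, h 4 0 3 0]

set_option maxHeartbeats 2000000 in
theorem s3R {t d : ℝ} (h0 : 0.04 ≤ t) (h1 : t ≤ 0.2) (hD1 : 0 ≤ d) (hD2 : d ≤ 0.4) :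
    d^2 * (1/4-(d+t)^2) ≤ 4 * (0.02254 - (0.35*t-0.0005)*d) * (1/4 - t^2) := by
  rcases le_total d 0.25 with hc | hc
  · have h := bern_aux (p := d - 0) (p' := 0.25 - d) (q := t - 0.04) (q' := 0.2 - t) (by linarith) (by linarith) (by linarith) (by linarith)
    linarith [h 0 4 0 3, h 0 4 1 2, h 0 4 2 1, h 0 4 3 0,
      h 1 3 0 3, h 1 3 1 2, h 1 3 2 1, h 1 3 3 0,
      h 2 2 0 3, h 2 2 1 2, h 2 2 2 1, h 2 2 3 0,
      h 3 1 0 3, h 3 1 1 2, h 3 1 2 1, h 3 1 3 0,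
      h 4 0 0 3, h 4 0 1 2, h 4 0 2 1, h 4 0 3 0]
  · have h := bern_aux (p := d - 0.25) (p' := 0.4 - d) (q := t - 0.04) (q' := 0.2 - t) (by linarith) (by linarith) (by linarith) (by linarith)
    linarith [h 0 4 0 3, h 0 4 1 2, h 0 4 2 1, h 0 4 3 0,
      h 1 3 0 3, h 1 3 1 2, h 1 3 2 1, h 1 3 3 0,
      h 2 2 0 3, h 2 2 1 2, h 2 2 2 1, h 2 2 3 0,
      h 3 1 0 3, h 3 1 1 2, h 3 1 2 1, h 3 1 3 0,
      h 4 0 0 3, h 4 0 1 2, h 4 0 2 1, h 4 0 3 0]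

set_option maxHeartbeats 2000000 in
theorem l1L {t d : ℝ} (h0 : 0 ≤ t) (h1 : t ≤ 0.04) (hD1 : 0.4 ≤ d) (hD2 : d ≤ 1/2+t) :
    d^2 * ((1/4-(d-t)^2) + 0.216*(1/4-t^2)) ≤ 4.096 * (0.02254 + 0.3125*t*d) * (1/4 - t^2) := by
  obtain ⟨a, rfl⟩ : ∃ a, d = 0.4 + a := ⟨d-0.4, by ring⟩
  have ha : 0 ≤ a := by linarith
  have ha2 : 0 ≤ 0.14 - a := by linarith
  have h1' := sub_nonneg.2 h1
  nlinarith [mul_nonneg ha h0, mul_nonneg ha ha2, mul_nonneg h0 h1', mul_nonneg ha h1', mul_nonneg ha2 h0, mul_nonneg ha2 h1', mul_nonneg (mul_nonneg ha h0) ha2, mul_nonneg (mul_nonneg ha h0) h1', mul_nonneg (mul_nonneg ha h0) ha, mul_nonneg (mul_nonneg ha h0) h0, mul_nonneg (mul_nonneg ha ha) ha,  mul_nonneg (mul_nonneg h0 h0) h1']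

set_option maxHeartbeats 2000000 in
theorem l1R {t d : ℝ} (h0 : 0 ≤ t) (h1 : t ≤ 0.04) (hD1 : 0.4 ≤ d) (hD2 : d + t ≤ 1/2) :
    d^2 * ((1/4-(d+t)^2) + 0.216*(1/4-t^2)) ≤ 4.096 * (0.02254 - 0.3125*t*d) * (1/4 - t^2) := by
  obtain ⟨a, rfl⟩ : ∃ a, d = 0.4 + a := ⟨d-0.4, by ring⟩
  have ha : 0 ≤ a := by linarith
  have ha2 : 0 ≤ 0.1 - a - t := by linarith
  have h1' := sub_nonneg.2 h1
  nlinarith [mul_nonneg ha h0, mul_nonneg ha ha2, mul_nonneg h0 h1', mul_nonneg ha h1', mul_nonneg ha2 h0, mul_nonneg ha2 h1', mul_nonneg (mul_nonneg ha h0) ha2, mul_nonneg (mul_nonneg ha h0) h1', mul_nonneg (mul_nonneg ha h0) ha, mul_nonneg (mul_nonneg ha h0) h0, mul_nonneg (mul_nonneg ha ha) ha,  mul_nonneg (mul_nonneg h0 h0) h1']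

set_option maxHeartbeats 2000000 in
theorem l3L {t d : ℝ} (h0 : 0.04 ≤ t) (h1 : t ≤ 0.2) (hD1 : 0.4 ≤ d) (hD2 : d ≤ 1/2+t) :
    d^2 * ((1/4-(d-t)^2) + 0.72^3*(1/4-t^2)) ≤ 1.72^3 * (0.02254 + (0.35*t-0.0005)*d) * (1/4 - t^2) := by
  rcases le_total d 0.5 with hc | hc
  · have h := bern_aux (p := d - 0.4) (p' := 0.5 - d) (q := t - 0.04) (q' := 0.2 - t) (by linarith) (by linarith) (by linarith) (by linarith)
    linarith [h 0 4 0 3, h 0 4 1 2, h 0 4 2 1, h 0 4 3 0,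
      h 1 3 0 3, h 1 3 1 2, h 1 3 2 1, h 1 3 3 0,
      h 2 2 0 3, h 2 2 1 2, h 2 2 2 1, h 2 2 3 0,
      h 3 1 0 3, h 3 1 1 2, h 3 1 2 1, h 3 1 3 0,
      h 4 0 0 3, h 4 0 1 2, h 4 0 2 1, h 4 0 3 0]
  · have h := bern_aux (p := d - 0.5) (p' := 0.7 - d) (q := t - 0.04) (q' := 0.2 - t) (by linarith) (by linarith) (by linarith) (by linarith)
    linarith [h 0 4 0 3, h 0 4 1 2, h 0 4 2 1, h 0 4 3 0,
      h 1 3 0 3, h 1 3 1 2, h 1 3 2 1, h 1 3 3 0,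
      h 2 2 0 3, h 2 2 1 2, h 2 2 2 1, h 2 2 3 0,
      h 3 1 0 3, h 3 1 1 2, h 3 1 2 1, h 3 1 3 0,
      h 4 0 0 3, h 4 0 1 2, h 4 0 2 1, h 4 0 3 0]

set_option maxHeartbeats 2000000 in
theorem l3R {t d : ℝ} (h0 : 0.04 ≤ t) (hD1 : 0.4 ≤ d) (hD2 : d + t ≤ 1/2) :
    d^2 * ((1/4-(d+t)^2) + 0.4^3*(1/4-t^2)) ≤ 1.4^3 * (0.02254 - (0.35*t-0.0005)*d) * (1/4 - t^2) := by
  obtain ⟨a, rfl⟩ : ∃ a, d = 0.4 + a := ⟨d-0.4, by ring⟩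
  obtain ⟨b, rfl⟩ : ∃ b, t = 0.04 + b := ⟨t-0.04, by ring⟩
  have ha : 0 ≤ a := by linarith
  have ha2 : 0 ≤ 0.06 - b - a := by linarith
  have h0' : 0 ≤ b := by linarith
  have h1' : 0 ≤ 0.06 - b := by linarith
  nlinarith [mul_nonneg ha h0', mul_nonneg ha ha2, mul_nonneg h0' h1', mul_nonneg ha h1', mul_nonneg ha2 h0', mul_nonneg ha2 h1', mul_nonneg (mul_nonneg ha h0') ha2, mul_nonneg (mul_nonneg ha h0') h1', mul_nonneg (mul_nonneg ha h0') ha, mul_nonneg (mul_nonneg ha h0') h0', mul_nonneg (mul_nonneg ha ha) ha,  mul_nonneg (mul_nonneg h0' h0') h1']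

theorem s2R {e w : ℝ} (h0 : 0 ≤ w) (h1 : w ≤ e) (h2 : e ≤ 0.3) :
   (e-w)^2*(1-w)^2*w ≤ 0.02254*(1-e)*(e*(1-e)+2*w*(1-w)) := by
  have a1 : (e-w)^2*(1-w)^2*w ≤ (e-w)^2*w := by
    have : (1-w)^2 ≤ 1 := by nlinarith
    have := mul_le_mul_of_nonneg_left this (mul_nonneg (sq_nonneg (e-w)) h0)
    nlinarith
  have a2 : (e-w)^2*w ≤ 0.3*(e*w - w^2) := by nlinarith [mul_nonneg h0 (sub_nonneg.2 h1)]
  have a3 : (e-w)^2*w ≤ 4/27*e^3 := by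
    nlinarith [mul_nonneg (sq_nonneg (3*w-e)) (by linarith : 0 ≤ 4*e-3*w)]
  have a4 : e^3 ≤ 0.09*e := by nlinarith [mul_nonneg (h0.trans h1) (sub_nonneg.2 h2)]
  nlinarith [mul_nonneg h0 (sub_nonneg.2 h1), mul_nonneg (h0.trans h1) (sub_nonneg.2 h2), mul_nonneg h0 (sub_nonneg.2 h2)]

theorem s2La {y d : ℝ} (h0 : 0.7 ≤ y) (h1 : y ≤ 0.91) (hd : 0 ≤ d) (hd2 : d ≤ 0.4) :
   d^2*(y-d) ≤ 4*0.02254*y := by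
  nlinarith [mul_nonneg hd (sub_nonneg.2 hd2), mul_nonneg (mul_nonneg hd (sub_nonneg.2 hd2)) (sub_nonneg.2 h1), mul_nonneg (mul_nonneg hd (sub_nonneg.2 hd2)) hd]

theorem s2Lb {x e d : ℝ} (h0 : 0 ≤ e) (h1 : e ≤ 0.09) (hd : 0 ≤ d) (hd2 : d ≤ 0.4) (hx : 0 ≤ x) (hxd : x + d + e = 1) :
   d^2*e*x ≤ 0.02254*(x*(1-x)+e*(1-e)) := by
  obtain rfl : x = 1 - d - e := by linarith
  have : d^2 ≤ 0.4*d := by nlinarith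
  have h2 := mul_le_mul_of_nonneg_left this (mul_nonneg h0 hx)
  nlinarith [mul_nonneg hd (sub_nonneg.2 hd2), mul_nonneg h0 (sub_nonneg.2 h1), mul_nonneg hd h0, mul_nonneg (mul_nonneg hd h0) (sub_nonneg.2 hd2), mul_nonneg (mul_nonneg hd h0) (sub_nonneg.2 h1), mul_nonneg h0 (sub_nonneg.2 hd2), mul_nonneg hd (sub_nonneg.2 h1), mul_nonneg (sub_nonneg.2 hd2) (sub_nonneg.2 h1)]

def gg (y v : ℝ) : ℝ :=
  if |y - v| ≤ 0.4 then (y - v)^2 * (v*(1-v) / (v*(1-v) + y*(1-y)))^2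
  else (y - v)^2 * (Real.sqrt (v*(1-v)) / (Real.sqrt (v*(1-v)) + Real.sqrt (y*(1-y))))^2

theorem gg_symm (y v : ℝ) : gg (1-y) (1-v) = gg y v := by
  unfold gg
  have e1 : |1 - y - (1 - v)| = |y - v| := by
    rw [abs_sub_comm]; congr 1; ring
  rw [e1]
  have e2 : (1-v)*(1-(1-v)) = v*(1-v) := by ring
  have e3 : (1-y)*(1-(1-y)) = y*(1-y) := by ring
  have e4 : (1 - y - (1-v))^2 = (y-v)^2 := by ring
  rw [e2, e3, e4]

theorem fpre_gg {y v : ℝ} (hy0 : 0 < y) (hy1 : y < 1) (hv0 : 0 ≤ v) (hv1 : v ≤ 1) :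
    (fpre y v - v)^2 = gg y v := by
  have hy : 0 < y*(1-y) := mul_pos hy0 (by linarith)
  unfold fpre gg
  rw [if_neg (by rintro (⟨h, _⟩ | ⟨h, _⟩) <;> linarith)]
  rcases hv0.eq_or_lt with rfl | hv0
  · simp
  rcases hv1.eq_or_lt with rfl | hv1
  · rw [if_neg (by rintro (h | h) <;> linarith)]
    simp
  rw [if_neg (by rintro (h | h) <;> linarith), if_neg (by rintro (h | h) <;> linarith)]
  have hv : 0 < v*(1-v) := mul_pos hv0 (by linarith)
  have key : ∀ a b : ℝ, 0 < a → 0 < b →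
      (1/b * y + 1/a * v)/(1/b+1/a) - v = (y - v) * (a/(a+b)) := by
    intro a b ha hb
    have : a + b ≠ 0 := by positivity
    have : b + a ≠ 0 := by positivity
    field_simp
    ring
  split_ifs with h
  · unfold phi
    rw [key _ _ hv hy, mul_pow]
  · unfold phi
    rw [Real.sqrt_div zero_le_one, Real.sqrt_div zero_le_one, Real.sqrt_one,
      key _ _ (Real.sqrt_pos.2 hv) (Real.sqrt_pos.2 hy), mul_pow]

theorem short_le {y v : ℝ} (hy : 0 < y*(1-y)) (hv : 0 ≤ v*(1-v)) {B : ℝ}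
    (h : (y-v)^2 * (v*(1-v)) ≤ 4 * B * (y*(1-y))) :
    (y - v)^2 * (v*(1-v) / (v*(1-v) + y*(1-y)))^2 ≤ B := by
  refine (mul_le_mul_of_nonneg_left (aux_short_gen hv hy) (sq_nonneg _)).trans ?_
  rw [← mul_div_assoc, div_le_iff₀ (by positivity)]
  linarith

theorem long_le {y v : ℝ} (hy : 0 < y*(1-y)) (hv : 0 ≤ v*(1-v)) {B : ℝ} (r : ℝ) (hr : 0 < r)
    (h : (y-v)^2 * (v*(1-v) + r^3 * (y*(1-y))) ≤ (1+r)^3 * B * (y*(1-y))) :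
    (y - v)^2 * (Real.sqrt (v*(1-v)) / (Real.sqrt (v*(1-v)) + Real.sqrt (y*(1-y))))^2 ≤ B := by
  refine (mul_le_mul_of_nonneg_left
    (aux_long_gen (Real.sqrt_nonneg _) (Real.sqrt_pos.2 hy) hr) (sq_nonneg _)).trans ?_
  rw [Real.sq_sqrt hv, Real.sq_sqrt hy.le, ← mul_div_assoc, div_le_iff₀ (by positivity),
    div_add' _ _ _ hy.ne', ← mul_div_assoc, div_le_iff₀ hy]
  linarith

theorem golden {u K : ℝ} (hK : K = (5 * Real.sqrt 5 - 11) / 2) (hu : 0 ≤ u) :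
    u^2*(1-u) ≤ K*(1+u) := by
  have h5 : Real.sqrt 5 ^ 2 = 5 := Real.sq_sqrt (by norm_num)
  have h2 : 2 ≤ Real.sqrt 5 := by
    rw [Real.le_sqrt (by norm_num) (by norm_num)]; norm_num
  set s := Real.sqrt 5
  have h3 : s^3 = 5*s := by rw [pow_succ, h5]
  have : 0 ≤ (u - (s-1)/2)^2 * (u + (s-2)) := mul_nonneg (sq_nonneg _) (by linarith)
  subst hK
  nlinarith [this]

theorem long2 {x y K : ℝ} (hK : K = (5 * Real.sqrt 5 - 11) / 2)
    (hx : 0 ≤ x) (hxy : x ≤ y) (hy : y < 1) :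
    (y-x)^4 * ((1-y)*x) ≤ K^2 * ((1-x)*y) := by
  set u := y - x with hu
  have hu0 : 0 ≤ u := by linarith
  have hg := golden hK hu0
  have hp : (1-y)*x ≤ (1-u)^2/4 := by
    have : 1 - u = (1-y) + x := by rw [hu]; ring
    rw [this]; nlinarith [sq_nonneg ((1-y)-x)]
  have hp0 : 0 ≤ (1-y)*x := mul_nonneg (by linarith) hx
  have e : (1-x)*y = u + (1-y)*x := by rw [hu]; ring
  rw [e]
  set p := (1-y)*x
  have hu1 : u ≤ 1 := by linarith
  have hg2 : (u^2*(1-u))^2 ≤ (K*(1+u))^2 :=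
    pow_le_pow_left₀ (mul_nonneg (sq_nonneg _) (by linarith)) hg 2
  rcases le_total (u^4) (K^2) with h | h
  · nlinarith [mul_nonneg (sub_nonneg.2 h) hp0, mul_nonneg (sq_nonneg K) hu0]
  · nlinarith [mul_nonneg (sub_nonneg.2 h) (sub_nonneg.2 hp)]

theorem main_half {y C : ℝ} (hC : C = (5 * Real.sqrt 5 - 11) / 8) (hy0 : 1/2 ≤ y) (hy1 : y < 1) :
    ∃ l : ℝ, ∀ v, 0 ≤ v → v ≤ 1 → gg y v ≤ C + l * (y - v) := by
  have hCl : 0.02254 ≤ C := by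
    have : 2.236064 ≤ Real.sqrt 5 := by
      rw [Real.le_sqrt (by norm_num) (by norm_num)]; norm_num
    linarith
  have hyp : 0 < y*(1-y) := mul_pos (by linarith) (by linarith)
  have ey : 1/4 - (y-1/2)^2 = y*(1-y) := by ring
  rcases le_or_gt y 0.54 with hr | hr
  · refine ⟨0.3125*(y-1/2), fun v hv0 hv1 => ?_⟩
    refine le_trans ?_ (add_le_add_left hCl _)
    have hv : 0 ≤ v*(1-v) := mul_nonneg hv0 (by linarith)
    have ev : 1/4 - ((y-v)-(y-1/2))^2 = v*(1-v) := by ring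
    have ev' : 1/4 - ((v-y)+(y-1/2))^2 = v*(1-v) := by ring
    unfold gg
    split_ifs with h
    · rw [abs_le] at h
      apply short_le hyp hv
      have := s1 (t := y-1/2) (D := y-v) (by linarith) (by linarith) h.1 h.2
      rw [ey, ev] at this
      exact this
    · apply long_le hyp hv 0.6 (by norm_num)
      rw [not_le, lt_abs] at h
      rcases h with h | h
      · have := l1L (t := y-1/2) (d := y-v) (by linarith) (by linarith) h.le (by linarith)
        rw [ey, ev] at this
        linarith
      · have := l1R (t := y-1/2) (d := v-y) (by linarith) (by linarith) (by linarith) (by linarith)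
        rw [ey, ev'] at this
        linarith
  rcases le_or_gt y 0.7 with hr2 | hr2
  · refine ⟨0.35*(y-1/2)-0.0005, fun v hv0 hv1 => ?_⟩
    refine le_trans ?_ (add_le_add_left hCl _)
    have hv : 0 ≤ v*(1-v) := mul_nonneg hv0 (by linarith)
    have ev : 1/4 - ((y-v)-(y-1/2))^2 = v*(1-v) := by ring
    have ev' : 1/4 - ((v-y)+(y-1/2))^2 = v*(1-v) := by ring
    unfold gg
    split_ifs with h
    · rw [abs_le] at h
      apply short_le hyp hv
      rcases le_total v y with hvy | hvy
      · have := s3L (t := y-1/2) (D := y-v) (by linarith) (by linarith) (by linarith) h.2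
        rw [ey, ev] at this
        exact this
      · have := s3R (t := y-1/2) (d := v-y) (by linarith) (by linarith) (by linarith) (by linarith)
        rw [ey, ev'] at this
        linarith
    · rw [not_le, lt_abs] at h
      rcases h with h | h
      · apply long_le hyp hv 0.72 (by norm_num)
        have := l3L (t := y-1/2) (d := y-v) (by linarith) (by linarith) h.le (by linarith)
        rw [ey, ev] at this
        linarith
      · apply long_le hyp hv 0.4 (by norm_num)
        have := l3R (t := y-1/2) (d := v-y) (by linarith) (by linarith) (by linarith)
        rw [ey, ev'] at this
        linarith
  refine ⟨C/(1-y), fun v hv0 hv1 => ?_⟩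
  have hv : 0 ≤ v*(1-v) := mul_nonneg hv0 (by linarith)
  have he : 0 < 1 - y := by linarith
  have eC : C + C/(1-y)*(y-v) = C*(1-v)/(1-y) := by
    field_simp; ring
  rw [eC]
  have hC0 : 0 < C := by linarith
  unfold gg
  split_ifs with h
  · rw [abs_le] at h
    rcases le_total v y with hvy | hvy
    · rcases le_total y 0.91 with hr3 | hr3
      · apply short_le hyp hv
        have h1 := s2La (d := y - v) hr2.le hr3 (by linarith) h.2
        have h2 : 4*0.02254*y ≤ 4*C*y := by nlinarith
        have h3 : (y-v)^2*(y-(y-v)) ≤ 4*C*y := h1.trans h2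
        have e : 4 * (C*(1-v)/(1-y)) * (y*(1-y)) = (4*C*y)*(1-v) := by field_simp
        rw [e]
        have := mul_le_mul_of_nonneg_right h3 (sub_nonneg.2 hv1)
        linarith
      · have h1 := s2Lb (x := v) (e := 1-y) (d := y-v) he.le (by linarith) (by linarith) h.2 hv0 (by ring)
        have hS : 0 < v*(1-v)+y*(1-y) := by linarith
        have h2 : (y-v)^2*(1-y)*v ≤ C*(v*(1-v)+y*(1-y)) := by
          have := mul_le_mul_of_nonneg_right hCl hS.le
          linarith
        have h3 : (v*(1-v)/(v*(1-v)+y*(1-y)))^2 ≤ v*(1-v)/(v*(1-v)+y*(1-y)) := by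
          have a1 : v*(1-v)/(v*(1-v)+y*(1-y)) ≤ 1 := by
            rw [div_le_one hS]; linarith
          have a2 : 0 ≤ v*(1-v)/(v*(1-v)+y*(1-y)) := by positivity
          nlinarith
        refine (mul_le_mul_of_nonneg_left h3 (sq_nonneg _)).trans ?_
        rw [← mul_div_assoc, div_le_div_iff₀ hS he]
        have := mul_le_mul_of_nonneg_right h2 (sub_nonneg.2 hv1)
        linarith
    · have h1 := s2R (e := 1-y) (w := 1-v) (by linarith) (by linarith) (by linarith)
      have hS : 0 < v*(1-v)+y*(1-y) := by linarith
      rw [div_pow, ← mul_div_assoc, div_le_div_iff₀ (by positivity) he]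
      have hw : 0 ≤ 1 - v := by linarith
      have h2 : (v-y)^2*v^2*(1-v) ≤ C*(y*(y*(1-y)+2*(v*(1-v)))) := by
        have b : 0 ≤ y*(y*(1-y)+2*(v*(1-v))) := by
          apply mul_nonneg <;> linarith
        have := mul_le_mul_of_nonneg_right hCl b
        linarith
      have h3 := mul_le_mul_of_nonneg_right h2 (mul_nonneg hw he.le)
      have h4 : 0 ≤ C*(1-v)*(v*(1-v))^2 := by positivity
      linarith
  · rw [not_le, lt_abs] at h
    rcases h with h | h
    · have hA0 := Real.sqrt_nonneg (v*(1-v))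
      have hB0 := Real.sqrt_pos.2 hyp
      have hA := Real.sq_sqrt hv
      have hB := Real.sq_sqrt hyp.le
      set a := Real.sqrt (v*(1-v))
      set b := Real.sqrt (y*(1-y))
      have hl := long2 (x := v) (y := y) (K := 4*C) (by rw [hC]; ring) hv0 (by linarith) hy1
      have hw : 0 ≤ 1 - v := by linarith
      have hk : (y-v)^2*(1-y)*a ≤ 4*C*(1-v)*b := by
        have hb' : 0 ≤ 4*C*(1-v)*b := by positivity
        refine (pow_le_pow_iff_left₀ (by positivity) hb' two_ne_zero).1 ?_
        · have e1 : ((y-v)^2*(1-y)*a)^2 = (y-v)^4*((1-y)*v)*((1-y)*(1-v)) := by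
            rw [mul_pow, hA]; ring
          have e2 : (4*C*(1-v)*b)^2 = (4*C)^2*((1-v)*y)*((1-y)*(1-v)) := by
            rw [mul_pow, hB]; ring
          rw [e1, e2]
          exact mul_le_mul_of_nonneg_right hl (mul_nonneg he.le hw)
      rw [div_pow, ← mul_div_assoc, div_le_div_iff₀ (by positivity) he]
      have h1 := mul_le_mul_of_nonneg_right hk hA0
      have h2 : 0 ≤ C*(1-v)*(a-b)^2 := by positivity
      linarith
    · linarith

theorem main_all {y C : ℝ} (hC : C = (5 * Real.sqrt 5 - 11) / 8) (hy0 : 0 < y) (hy1 : y < 1) :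
    ∃ l : ℝ, ∀ v, 0 ≤ v → v ≤ 1 → gg y v ≤ C + l * (y - v) := by
  rcases le_total (1/2) y with h | h
  · exact main_half hC h hy1
  · obtain ⟨l, hl⟩ := main_half (y := 1 - y) hC (by linarith) (by linarith)
    refine ⟨-l, fun v h0 h1 => ?_⟩
    have := hl (1-v) (by linarith) (by linarith)
    rw [gg_symm] at this
    linarith

/-- the relative loss of the precision scheme on every extreme Blackwell-ordered
martingale `M_{x,y,z}` is at most `(5√5 - 11)/8`. -/
theorem stmt_4 (x y z : ℝ) (h0 : 0 ≤ x) (hxy : x ≤ y) (hyz : y ≤ z) (h1 : z ≤ 1)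
    (hxz : x < z) :
    ((z - y)/(z - x)) * (fpre y x - x)^2 + ((y - x)/(z - x)) * (fpre y z - z)^2
      ≤ (5 * Real.sqrt 5 - 11) / 8 := by
  have hpos : 0 ≤ (5 * Real.sqrt 5 - 11) / 8 := by
    have : 2.2 ≤ Real.sqrt 5 := by
      rw [Real.le_sqrt (by norm_num) (by norm_num)]; norm_num
    linarith
  rcases (h0.trans hxy).eq_or_lt with hy | hy
  · have hx : x = 0 := by linarith
    subst hx
    subst hy
    simpa [fpre] using hpos
  rcases (hyz.trans h1).eq_or_lt with hy1 | hy1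
  · have hz : z = 1 := by linarith
    subst hz
    subst hy1
    simpa [fpre] using hpos
  obtain ⟨l, hl⟩ := main_all rfl hy hy1
  have hx := hl x h0 (by linarith)
  have hz := hl z (by linarith) h1
  rw [fpre_gg hy hy1 h0 (by linarith), fpre_gg hy hy1 (by linarith) h1]
  set C := (5 * Real.sqrt 5 - 11) / 8
  have hd : 0 < z - x := by linarith
  rw [div_mul_eq_mul_div, div_mul_eq_mul_div, ← add_div, div_le_iff₀ hd]
  have a1 := mul_le_mul_of_nonneg_left hx (sub_nonneg.2 hyz)
  have a2 := mul_le_mul_of_nonneg_left hz (sub_nonneg.2 hxy)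
  linarith
end
end

section
/- Define g(μ, x₁, x₂) = x₁x₂(1−μ) / (x₁x₂(1−μ) + (1−x₁)(1−x₂)μ) and the average-prior scheme f_avg(x₁,x₂) = g((x₁+x₂)/2, x₁, x₂). For all real numbers μ, y₁, z₁, y₂, z₂ with 0 < μ < 1 and 0 ≤ y_i ≤ μ ≤ z_i ≤ 1 and y_i < z_i for i = 1, 2, the quantity Σ_{v₁ ∈ {y₁,z₁}} Σ_{v₂ ∈ {y₂,z₂}} p₁(v₁)·p₂(v₂)·( (1−v₁)(1−v₂)/(1−μ) + v₁v₂/μ )·( g(μ, v₁, v₂) − f_avg(v₁, v₂) )² is at most 0.026, where p_i(y_i) = (z_i − μ)/(z_i − y_i) and p_i(z_i) = (μ − y_i)/(z_i − y_i), and any summand whose factor ((1−v₁)(1−v₂)/(1−μ) + v₁v₂/μ)·p₁(v₁)·p₂(v₂) is zero is taken to be zero. -/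
noncomputable section

/-- Bayesian pooling formula for two conditionally independent experts with prior `μ`. -/
def gB (μ x₁ x₂ : ℝ) : ℝ :=
  x₁ * x₂ * (1 - μ) / (x₁ * x₂ * (1 - μ) + (1 - x₁) * (1 - x₂) * μ)

/-- The average-prior aggregation scheme `f_avg(x₁,x₂) = g((x₁+x₂)/2, x₁, x₂)`
(with the natural value `1` at the singular point `(1,1)`). -/
def favg (x₁ x₂ : ℝ) : ℝ :=
  if x₁ = 1 ∧ x₂ = 1 then 1 else gB ((x₁ + x₂)/2) x₁ x₂

section Core
variable {C : Type} {D : Type}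

def evG (e : C → ℝ) : List C → ℝ → ℝ
  | [], _ => 0
  | c :: cs, t => e c + t * evG e cs t

def affG (lin : ℕ → C → ℕ → C → C) (sm : ℕ → C → C) (a w : ℕ) (p : C) (l : List C) : List C :=
  List.rec (motive := fun _ => C → List C) (fun p => [sm w p])
    (fun r _ ih p => lin w p a r :: ih r) l p

def headG (lin : ℕ → C → ℕ → C → C) (sm : ℕ → C → C) (a w : ℕ) (c : C) (l : List C) : List C :=
  List.rec (motive := fun _ => List C) [c]
    (fun r rs _ => lin 1 c a r :: affG lin sm a w r rs) l

def compG (lin : ℕ → C → ℕ → C → C) (sm : ℕ → C → C) (a w : ℕ) (l : List C) : List C :=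
  List.rec (motive := fun _ => List C) [] (fun c _ ih => headG lin sm a w c ih) l

def goG (add : C → C → C) (c : C) (p : C) (l : List C) : List C :=
  List.rec (motive := fun _ => C → List C) (fun p => [add p c])
    (fun b _ ih p => add p b :: ih b) l p

def pushG (add : C → C → C) (c : C) (l : List C) : List C :=
  List.rec (motive := fun _ => List C) [c] (fun b bs _ => b :: goG add c b bs) l

def bernG (add : C → C → C) (acc l : List C) : List C :=
  List.rec (motive := fun _ => List C → List C) (fun acc => acc)
    (fun c _ ih acc => ih (pushG add c acc)) l acc

def all2 (rel : C → D → Bool) (l : List C) (m : List D) : Bool :=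
  List.rec (motive := fun _ => List D → Bool)
    (fun m => List.rec (motive := fun _ => Bool) true (fun _ _ _ => false) m)
    (fun a _ ih m => List.rec (motive := fun _ => Bool) false
      (fun b bs _ => Bool.rec (motive := fun _ => Bool) false (ih bs) (rel a b)) m) l m

def laddG (add : C → C → C) (l m : List C) : List C :=
  List.rec (motive := fun _ => List C → List C) (fun m => m)
    (fun a as ih m => List.rec (motive := fun _ => List C) (a :: as)
      (fun b bs _ => add a b :: ih bs) m) l m

def mapG (f : C → C) (l : List C) : List C :=
  List.rec (motive := fun _ => List C) [] (fun a _ ih => f a :: ih) l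

def linG (lin : ℕ → C → ℕ → C → C) (sm : ℕ → C → C) (u : ℕ) (l : List C) (v : ℕ) (m : List C) :
    List C :=
  List.rec (motive := fun _ => List C → List C) (fun m => mapG (sm v) m)
    (fun a as ih m => List.rec (motive := fun _ => List C) (mapG (sm u) (a :: as))
      (fun b bs _ => lin u a v b :: ih bs) m) l m

section
variable (add : C → C → C) (lin : ℕ → C → ℕ → C → C) (sm : ℕ → C → C) (a w : ℕ)
  (rel : C → D → Bool)
theorem affG_nil (p : C) : affG lin sm a w p [] = [sm w p] := rfl
theorem affG_cons (p r : C) (rs) : affG lin sm a w p (r :: rs)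
  = lin w p a r :: affG lin sm a w r rs := rfl
theorem headG_nil (c : C) : headG lin sm a w c [] = [c] := rfl
theorem headG_cons (c r : C) (rs) : headG lin sm a w c (r :: rs)
  = lin 1 c a r :: affG lin sm a w r rs := rfl
theorem compG_nil : compG lin sm a w [] = [] := rfl
theorem compG_cons (c : C) (cs) : compG lin sm a w (c :: cs)
  = headG lin sm a w c (compG lin sm a w cs) := rfl
theorem goG_nil (c p : C) : goG add c p [] = [add p c] := rfl
theorem goG_cons (c p b : C) (bs) : goG add c p (b :: bs) = add p b :: goG add c b bs := rfl
theorem pushG_nil (c : C) : pushG add c [] = [c] := rfl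
theorem pushG_cons (c b : C) (bs) : pushG add c (b :: bs) = b :: goG add c b bs := rfl
theorem bernG_nil (acc : List C) : bernG add acc [] = acc := rfl
theorem bernG_cons (acc : List C) (c cs) :
  bernG add acc (c :: cs) = bernG add (pushG add c acc) cs := rfl
theorem all2_nc (b : D) (bs) : all2 rel [] (b :: bs) = false := rfl
theorem all2_cn (b : C) (bs) : all2 rel (b :: bs) [] = false := rfl
theorem all2_cc (a : C) (b : D) (as bs) : all2 rel (a :: as) (b :: bs)
    = (rel a b && all2 rel as bs) := by
  have : all2 rel (a :: as) (b :: bs)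
    = Bool.rec (motive := fun _ => Bool) false (all2 rel as bs) (rel a b) := rfl
  rw [this]; cases rel a b <;> rfl
theorem laddG_nil (m : List C) : laddG add [] m = m := rfl
theorem laddG_cn (a : C) (as) : laddG add (a :: as) [] = a :: as := rfl
theorem laddG_cc (a b : C) (as bs) : laddG add (a :: as) (b :: bs)
  = add a b :: laddG add as bs := rfl
theorem mapG_nil (f : C → C) : mapG f [] = [] := rfl
theorem mapG_cons (f : C → C) (a as) : mapG f (a :: as) = f a :: mapG f as := rfl
theorem linG_nil (u v : ℕ) (m : List C) : linG lin sm u [] v m = mapG (sm v) m := rfl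
theorem linG_cn (u v : ℕ) (a : C) (as) : linG lin sm u (a :: as) v [] = mapG (sm u) (a :: as) := rfl
theorem linG_cc (u v : ℕ) (a b : C) (as bs) : linG lin sm u (a :: as) v (b :: bs)
  = lin u a v b :: linG lin sm u as v bs := rfl
end

def bcG (add : C → C → C) (lin : ℕ → C → ℕ → C → C) (sm : ℕ → C → C) (a w : ℕ) (p : List C) :
    List C := bernG add [] (compG lin sm a w p)

def hvG (e : C → ℝ) : List C → ℝ → ℝ → ℝ
  | [], _, _ => 0
  | b :: bs, X, Y => e b * Y ^ bs.length + X * hvG e bs X Y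

variable {add : C → C → C} {lin : ℕ → C → ℕ → C → C} {sm : ℕ → C → C} {e : C → ℝ} {f : D → ℝ}

theorem evG_aff (hlin : ∀ u x v y, e (lin u x v y) = u * e x + v * e y)
    (hsm : ∀ k x, e (sm k x) = k * e x)
    (a w : ℕ) (t : ℝ) (l : List C) : ∀ p, evG e (affG lin sm a w p l) t
      = w * e p + (a + w * t) * evG e l t := by
  induction l with
  | nil => intro p; simp [affG_nil, evG, hsm]
  | cons r rs ih => intro p; simp only [affG_cons, evG, hlin, ih]; ring

theorem evG_head (hlin : ∀ u x v y, e (lin u x v y) = u * e x + v * e y)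
    (hsm : ∀ k x, e (sm k x) = k * e x)
    (a w : ℕ) (t : ℝ) (c : C) (l : List C) : evG e (headG lin sm a w c l) t
      = e c + (a + w * t) * evG e l t := by
  cases l with
  | nil => simp [headG_nil, evG]
  | cons r rs => simp only [headG_cons, evG, hlin, evG_aff hlin hsm]; push_cast; ring

theorem evG_comp (hlin : ∀ u x v y, e (lin u x v y) = u * e x + v * e y)
    (hsm : ∀ k x, e (sm k x) = k * e x)
    (a w : ℕ) (t : ℝ) (l : List C) : evG e (compG lin sm a w l) t = evG e l (a + w * t) := by
  induction l with
  | nil => simp [compG_nil, evG]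
  | cons c cs ih => simp only [compG_cons, evG_head hlin hsm, ih, evG]

theorem len_go (c : C) (l : List C) : ∀ p, (goG add c p l).length = l.length + 1 := by
  induction l with
  | nil => intro p; simp [goG_nil]
  | cons b bs ih => intro p; simp [goG_cons, ih]

theorem hv_go (hadd : ∀ x y, e (add x y) = e x + e y) (X Y : ℝ) (c : C) (l : List C) :
    ∀ p, hvG e (goG add c p l) X Y
      = e p * Y ^ l.length + (X + Y) * hvG e l X Y + e c * X ^ l.length := by
  induction l with
  | nil => intro p; simp [goG_nil, hvG, hadd]
  | cons b bs ih =>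
    intro p; simp only [goG_cons, hvG, hadd, ih, len_go, List.length_cons, pow_succ]; ring

theorem hv_push (hadd : ∀ x y, e (add x y) = e x + e y) (X Y : ℝ) (c : C) (l : List C) :
    hvG e (pushG add c l) X Y = (X + Y) * hvG e l X Y + e c * X ^ l.length := by
  cases l with
  | nil => simp [pushG_nil, hvG]
  | cons b bs => simp only [pushG_cons, hvG, hv_go hadd, len_go, List.length_cons, pow_succ]; ring

theorem len_push (c : C) (l : List C) : (pushG add c l).length = l.length + 1 := by
  cases l with
  | nil => simp [pushG_nil]
  | cons b bs => simp [pushG_cons, len_go]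

theorem hv_bern (hadd : ∀ x y, e (add x y) = e x + e y) (X Y : ℝ) (hXY : X + Y = 1) (l : List C) :
    ∀ acc, hvG e (bernG add acc l) X Y = hvG e acc X Y + X ^ acc.length * evG e l X := by
  induction l with
  | nil => intro acc; simp [bernG_nil, evG]
  | cons c cs ih =>
    intro acc
    simp only [bernG_cons, ih, hv_push hadd, len_push, evG, hXY, pow_succ]; ring

theorem hv_le {rel : C → D → Bool} (hrel : ∀ x y, rel x y = true → f y ≤ e x) (X Y : ℝ)
    (hX : 0 ≤ X) (hY : 0 ≤ Y) (l : List C) : ∀ m : List D, all2 rel l m = true →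
      l.length = m.length ∧ hvG f m X Y ≤ hvG e l X Y := by
  induction l with
  | nil => intro m h; cases m with
    | nil => simp [hvG]
    | cons _ _ => simp [all2_nc] at h
  | cons b bs ih => intro m h; cases m with
    | nil => simp [all2_cn] at h
    | cons d ds =>
      simp only [all2_cc, Bool.and_eq_true] at h
      obtain ⟨h1, h2⟩ := ih ds h.2
      refine ⟨by simp [h1], ?_⟩
      simp only [hvG, h1]
      have := hrel _ _ h.1
      gcongr

theorem bc_ev (hadd : ∀ x y, e (add x y) = e x + e y)
    (hlin : ∀ u x v y, e (lin u x v y) = u * e x + v * e y)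
    (hsm : ∀ k x, e (sm k x) = k * e x) (a w : ℕ) (l : List C) (X : ℝ) :
    hvG e (bcG add lin sm a w l) X (1 - X) = evG e l (a + w * X) := by
  rw [bcG, hv_bern hadd X (1 - X) (by ring), evG_comp hlin hsm]
  simp [hvG]

theorem ladd_ev (hadd : ∀ x y, e (add x y) = e x + e y) (t : ℝ) (l : List C) :
    ∀ m, evG e (laddG add l m) t = evG e l t + evG e m t := by
  induction l with
  | nil => intro m; simp [laddG_nil, evG]
  | cons a as ih => intro m; cases m with
    | nil => simp [laddG_cn, evG]
    | cons b bs => simp only [laddG_cc, evG, hadd, ih]; ring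

theorem lsm_ev (hsm : ∀ k x, e (sm k x) = k * e x) (k : ℕ) (t : ℝ) (l : List C) :
    evG e (mapG (sm k) l) t = k * evG e l t := by
  induction l with
  | nil => simp [evG, mapG_nil]
  | cons a as ih => simp only [mapG_cons, evG, hsm, ih]; ring

theorem llin_ev (hlin : ∀ u x v y, e (lin u x v y) = u * e x + v * e y)
    (hsm : ∀ k x, e (sm k x) = k * e x) (t : ℝ) (u v : ℕ) (l : List C) :
    ∀ m, evG e (linG lin sm u l v m) t = u * evG e l t + v * evG e m t := by
  induction l with
  | nil => intro m; simp [linG_nil, evG, lsm_ev hsm]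
  | cons a as ih => intro m; cases m with
    | nil => rw [linG_cn, lsm_ev hsm]; simp [evG]
    | cons b bs => simp only [linG_cc, evG, hlin, ih]; ring

end Core

def lin0 (u x v y : ℕ) : ℕ := Nat.add (Nat.mul u x) (Nat.mul v y)
def ad1 : List ℕ → List ℕ → List ℕ := laddG Nat.add
def sm1 (k : ℕ) : List ℕ → List ℕ := mapG (Nat.mul k)
def lin1 : ℕ → List ℕ → ℕ → List ℕ → List ℕ := linG lin0 Nat.mul
def ad2 : List (List ℕ) → List (List ℕ) → List (List ℕ) := laddG ad1
def sm2 (k : ℕ) : List (List ℕ) → List (List ℕ) := mapG (sm1 k)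
def lin2 : ℕ → List (List ℕ) → ℕ → List (List ℕ) → List (List ℕ) := linG lin1 sm1

/-- `H * g0(m) * g1(x) * g2(y)` is subtracted from `p`. -/
structure PolB where
  p : List (List (List ℕ))
  H : ℕ
  g0 : List ℕ
  g1 : List ℕ
  g2 : List ℕ

def bc0 (a w : ℕ) (g : List ℕ) : List ℕ := bcG Nat.add lin0 Nat.mul a w g

/-- generic one-axis check, with multiplier `s`. -/
def lay {C : Type} (rel : ℕ → C → Bool) (s : ℕ) (l : List C) (g : List ℕ) : Bool :=
  all2 (fun b β => rel (Nat.mul s β) b) l g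

def chk1 (a w : ℕ) (g : List ℕ) (s : ℕ) (p : List ℕ) : Bool :=
  lay Nat.ble s (bc0 a w p) g
def chk2 (a w : ℕ) (g : List ℕ) (a' w' : ℕ) (g' : List ℕ) (s : ℕ) (p : List (List ℕ)) : Bool :=
  lay (chk1 a' w' g') s (bcG ad1 lin1 sm1 a w p) g
def chk3 (a w a' w' a'' w'' : ℕ) (P : PolB) : Bool :=
  lay (chk2 a' w' (bc0 a' w' P.g1) a'' w'' (bc0 a'' w'' P.g2)) P.H
    (bcG ad2 lin2 sm2 a w P.p) (bc0 a w P.g0)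

def ev1 (y : ℝ) (l : List ℕ) : ℝ := evG (fun c : ℕ => (c : ℝ)) l y
def ev2 (x y : ℝ) (l : List (List ℕ)) : ℝ := evG (ev1 y) l x
def ev3 (m x y : ℝ) (l : List (List (List ℕ))) : ℝ := evG (ev2 x y) l m
def PolB.ev (P : PolB) (m x y : ℝ) : ℝ :=
  ev3 m x y P.p - P.H * (ev1 m P.g0 * (ev1 x P.g1 * ev1 y P.g2))

theorem ad1_ev (y : ℝ) (a b : List ℕ) : ev1 y (ad1 a b) = ev1 y a + ev1 y b :=
  ladd_ev (e := fun c : ℕ => (c : ℝ)) (by intro x y; exact Nat.cast_add x y) y a b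
theorem sm1_ev (y : ℝ) (k : ℕ) (a : List ℕ) : ev1 y (sm1 k a) = k * ev1 y a :=
  lsm_ev (e := fun c : ℕ => (c : ℝ)) (by intro x y; exact Nat.cast_mul x y) k y a
theorem lin0_ev (u x v y : ℕ) : ((lin0 u x v y : ℕ) : ℝ) = u * (x : ℝ) + v * (y : ℝ) := by
  change ((u * x + v * y : ℕ) : ℝ) = _
  push_cast; ring
theorem lin1_ev (y : ℝ) (u : ℕ) (a : List ℕ) (v : ℕ) (b : List ℕ) :
    ev1 y (lin1 u a v b) = u * ev1 y a + v * ev1 y b :=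
  llin_ev (e := fun c : ℕ => (c : ℝ)) lin0_ev (by intro x y; exact Nat.cast_mul x y) y u v a b
theorem ad2_ev (x y : ℝ) (a b : List (List ℕ)) : ev2 x y (ad2 a b) = ev2 x y a + ev2 x y b :=
  ladd_ev (ad1_ev y) x a b
theorem sm2_ev (x y : ℝ) (k : ℕ) (a : List (List ℕ)) : ev2 x y (sm2 k a) = k * ev2 x y a :=
  lsm_ev (sm1_ev y) k x a
theorem lin2_ev (x y : ℝ) (u : ℕ) (a : List (List ℕ)) (v : ℕ) (b : List (List ℕ)) :
    ev2 x y (lin2 u a v b) = u * ev2 x y a + v * ev2 x y b :=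
  llin_ev (lin1_ev y) (sm1_ev y) x u v a b

theorem evG_mulc (k : ℝ) (g : List ℕ) (t : ℝ) :
    evG (fun c : ℕ => k * (c : ℝ)) g t = k * ev1 t g := by
  induction g with
  | nil => simp [evG, ev1]
  | cons c cs ih => simp only [evG, ev1] at ih ⊢; rw [ih]; ring

theorem lay_sound {C : Type} {e : C → ℝ} {add : C → C → C} {lin : ℕ → C → ℕ → C → C}
    {sm : ℕ → C → C} {rel : ℕ → C → Bool} (hadd : ∀ x y, e (add x y) = e x + e y)
    (hlin : ∀ u x v y, e (lin u x v y) = u * e x + v * e y)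
    (hsm : ∀ k x, e (sm k x) = k * e x) (G : ℝ)
    (hrel : ∀ s x, rel s x = true → s * G ≤ e x) (a w : ℕ) (s : ℕ) (p : List C) (g : List ℕ)
    (h : lay rel s (bcG add lin sm a w p) (bc0 a w g) = true)
    (t : ℝ) (h0 : (a : ℝ) ≤ t) (h1 : t ≤ a + w) :
    s * (ev1 t g * G) ≤ evG e p t := by
  obtain ⟨X, hX0, hX1, rfl⟩ : ∃ X : ℝ, 0 ≤ X ∧ X ≤ 1 ∧ t = a + w * X := by
    rcases Nat.eq_zero_or_pos w with rfl | hw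
    · exact ⟨0, le_rfl, zero_le_one, by simp at h1 ⊢; linarith⟩
    · have hw' : (0 : ℝ) < w := by exact_mod_cast hw
      refine ⟨(t - a) / w, div_nonneg (by linarith) hw'.le, ?_, by field_simp; ring⟩
      rw [div_le_one hw']; linarith
  have := (hv_le (f := fun c : ℕ => (s * G) * (c : ℝ)) (e := e) (by
    intro x y hxy
    have := hrel _ _ hxy
    have h2 : ((Nat.mul s y : ℕ) : ℝ) = s * (y : ℝ) := Nat.cast_mul s y
    rw [h2] at this
    linarith) X (1 - X) hX0 (by linarith) _ _ h).2
  rw [bc_ev hadd hlin hsm, bc0, bc_ev, evG_mulc] at this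
  · linarith
  · intro x y
    have h2 : ((Nat.add x y : ℕ) : ℝ) = x + (y : ℝ) := Nat.cast_add x y
    simp only [h2]; ring
  · intro u x v y
    simp only [lin0_ev]; ring
  · intro k x
    have h2 : ((Nat.mul k x : ℕ) : ℝ) = k * (x : ℝ) := Nat.cast_mul k x
    simp only [h2]; ring

theorem chk3_sound (a w a' w' a'' w'' : ℕ) (P : PolB) (h : chk3 a w a' w' a'' w'' P = true)
    (m x y : ℝ) (h0 : (a : ℝ) ≤ m) (h1 : m ≤ a + w) (h2 : (a' : ℝ) ≤ x) (h3 : x ≤ a' + w')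
    (h4 : (a'' : ℝ) ≤ y) (h5 : y ≤ a'' + w'') : 0 ≤ P.ev m x y := by
  have := lay_sound (ad2_ev x y) (lin2_ev x y) (sm2_ev x y) (ev1 x P.g1 * ev1 y P.g2) ?_
    a w P.H P.p P.g0 h m h0 h1
  · have h6 : ev3 m x y P.p = evG (ev2 x y) P.p m := rfl
    rw [PolB.ev, h6]; linarith
  intro s p h
  refine lay_sound (ad1_ev y) (lin1_ev y) (sm1_ev y) (ev1 y P.g2) ?_ a' w' s p P.g1 h x h2 h3
  intro s p h
  have := lay_sound (e := fun c : ℕ => (c : ℝ)) (add := Nat.add) (sm := Nat.mul)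
    (fun x y => Nat.cast_add x y) lin0_ev
    (fun x y => Nat.cast_mul x y) 1 ?_ a'' w'' s p P.g2 h y h4 h5
  · have h6 : ev1 y p = evG (fun c : ℕ => (c : ℝ)) p y := rfl
    rw [h6]; linarith
  intro s x h
  rw [mul_one]
  exact_mod_cast Nat.le_of_ble_eq_true h

inductive Tr where
  | L (i : ℕ)
  | S (l r : Tr)
  | U (l r : Tr)
  | V (l r : Tr)

def pick : List PolB → ℕ → PolB
  | [], _ => ⟨[], 1, [1], [1], [1]⟩
  | p :: _, 0 => p
  | _ :: ps, i + 1 => pick ps i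

def runT (ps : List PolB) : Tr → ℕ → ℕ → ℕ → ℕ → ℕ → ℕ → Bool
  | .L i, a, w, a', w', a'', w'' => chk3 a w a' w' a'' w'' (pick ps i)
  | .S l r, a, w, a', w', a'', w'' =>
    runT ps l a (w / 2) a' w' a'' w'' && runT ps r (a + w / 2) (w - w / 2) a' w' a'' w''
  | .U l r, a, w, a', w', a'', w'' =>
    runT ps l a w a' (w' / 2) a'' w'' && runT ps r a w (a' + w' / 2) (w' - w' / 2) a'' w''
  | .V l r, a, w, a', w', a'', w'' =>
    runT ps l a w a' w' a'' (w'' / 2) && runT ps r a w a' w' (a'' + w'' / 2) (w'' - w'' / 2)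

theorem pick_mem (ps : List PolB) : ∀ i, pick ps i ∈ ps ∨ pick ps i = ⟨[], 1, [1], [1], [1]⟩ := by
  induction ps with
  | nil => intro i; right; rfl
  | cons p ps ih => intro i; cases i with
    | zero => left; simp [pick]
    | succ i => rcases ih i with h | h
                · left; simp [pick, h]
                · right; simpa [pick] using h

theorem split_cov (a w : ℕ) (m : ℝ) (h1 : m ≤ a + w) :
    (m ≤ a + ((w / 2 : ℕ) : ℝ)) ∨
      (((a + w / 2 : ℕ) : ℝ) ≤ m ∧ m ≤ ((a + w / 2 : ℕ) : ℝ) + ((w - w / 2 : ℕ) : ℝ)) := by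
  rcases le_total m (a + ((w / 2 : ℕ) : ℝ)) with h | h
  · exact Or.inl h
  · right
    rw [Nat.cast_sub (Nat.div_le_self w 2), Nat.cast_add]
    exact ⟨h, by linarith⟩

theorem runT_sound (ps : List PolB) (T : Tr) : ∀ (a w a' w' a'' w'' : ℕ),
    runT ps T a w a' w' a'' w'' = true → ∀ (m x y : ℝ), (a : ℝ) ≤ m → m ≤ a + w →
    (a' : ℝ) ≤ x → x ≤ a' + w' → (a'' : ℝ) ≤ y → y ≤ a'' + w'' →
    ∃ p ∈ ps, 0 ≤ p.ev m x y := by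
  induction T with
  | L i =>
    intro a w a' w' a'' w'' h m x y h0 h1 h2 h3 h4 h5
    have := chk3_sound _ _ _ _ _ _ _ h m x y h0 h1 h2 h3 h4 h5
    rcases pick_mem ps i with hp | hp
    · exact ⟨_, hp, this⟩
    · rw [hp] at this
      simp [PolB.ev, ev3, ev1, evG] at this
      linarith
  | S l r hl hr =>
    intro a w a' w' a'' w'' h m x y h0 h1 h2 h3 h4 h5
    simp only [runT, Bool.and_eq_true] at h
    rcases split_cov a w m h1 with hc | hc
    · exact hl _ _ _ _ _ _ h.1 m x y h0 hc h2 h3 h4 h5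
    · exact hr _ _ _ _ _ _ h.2 m x y hc.1 hc.2 h2 h3 h4 h5
  | U l r hl hr =>
    intro a w a' w' a'' w'' h m x y h0 h1 h2 h3 h4 h5
    simp only [runT, Bool.and_eq_true] at h
    rcases split_cov a' w' x h3 with hc | hc
    · exact hl _ _ _ _ _ _ h.1 m x y h0 h1 h2 hc h4 h5
    · exact hr _ _ _ _ _ _ h.2 m x y h0 h1 hc.1 hc.2 h4 h5
  | V l r hl hr =>
    intro a w a' w' a'' w'' h m x y h0 h1 h2 h3 h4 h5
    simp only [runT, Bool.and_eq_true] at h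
    rcases split_cov a'' w'' y h5 with hc | hc
    · exact hl _ _ _ _ _ _ h.1 m x y h0 h1 h2 h3 h4 hc
    · exact hr _ _ _ _ _ _ h.2 m x y h0 h1 h2 h3 hc.1 hc.2

def aO : PolB := ⟨
  [[[16384, 127], [129, 1]]],
  1, [1],
  [128, 1],
  [128, 1]⟩

def aG : PolB := ⟨
  [[[281474976710656, 2199023255552, 17179868864], [2199023255552, 17179868544, 134217728],
  [17179868864, 134217728, 1048576]], [[274877906944, 2147483756, 16777216], [2147483756, 16777216,
  131072], [16777216, 131072, 1024]], [[268435449, 2097152, 16384], [2097152, 16384, 128], [16384,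
  128, 1]]],
  1, [1048576, 1024, 1],
  [16384, 128, 1],
  [16384, 128, 1]⟩

def aA : PolB := ⟨
  [[[4951760157141521099596496896, 38685626227668133590597632, 302231454903657293676544,
  2361183241434822606848], [38685626227668133590597632, 302231454921524357627904,
  2361183241385967353856, 18446744073709551616], [302231454903657293676544, 2361183241385967353856,
  18446744073709551616, 144115188075855872], [2361183241434822606848, 18446744073709551616,
  144115188075855872, 1125899906842624]], [[4835703278458516698824704, 37778931862957161709568,
  295147905017687572480, 2305843010524413952], [37778931862957161709568, 295147904827232616448,
  2305843013241274368, 18014398499241984], [295147905017687572480, 2305843013241274368,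
  18014398489001984, 140737488355328], [2305843010524413952, 18014398499241984, 140737488355328,
  1099511627776]], [[4722366482869645213696, 36893488229778456576, 288230375484424192,
  2251799813685248], [36893488229778456576, 288230374822248448, 2251799818758656, 17592186044416],
  [288230375484424192, 2251799818758656, 17592186044416, 137438953472], [2251799813685248,
  17592186044416, 137438953472, 1073741824]], [[4611686008037048320, 36028797103865856,
  281474976716480, 2199023255552], [36028797103865856, 281474976088128, 2199023255552, 17179869184],
  [281474976716480, 2199023255552, 17179869184, 134217728], [2199023255552, 17179869184, 134217728,
  1048576]], [[4503599627184128, 35184372087376, 274877906944, 2147483648], [35184372087376,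
  274877906944, 2147483648, 16777216], [274877906944, 2147483648, 16777216, 131072], [2147483648,
  16777216, 131072, 1024]], [[4398046511195, 34359738368, 268435456, 2097152], [34359738368,
  268435456, 2097152, 16384], [268435456, 2097152, 16384, 128], [2097152, 16384, 128, 1]]],
  1, [1125899906842624, 1099511627776, 1073741824, 1048576, 1024, 1],
  [2097152, 16384, 128, 1],
  [2097152, 16384, 128, 1]⟩

def aB : PolB := ⟨
  [[[4835703278458516698824704, 37778931862957161709568, 295147905179352825856,
  2305843009213693952], [37778931862957161709568, 295147905196801130496, 2305843009165983744,
  18014398499241984], [295147905179352825856, 2305843009165983744, 18014398489001984,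
  140737488355328], [2305843009213693952, 18014398499241984, 140737488355328, 1099511627776]],
  [[4722366482869645213696, 36893488147419103232, 288230376157675520, 2251799813685248],
  [36893488147419103232, 288230376152563712, 2251799818851840, 17592186044416], [288230376157675520,
  2251799818851840, 17592186044416, 137438953472], [2251799813685248, 17592186044416, 137438953472,
  1073741824]], [[4611686018427387904, 36028797017473024, 281474976704832, 2199023255552],
  [36028797017473024, 281474976053184, 2199023255552, 17179869184], [281474976704832, 2199023255552,
  17179869184, 134217728], [2199023255552, 17179869184, 134217728, 1048576]], [[4503599627463680,
  35184372090288, 274877906944, 2147483648], [35184372090288, 274877906944, 2147483648, 16777216],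
  [274877906944, 2147483648, 16777216, 131072], [2147483648, 16777216, 131072, 1024]],
  [[4398046511013, 34359738368, 268435456, 2097152], [34359738368, 268435456, 2097152, 16384],
  [268435456, 2097152, 16384, 128], [2097152, 16384, 128, 1]]],
  1, [1099511627776, 1073741824, 1048576, 1024, 1],
  [2097152, 16384, 128, 1],
  [2097152, 16384, 128, 1]⟩

def aF : PolB := ⟨
  [[[356811923176489970264571492362373784095686656, 2787593149816327892691964784081045188247552,
  21778071482940061661655974875633165533184, 170141183460469231731687303715884105728,
  1329227995784915872903807060280344576, 10384593717069655257060992658440192,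
  81129638414606681695789005144064, 633825300114114700748351602688],
  [2787593149816327892691964784081045188247552, 21778071482940061661655974875633165533184,
  170141183460469231731687303715884105728, 1329227995784915872903807060280344576,
  10384593717069655257060992658440192, 81129638414606681695789005144064,
  633825300114114700748351602688, 4951760157141521099596496896],
  [21778071482940061661655974875633165533184, 170141183460469231731687303715884105728,
  1329227995784915872903807060280344576, 10384593717069655257060992658440192,
  81129638414606683982773190918144, 633825300114114658760751316992, 4951760157141521336893440000,
  38685626227668133208915968], [170141183460469231731687303715884105728,
  1329227995784915872903807060280344576, 10384593717069655257060992658440192,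
  81129638414606686269757376692224, 633825300114114646253806551040, 4951760157141521295017508864,
  38685626227668133208915968, 302231454903657293676544], [1329227995784915872903807060280344576,
  10384593717069655257060992658440192, 81129638414606683982773190918144,
  633825300114114646253806551040, 4951760157141521574190383104, 38685626227668132827234304,
  302231454903657293676544, 2361183241434822606848], [10384593717069655257060992658440192,
  81129638414606681695789005144064, 633825300114114658760751316992, 4951760157141521295017508864,
  38685626227668132827234304, 302231454903657293676544, 2361183241434822606848,
  18446744073709551616], [81129638414606681695789005144064, 633825300114114700748351602688,
  4951760157141521336893440000, 38685626227668133208915968, 302231454903657293676544,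
  2361183241434822606848, 18446744073709551616, 144115188075855872],
  [633825300114114700748351602688, 4951760157141521099596496896, 38685626227668133208915968,
  302231454903657293676544, 2361183241434822606848, 18446744073709551616, 144115188075855872,
  1125899906842624]], [[348449143727040986586495598010130648530944,
  2722258935367507707706996859454145691648, 21267647932558653966460912964485513216,
  166153499473114484112975882535043072, 1298074214633706907132624082305024,
  10141204801825835211973625643008, 79228162514264337593543950336, 618970019642690137449562112],
  [2722258935367507707706996859454145691648, 21267647932558653966460912964485513216,
  166153499473114484112975882535043072, 1298074214633706943724371054690304,
  10141204801825834254298997850112, 79228162514264347420429123584, 618970019642690089466724352,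
  4835703278458516794245120], [21267647932558653966460912964485513216,
  166153499473114484112975882535043072, 1298074214633706980316118027075584,
  10141204801825833482441835151360, 79228162514264268556239634432, 618970019642691411578454016,
  4835703278458511462760448, 37778931862957162082304], [166153499473114484112975882535043072,
  1298074214633706943724371054690304, 10141204801825833482441835151360,
  79228162514264188798696947712, 618970019642694060163989504, 4835703278458485336965120,
  37778931862957244002304, 295147905179352825856], [1298074214633706907132624082305024,
  10141204801825834254298997850112, 79228162514264268556239634432, 618970019642694060163989504,
  4835703278458464283656192, 37778931862957408215040, 295147905179352505856, 2305843009213693952],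
  [10141204801825835211973625643008, 79228162514264347420429123584, 618970019642691411578454016,
  4835703278458485336965120, 37778931862957408215040, 295147905179352185856, 2305843009213693952,
  18014398509481984], [79228162514264337593543950336, 618970019642690089466724352,
  4835703278458511462760448, 37778931862957244002304, 295147905179352505856, 2305843009213693952,
  18014398509481984, 140737488355328], [618970019642690137449562112, 4835703278458516794245120,
  37778931862957162082304, 295147905179352825856, 2305843009213693952, 18014398509481984,
  140737488355328, 1099511627776]], [[340282366920938463463374607431768211456,
  2658455991569831745807614120560689152, 20769187434139310514121985316880384,
  162259276829213363391578010288128, 1267650600228229414003647971328, 9903520314283041906061475840,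
  77371252455336269471285248, 604462909807314581389312], [2658455991569831745807614120560689152,
  20769187434139310514121985316880384, 162259276829213363391578010288128,
  1267650600228229428297299132416, 9903520314283041571054026752, 77371252455336270561804288,
  604462909807314598428672, 4722366482869645120512], [20769187434139310514121985316880384,
  162259276829213363391578010288128, 1267650600228229430084005527552, 9903520314283084004257169408,
  77371252455335599582216192, 604462909807317267578880, 4722366482869644980736,
  36893488147419103232], [162259276829213363391578010288128, 1267650600228229428297299132416,
  9903520314283084004257169408, 77371252455334924131500032, 604462909807327770378240,
  4722366482869603974144, 36893488147419103232, 288230376151711744],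
  [1267650600228229414003647971328, 9903520314283041571054026752, 77371252455335599582216192,
  604462909807327770378240, 4722366482869562827776, 36893488147419263232, 288230376151711744,
  2251799813685248], [9903520314283041906061475840, 77371252455336270561804288,
  604462909807317267578880, 4722366482869603974144, 36893488147419263232, 288230376151711744,
  2251799813685248, 17592186044416], [77371252455336269471285248, 604462909807314598428672,
  4722366482869644980736, 36893488147419103232, 288230376151711744, 2251799813685248,
  17592186044416, 137438953472], [604462909807314581389312, 4722366482869645120512,
  36893488147419103232, 288230376151711744, 2251799813685248, 17592186044416, 137438953472,
  1073741824]], [[332306998946228968225951765070086144, 2596148429267413814265248164610048,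
  20282409603651670423947251286016, 158456325028528672060351709184, 1237940039285380335968190464,
  9671406556917033111388160, 75557863725914322673664, 590295810358705657536],
  [2596148429267413814265248164610048, 20282409603651670423947251286016,
  158456325028528665806879326208, 1237940039285380421464883200, 9671406556917033397649408,
  75557863725914314473472, 590295810358705686656, 4611686018427387904],
  [20282409603651670423947251286016, 158456325028528665806879326208, 1237940039285375077183389696,
  9671406556917117951672320, 75557863725913978593280, 590295810358705698304, 4611686018427387904,
  36028797018963968], [158456325028528672060351709184, 1237940039285380421464883200,
  9671406556917117951672320, 75557863725912994807808, 590295810358710847424, 4611686018427387904,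
  36028797018963968, 281474976710656], [1237940039285380335968190464, 9671406556917033397649408,
  75557863725913978593280, 590295810358710847424, 4611686018427367904, 36028797018963968,
  281474976710656, 2199023255552], [9671406556917033111388160, 75557863725914314473472,
  590295810358705698304, 4611686018427387904, 36028797018963968, 281474976710656, 2199023255552,
  17179869184], [75557863725914322673664, 590295810358705686656, 4611686018427387904,
  36028797018963968, 281474976710656, 2199023255552, 17179869184, 134217728],
  [590295810358705657536, 4611686018427387904, 36028797018963968, 281474976710656, 2199023255552,
  17179869184, 134217728, 1048576]], [[324518553658426726783156020576256,
  2535301200456458802993406410752, 19807040628566084593806999552, 154742504910672532835663872,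
  1208925819614629138923520, 9444732965739290893312, 73786976294838205008, 576460752303423488],
  [2535301200456458802993406410752, 19807040628566084789228011520, 154742504910672535889117184,
  1208925819614629019648000, 9444732965739291825152, 73786976294838202824, 576460752303423488,
  4503599627370496], [19807040628566084593806999552, 154742504910672535889117184,
  1208925819614628983865344, 9444732965739292291072, 73786976294838202096, 576460752303423488,
  4503599627370496, 35184372088832], [154742504910672532835663872, 1208925819614629019648000,
  9444732965739292291072, 73786976294838199184, 576460752303423488, 4503599627370496,
  35184372088832, 274877906944], [1208925819614629138923520, 9444732965739291825152,
  73786976294838202096, 576460752303423488, 4503599627370496, 35184372088832, 274877906944,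
  2147483648], [9444732965739290893312, 73786976294838202824, 576460752303423488, 4503599627370496,
  35184372088832, 274877906944, 2147483648, 16777216], [73786976294838205008, 576460752303423488,
  4503599627370496, 35184372088832, 274877906944, 2147483648, 16777216, 131072],
  [576460752303423488, 4503599627370496, 35184372088832, 274877906944, 2147483648, 16777216, 131072,
  1024]], [[316912650057057350374175801344, 2475880078570760549798248448,
  19342813113834066604457984, 151115727451828651311104, 1180591620717411268480, 9223372036854775899,
  72057594037927936, 562949953421312], [2475880078570760549798248448, 19342813113834066413617152,
  151115727451828654292992, 1180591620717411256832, 9223372036854775899, 72057594037927936,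
  562949953421312, 4398046511104], [19342813113834066604457984, 151115727451828654292992,
  1180591620717411233536, 9223372036854775990, 72057594037927936, 562949953421312, 4398046511104,
  34359738368], [151115727451828651311104, 1180591620717411256832, 9223372036854775990,
  72057594037927936, 562949953421312, 4398046511104, 34359738368, 268435456],
  [1180591620717411268480, 9223372036854775899, 72057594037927936, 562949953421312, 4398046511104,
  34359738368, 268435456, 2097152], [9223372036854775899, 72057594037927936, 562949953421312,
  4398046511104, 34359738368, 268435456, 2097152, 16384], [72057594037927936, 562949953421312,
  4398046511104, 34359738368, 268435456, 2097152, 16384, 128], [562949953421312, 4398046511104,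
  34359738368, 268435456, 2097152, 16384, 128, 1]]],
  1, [1125899906842624, 1099511627776, 1073741824, 1048576, 1024, 1],
  [562949953421312, 4398046511104, 34359738368, 268435456, 2097152, 16384, 128, 1],
  [562949953421312, 4398046511104, 34359738368, 268435456, 2097152, 16384, 128, 1]⟩

def tree1 : Tr :=
  .S (.U (.V (.U (.V (.U (.V (.S (.S (.U (.V (.S (.S (.U (.V (.S (.U (.V (.L 3) (.V (.L 3) (.L 1)))
  (.V (.L 0) (.L 2))) (.U (.V (.L 3) (.V (.L 3) (.L 1))) (.V (.L 0) (.L 2)))) (.L 3)) (.L 3)) (.U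
  (.V (.S (.U (.V (.L 3) (.V (.L 3) (.L 1))) (.V (.L 0) (.L 3))) (.L 3)) (.U (.V (.U (.L 1) (.L 3))
  (.L 3)) (.L 2))) (.V (.L 0) (.L 2)))) (.S (.U (.V (.L 3) (.U (.V (.L 1) (.L 3)) (.L 3))) (.V (.L
  0) (.L 2))) (.U (.V (.L 3) (.U (.S (.L 1) (.V (.V (.L 3) (.L 1)) (.L 1))) (.L 3))) (.V (.L 0) (.L
  2))))) (.L 3)) (.L 3)) (.S (.U (.V (.S (.U (.V (.L 3) (.V (.L 3) (.L 1))) (.V (.L 0) (.L 3))) (.U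
  (.V (.L 3) (.V (.L 3) (.L 1))) (.V (.L 0) (.L 3)))) (.L 3)) (.L 3)) (.U (.V (.S (.U (.V (.L 3) (.V
  (.L 3) (.L 1))) (.V (.L 0) (.L 3))) (.L 3)) (.U (.V (.U (.L 1) (.L 3)) (.L 3)) (.L 2))) (.V (.L 0)
  (.L 2))))) (.S (.S (.U (.V (.L 3) (.U (.V (.L 1) (.L 3)) (.L 3))) (.V (.L 0) (.L 2))) (.U (.V (.L
  3) (.U (.S (.L 1) (.V (.V (.L 3) (.L 1)) (.L 1))) (.L 3))) (.V (.L 0) (.L 2)))) (.S (.U (.V (.L 3)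
  (.V (.L 3) (.L 1))) (.V (.L 0) (.L 3))) (.U (.V (.L 3) (.V (.L 3) (.L 1))) (.V (.L 0) (.L 3))))))
  (.L 4)) (.L 4)) (.L 4)) (.L 4)) (.U (.S (.U (.V (.L 4) (.L 4)) (.L 4)) (.V (.V (.L 4) (.S (.U (.L
  4) (.L 4)) (.U (.U (.L 4) (.S (.L 4) (.V (.L 4) (.U (.L 4) (.S (.L 4) (.V (.L 4) (.U (.L 4) (.L
  4)))))))) (.S (.L 4) (.U (.V (.L 4) (.V (.L 4) (.L 4))) (.L 4)))))) (.U (.V (.U (.L 4) (.S (.L 4)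
  (.V (.S (.L 4) (.U (.L 4) (.U (.L 4) (.L 4)))) (.L 4)))) (.L 4)) (.L 4)))) (.L 4))) (.V (.L 0) (.L
  4))) (.U (.V (.S (.U (.V (.S (.U (.V (.S (.U (.V (.L 3) (.V (.L 3) (.L 1))) (.V (.L 0) (.L 3)))
  (.L 3)) (.U (.V (.U (.L 1) (.L 3)) (.L 3)) (.L 3))) (.V (.L 0) (.L 2))) (.U (.V (.L 4) (.U (.V (.L
  1) (.L 3)) (.L 3))) (.V (.L 0) (.L 2)))) (.L 4)) (.L 4)) (.U (.V (.S (.U (.V (.U (.L 4) (.L 3))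
  (.U (.S (.L 1) (.V (.V (.L 3) (.L 1)) (.L 1))) (.L 3))) (.V (.L 0) (.L 3))) (.U (.V (.S (.U (.L 4)
  (.L 4)) (.U (.V (.L 3) (.L 4)) (.V (.L 0) (.L 3)))) (.V (.L 4) (.L 1))) (.V (.L 0) (.L 3)))) (.L
  4)) (.L 4))) (.S (.U (.V (.V (.L 4) (.S (.U (.S (.U (.L 4) (.V (.L 4) (.U (.L 4) (.V (.L 4) (.S
  (.U (.L 4) (.V (.L 4) (.S (.L 4) (.L 4)))) (.L 4)))))) (.L 4)) (.U (.V (.L 4) (.S (.U (.V (.L 4)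
  (.S (.L 4) (.L 4))) (.L 4)) (.L 4))) (.L 4))) (.U (.L 4) (.L 4)))) (.S (.U (.V (.U (.L 4) (.V (.S
  (.U (.L 4) (.V (.S (.U (.L 4) (.L 4)) (.L 4)) (.L 4))) (.L 4)) (.L 4))) (.L 4)) (.L 4)) (.U (.V
  (.L 4) (.L 4)) (.L 4)))) (.V (.L 4) (.L 4))) (.U (.V (.L 4) (.U (.L 4) (.L 4))) (.V (.L 4) (.L
  4))))) (.V (.L 0) (.L 4)))

def polys1 : List PolB := [aO, aG, aA, aB, aF]

def bO : PolB := ⟨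
  [[[64, 7], [9, 1]]],
  1, [1],
  [8, 1],
  [8, 1]⟩

def bA : PolB := ⟨
  [[[2417851639229258349412352, 302231454903657293676544, 37778931862957161709568,
  4722366482869645213696], [302231454903657293676544, 37782931059426266710016,
  4722366482869645213696, 590295810358705651712], [37778931862957161709568, 4722366482869645213696,
  590295810358705651712, 73786976294838206464], [4722366482869645213696, 590295810358705651712,
  73786976294838206464, 9223372036854775808]], [[4722366482869645213696, 590233322913875886080,
  73699015364616126464, 9234367153132535808], [590233322913875886080, 73595432573186605056,
  9256357385688055808, 1151547115072126976], [73699015364616126464, 9256357385688055808,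
  1150172725537406976, 144115188075855872], [9234367153132535808, 1151547115072126976,
  144115188075855872, 18014398509481984]], [[9225491895273127936, 1159944085373452288,
  143427993308495872, 18014398509481984], [1159944085373452288, 142756054264971264,
  18094284901187584, 2251799813685248], [143427993308495872, 18094284901187584, 2251799813685248,
  281474976710656], [18014398509481984, 2251799813685248, 281474976710656, 35184372088832]],
  [[17880189371416576, 2250294427648000, 281568929120256, 35184372088832], [2250294427648000,
  280508609069056, 35207860191232, 4398046511104], [281568929120256, 35207860191232, 4398046511104,
  549755813888], [35184372088832, 4398046511104, 549755813888, 68719476736]], [[35567597256704,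
  4433677123584, 549388812288, 68719476736], [4433677123584, 548287807488, 68696539136, 8589934592],
  [549388812288, 68696539136, 8589934592, 1073741824], [68719476736, 8589934592, 1073741824,
  134217728]], [[67514269696, 8549957632, 1074100224, 134217728], [8549957632, 1075175424,
  134217728, 16777216], [1074100224, 134217728, 16777216, 2097152], [134217728, 16777216, 2097152,
  262144]], [[135825408, 16790176, 2097152, 262144], [16790176, 2097152, 262144, 32768], [2097152,
  262144, 32768, 4096], [262144, 32768, 4096, 512]], [[261389, 32768, 4096, 512], [32768, 4096, 512,
  64], [4096, 512, 64, 8], [512, 64, 8, 1]]],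
  1, [9223372036854775808, 18014398509481984, 35184372088832, 68719476736, 134217728, 262144, 512, 1],
  [512, 64, 8, 1],
  [512, 64, 8, 1]⟩

def bB : PolB := ⟨
  [[[4722366482869645213696, 590295810358705651712, 73786976294838206464, 9223372036854775808],
  [590295810358705651712, 73794787225441927168, 9223372036854775808, 1151547115072126976],
  [73786976294838206464, 9223372036854775808, 1150172725537406976, 144115188075855872],
  [9223372036854775808, 1151547115072126976, 144115188075855872, 18014398509481984]],
  [[9223372036854775808, 1152799458816163840, 144115188075855872, 18014398509481984],
  [1152799458816163840, 144099932352020480, 18100297855401984, 2251799813685248],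
  [144115188075855872, 18100297855401984, 2251799813685248, 281474976710656], [18014398509481984,
  2251799813685248, 281474976710656, 35184372088832]], [[18018538857955328, 2254540002820096,
  281474976710656, 35184372088832], [2254540002820096, 280132799430656, 35172628037632,
  4398046511104], [281474976710656, 35172628037632, 4398046511104, 549755813888], [35184372088832,
  4398046511104, 549755813888, 68719476736]], [[35098103644160, 4379486715904, 549939314688,
  68719476736], [4379486715904, 550489817088, 68742414336, 8589934592], [549939314688, 68742414336,
  8589934592, 1073741824], [68719476736, 8589934592, 1073741824, 134217728]], [[69299470336,
  8623276032, 1073383424, 134217728], [8623276032, 1072308224, 134217728, 16777216], [1073383424,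
  134217728, 16777216, 2097152], [134217728, 16777216, 2097152, 262144]], [[132996608, 16764256,
  2097152, 262144], [16764256, 2097152, 262144, 32768], [2097152, 262144, 32768, 4096], [262144,
  32768, 4096, 512]], [[262899, 32768, 4096, 512], [32768, 4096, 512, 64], [4096, 512, 64, 8], [512,
  64, 8, 1]]],
  1, [18014398509481984, 35184372088832, 68719476736, 134217728, 262144, 512, 1],
  [512, 64, 8, 1],
  [512, 64, 8, 1]⟩

def bF : PolB := ⟨
  [[[40564819207303340847894502572032, 5070602400912917605986812821504,
  633825300114114700748351602688, 79228162514264337593543950336, 9903520314283042199192993792,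
  1237940039285380274899124224, 154742504910672534362390528, 19342813113834066795298816],
  [5070602400912917605986812821504, 633825300114114700748351602688, 79228162514264337593543950336,
  9903520314283042199192993792, 1237940039285380274899124224, 154742504910672534362390528,
  19342813113834066795298816, 2417851639229258349412352], [633825300114114700748351602688,
  79228162514264337593543950336, 9903520314283042199192993792, 1237940039285380274899124224,
  154742536904244287202394112, 19342805115441128585297920, 2417852139128816987537408,
  302231454903657293676544], [79228162514264337593543950336, 9903520314283042199192993792,
  1237940039285380274899124224, 154742568897816040042397696, 19342805115441128585297920,
  2417851639229258349412352, 302231454903657293676544, 37778931862957161709568],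
  [9903520314283042199192993792, 1237940039285380274899124224, 154742536904244287202394112,
  19342805115441128585297920, 2417852639028375625662464, 302231454903657293676544,
  37778931862957161709568, 4722366482869645213696], [1237940039285380274899124224,
  154742504910672534362390528, 19342805115441128585297920, 2417851639229258349412352,
  302231454903657293676544, 37778931862957161709568, 4722366482869645213696, 590295810358705651712],
  [154742504910672534362390528, 19342813113834066795298816, 2417852139128816987537408,
  302231454903657293676544, 37778931862957161709568, 4722366482869645213696, 590295810358705651712,
  73786976294838206464], [19342813113834066795298816, 2417851639229258349412352,
  302231454903657293676544, 37778931862957161709568, 4722366482869645213696, 590295810358705651712,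
  73786976294838206464, 9223372036854775808]], [[79228162514264337593543950336,
  9903520314283042199192993792, 1237940039285380274899124224, 154742504910672534362390528,
  19342813113834066795298816, 2417851639229258349412352, 302231454903657293676544,
  37778931862957161709568], [9903520314283042199192993792, 1237940039285380274899124224,
  154742504910672534362390528, 19342817113030535900299264, 2417849639631023796912128,
  302231767340881442504704, 37778916241095954268160, 4722366482869645213696],
  [1237940039285380274899124224, 154742504910672534362390528, 19342821112227005005299712,
  2417847640032789244411904, 302229077566003995475968, 37779635550398938349568,
  4722321526038208708608, 590295810358705651712], [154742504910672534362390528,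
  19342817113030535900299264, 2417847640032789244411904, 302226325303681718681600,
  37781027303421284188160, 4722102600078978973696, 590306805474983411712, 73786976294838206464],
  [19342813113834066795298816, 2417849639631023796912128, 302229077566003995475968,
  37781027303421284188160, 4721924725485883883520, 590328795707538931712, 73786289100070846464,
  9223372036854775808], [2417851639229258349412352, 302231767340881442504704,
  37779635550398938349568, 4722102600078978973696, 590328795707538931712, 73785601905303486464,
  9223372036854775808, 1152921504606846976], [302231454903657293676544, 37778916241095954268160,
  4722321526038208708608, 590306805474983411712, 73786289100070846464, 9223372036854775808,
  1152921504606846976, 144115188075855872], [37778931862957161709568, 4722366482869645213696,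
  590295810358705651712, 73786976294838206464, 9223372036854775808, 1152921504606846976,
  144115188075855872, 18014398509481984]], [[154742504910672534362390528,
  19342813113834066795298816, 2417851639229258349412352, 302231392416212463910912,
  37778955295748972871680, 4722363553770668818432, 590295932404496334848, 73786976294838206464],
  [19342813113834066795298816, 2417851639229258349412352, 302231267441322804379648,
  37779003498338734571520, 4722369561502202986496, 590293147341543178240, 73787166922666672128,
  9223372036854775808], [2417851639229258349412352, 302231267441322804379648,
  37779028268136685109248, 4722566954625714356224, 590246095940455759872, 73789867598102396928,
  9223384062763204608, 1152920752987570176], [302231392416212463910912, 37779003498338734571520,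
  4722566954625714356224, 590202523394158624768, 73800957134941192192, 9222708893904273408,
  1152920752987570176, 144115188075855872], [37778955295748972871680, 4722369561502202986496,
  590246095940455759872, 73800957134941192192, 9222021699136913408, 1152962951041253376,
  144115188075855872, 18014398509481984], [4722363553770668818432, 590293147341543178240,
  73789867598102396928, 9222708893904273408, 1152962951041253376, 144115188075855872,
  18014398509481984, 2251799813685248], [590295932404496334848, 73787166922666672128,
  9223384062763204608, 1152920752987570176, 144115188075855872, 18014398509481984, 2251799813685248,
  281474976710656], [73786976294838206464, 9223372036854775808, 1152920752987570176,
  144115188075855872, 18014398509481984, 2251799813685248, 281474976710656, 35184372088832]],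
  [[302231454903657293676544, 37778931862957161709568, 4722368602728063565824,
  590296418388635811840, 73786549546887675904, 9223433661045538816, 1152918764417712128,
  144115188075855872], [37778931862957161709568, 4722370722586481917952, 590298694377705308160,
  73785352453602934784, 9223527652109844480, 1152932514755510272, 144113530486915072,
  18014421997584384], [4722368602728063565824, 590298694377705308160, 73781965820350431232,
  9224112403317260288, 1152918867496927232, 144112497010409472, 18014445485686784,
  2251801281691648], [590296418388635811840, 73785352453602934784, 9224112403317260288,
  1152780745643655168, 144121764744527872, 18014421997584384, 2251801281691648, 281474976710656],
  [73786549546887675904, 9223527652109844480, 1152918867496927232, 144121764744527872,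
  18013821373251584, 2251802749698048, 281474976710656, 35184372088832], [9223433661045538816,
  1152932514755510272, 144112497010409472, 18014421997584384, 2251802749698048, 281474976710656,
  35184372088832, 4398046511104], [1152918764417712128, 144113530486915072, 18014445485686784,
  2251801281691648, 281474976710656, 35184372088832, 4398046511104, 549755813888],
  [144115188075855872, 18014421997584384, 2251801281691648, 281474976710656, 35184372088832,
  4398046511104, 549755813888, 68719476736]], [[590295810358705651712, 73786976294838206464,
  9223327867411103744, 1152928565533081600, 144116775066271744, 18014004110688256, 2251822777499648,
  281474793209856], [73786976294838206464, 9223283697967431680, 1152920602663714816,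
  144124869469011968, 18012800177668096, 2251857527308288, 281477110562816, 35184326213632],
  [9223327867411103744, 1152920602663714816, 144128616291106816, 18012608447643648,
  2251803357872128, 281478945570816, 35184234463232, 4398046511104], [1152928565533081600,
  144124869469011968, 18012608447643648, 2251897624854528, 281481262923776, 35184234463232,
  4398046511104, 549755813888], [144116775066271744, 18012800177668096, 2251803357872128,
  281481262923776, 35184096837632, 4398046511104, 549755813888, 68719476736], [18014004110688256,
  2251857527308288, 281478945570816, 35184234463232, 4398046511104, 549755813888, 68719476736,
  8589934592], [2251822777499648, 281477110562816, 35184234463232, 4398046511104, 549755813888,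
  68719476736, 8589934592, 1073741824], [281474793209856, 35184326213632, 4398046511104,
  549755813888, 68719476736, 8589934592, 1073741824, 134217728]], [[1152921504606846976,
  144115188075855872, 18014695466205184, 2251705525731328, 281482311499776, 35184661102592,
  4398004568064, 549756172288], [144115188075855872, 18014992422928384, 2251665428185088,
  281470362976256, 35187246497792, 4397869072384, 549756776448, 68719476736], [18014695466205184,
  2251665428185088, 281469639458816, 35187612844032, 4397901348864, 549757493248, 68719476736,
  8589934592], [2251705525731328, 281470362976256, 35187612844032, 4397691633664, 549758097408,
  68719476736, 8589934592, 1073741824], [281482311499776, 35187246497792, 4397901348864,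
  549758097408, 68719476736, 8589934592, 1073741824, 134217728], [35184661102592, 4397869072384,
  549757493248, 68719476736, 8589934592, 1073741824, 134217728, 16777216], [4398004568064,
  549756776448, 68719476736, 8589934592, 1073741824, 134217728, 16777216, 2097152], [549756172288,
  68719476736, 8589934592, 1073741824, 134217728, 16777216, 2097152, 262144]], [[2251799813685248,
  281474976710656, 35183746875392, 4398274330624, 549728995328, 68720386816, 8589947552,
  1073741824], [281474976710656, 35183121661952, 4398417362944, 549726466048, 68719198976,
  8590008832, 1073741824, 134217728], [35183746875392, 4398417362944, 549711679488, 68720109056,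
  8589973472, 1073741824, 134217728, 16777216], [4398274330624, 549726466048, 68720109056,
  8590083072, 1073741824, 134217728, 16777216, 2097152], [549728995328, 68719198976, 8589973472,
  1073741824, 134217728, 16777216, 2097152, 262144], [68720386816, 8590008832, 1073741824,
  134217728, 16777216, 2097152, 262144, 32768], [8589947552, 1073741824, 134217728, 16777216,
  2097152, 262144, 32768, 4096], [1073741824, 134217728, 16777216, 2097152, 262144, 32768, 4096,
  512]], [[4398046511104, 549755813888, 68719863296, 8589789632, 1073759944, 134216973, 16777216,
  2097152], [549755813888, 68720249856, 8589692992, 1073765984, 134216973, 16777216, 2097152,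
  262144], [68719863296, 8589692992, 1073778064, 134216218, 16777216, 2097152, 262144, 32768],
  [8589789632, 1073765984, 134216218, 16777216, 2097152, 262144, 32768, 4096], [1073759944,
  134216973, 16777216, 2097152, 262144, 32768, 4096, 512], [134216973, 16777216, 2097152, 262144,
  32768, 4096, 512, 64], [16777216, 2097152, 262144, 32768, 4096, 512, 64, 8], [2097152, 262144,
  32768, 4096, 512, 64, 8, 1]]],
  1, [9223372036854775808, 18014398509481984, 35184372088832, 68719476736, 134217728, 262144, 512, 1],
  [2097152, 262144, 32768, 4096, 512, 64, 8, 1],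
  [2097152, 262144, 32768, 4096, 512, 64, 8, 1]⟩

def tree2 : Tr :=
  .S (.U (.V (.S (.U (.V (.U (.V (.L 2) (.L 2)) (.L 3)) (.L 3)) (.L 3)) (.U (.V (.U (.L 3) (.L 3))
  (.L 3)) (.V (.L 0) (.L 3)))) (.S (.U (.V (.L 3) (.U (.V (.L 3) (.L 3)) (.L 3))) (.V (.L 3) (.L
  3))) (.V (.L 3) (.U (.L 3) (.L 3))))) (.V (.L 0) (.U (.V (.L 3) (.L 3)) (.L 3)))) (.U (.V (.S (.U
  (.V (.L 3) (.L 3)) (.V (.L 0) (.L 3))) (.U (.V (.L 2) (.L 3)) (.V (.L 0) (.L 3)))) (.V (.L 3) (.L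
  3))) (.V (.L 0) (.S (.U (.V (.L 3) (.L 3)) (.V (.L 0) (.L 1))) (.U (.V (.L 3) (.L 3)) (.V (.L 0)
  (.L 3))))))

def polys2 : List PolB := [bO, bA, bB, bF]

theorem run1 : runT polys1 tree1 24 192 0 128 0 128 = true := by decide +kernel

theorem run2 : runT polys2 tree2 108 148 0 8 0 8 = true := by decide +kernel

theorem aO_ev (μ x y : ℝ) : aO.ev (1024*μ) (128*x) (128*y) = 128 * (x-y) := by
  simp only [PolB.ev, ev3, ev2, ev1, evG, aO]; push_cast; ring
theorem aG_ev (μ x y : ℝ) : aG.ev (1024*μ) (128*x) (128*y)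
   = 5242880 * ((2*μ-(x+y))*((x+y)-7/10*μ)) := by
  simp only [PolB.ev, ev3, ev2, ev1, evG, aG]; push_cast; ring
theorem aA_ev (μ x y : ℝ) : aA.ev (1024*μ) (128*x) (128*y)
   = 2814749767106560000 * (4*(13/500)*(1-μ)^2*(x*y-7/20*((x-μ)*(y-μ)*(x+y-μ)))
      - (1-x)*(1-y)*(x+y-2*μ)^2*μ) := by
  simp only [PolB.ev, ev3, ev2, ev1, evG, aA]; push_cast; ring
theorem aB_ev (μ x y : ℝ) : aB.ev (1024*μ) (128*x) (128*y)
   = 2748779069440000 * (4*(13/500)*(1-μ)*(x*y-7/20*((x-μ)*(y-μ)*(x+y-μ)))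
      - x*y*(x+y-2*μ)^2) := by
  simp only [PolB.ev, ev3, ev2, ev1, evG, aB]; push_cast; ring
set_option maxHeartbeats 4000000 in
theorem aF_ev (μ x y : ℝ) : aF.ev (1024*μ) (128*x) (128*y)
   = 386856262276681335905976320000 * (
      13/500*(1-μ)*(x*y+μ*(1-x-y))*(x*(1-x)+y*(1-y))^2*(x*y-7/20*((x-μ)*(y-μ)*(x+y-μ)))
      - x^2*y^2*((1-x)^2*(1-y)^2)*(x+y-2*μ)^2*μ) := by
  simp only [PolB.ev, ev3, ev2, ev1, evG, aF]; push_cast; ring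
theorem bO_ev (μ x y : ℝ) : bO.ev (512*μ) (8*x) (8*y) = 8 * (x-y) := by
  simp only [PolB.ev, ev3, ev2, ev1, evG, bO]; push_cast; ring
def Rb (μ x y : ℝ) : ℝ := 13/500*μ^2+(14/100*(1-2*μ)+93/1000*(1-2*μ)^2)*μ^2*(x+y-2*μ)
  + 222/10000*((x-μ)*(y-μ)) - 7/100*μ^2*((x-μ)*(y-μ)*(x+y-2*μ))
theorem bA_ev (μ x y : ℝ) : bA.ev (512*μ) (8*x) (8*y)
   = 2882303761517117440000 * (4*(1-μ)^2*Rb μ x y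
      - (1-x)*(1-y)*(x+y-2*μ)^2*μ) := by
  simp only [PolB.ev, ev3, ev2, ev1, evG, bA, Rb]; push_cast; ring
theorem bB_ev (μ x y : ℝ) : bB.ev (512*μ) (8*x) (8*y)
   = 5629499534213120000 * (4*(1-μ)*Rb μ x y
      - x*y*(x+y-2*μ)^2) := by
  simp only [PolB.ev, ev3, ev2, ev1, evG, bB, Rb]; push_cast; ring
set_option maxHeartbeats 4000000 in
theorem bF_ev (μ x y : ℝ) : bF.ev (512*μ) (8*x) (8*y)
   = 377789318629571617095680000 * (
      (1-μ)*(x*y+μ*(1-x-y))*(x*(1-x)+y*(1-y))^2*Rb μ x y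
      - x^2*y^2*((1-x)^2*(1-y)^2)*(x+y-2*μ)^2*μ) := by
  simp only [PolB.ev, ev3, ev2, ev1, evG, bF, Rb]; push_cast; ring

def Rf (α ω q μ x y : ℝ) : ℝ :=
  13/500 + α*(x+y-2*μ) + ω*((x-μ)*(y-μ)) - q*((x-μ)*(y-μ)*(x+y-2*μ))

theorem Rf_symm (α ω q μ x y : ℝ) : Rf α ω q μ x y = Rf α ω q μ y x := by
  unfold Rf; ring

theorem Rf_flip (α ω q μ x y : ℝ) :
    Rf (-α) ω (-q) μ x y = Rf α ω q (1-μ) (1-x) (1-y) := by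
  unfold Rf; ring

/-- the basic polynomial inequality, with `R = μ² * Rf` -/
def Good (μ x y R : ℝ) : Prop :=
  x^2*y^2*((1-x)^2*(1-y)^2)*(x+y-2*μ)^2*μ
    ≤ (1-μ)*(x*y+μ*(1-x-y))*(x*(1-x)+y*(1-y))^2*R

section
variable {μ x y R : ℝ}

theorem good_A (hμ0 : 0 < μ) (hμ1 : μ < 1) (hx0 : 0 ≤ x) (hx1 : x ≤ 1) (hy0 : 0 ≤ y)
    (hy1 : y ≤ 1)
    (h : 0 ≤ 4*(1-μ)^2*R - (1-x)*(1-y)*(x+y-2*μ)^2*μ) : Good μ x y R := by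
  unfold Good
  have hP : 0 ≤ x*y := mul_nonneg hx0 hy0
  have hQ : 0 ≤ (1-x)*(1-y) := mul_nonneg (by linarith) (by linarith)
  have hm : 0 < 1-μ := by linarith
  have hR : 0 ≤ R := by
    have h1 : 0 ≤ (1-x)*(1-y)*(x+y-2*μ)^2*μ := by positivity
    have h2 : 0 ≤ (4*(1-μ)^2)*R := by linarith
    exact nonneg_of_mul_nonneg_right h2 (by positivity)
  have hS : 4*((x*y)*((1-x)*(1-y))) ≤ (x*(1-x)+y*(1-y))^2 := by
    nlinarith [sq_nonneg (x*(1-x)-y*(1-y))]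
  have e1 : (1-μ)*(x*y) ≤ x*y+μ*(1-x-y) := by nlinarith
  have s1 : (1-μ)*((1-μ)*(x*y))*(x*(1-x)+y*(1-y))^2*R
      ≤ (1-μ)*(x*y+μ*(1-x-y))*(x*(1-x)+y*(1-y))^2*R := by gcongr
  have s2 : (x*y)*(x*(1-x)+y*(1-y))^2 * ((1-x)*(1-y)*(x+y-2*μ)^2*μ)
      ≤ (x*y)*(x*(1-x)+y*(1-y))^2 * (4*(1-μ)^2*R) := by
    apply mul_le_mul_of_nonneg_left (by linarith) (by positivity)
  have s3 : 4*((x*y)*((1-x)*(1-y))) * ((x*y)*((1-x)*(1-y)*(x+y-2*μ)^2*μ))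
      ≤ (x*(1-x)+y*(1-y))^2 * ((x*y)*((1-x)*(1-y)*(x+y-2*μ)^2*μ)) :=
    mul_le_mul_of_nonneg_right hS (by positivity)
  linarith [s1, s2, s3]

theorem good_B (hμ0 : 0 < μ) (hμ1 : μ < 1) (hx0 : 0 ≤ x) (hx1 : x ≤ 1) (hy0 : 0 ≤ y)
    (hy1 : y ≤ 1)
    (h : 0 ≤ 4*(1-μ)*R - x*y*(x+y-2*μ)^2) : Good μ x y R := by
  unfold Good
  have hP : 0 ≤ x*y := mul_nonneg hx0 hy0
  have hQ : 0 ≤ (1-x)*(1-y) := mul_nonneg (by linarith) (by linarith)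
  have hm : 0 < 1-μ := by linarith
  have hR : 0 ≤ R := by
    have h1 : 0 ≤ x*y*(x+y-2*μ)^2 := by positivity
    have h2 : 0 ≤ (4*(1-μ))*R := by linarith
    exact nonneg_of_mul_nonneg_right h2 (by positivity)
  have hS : 4*((x*y)*((1-x)*(1-y))) ≤ (x*(1-x)+y*(1-y))^2 := by
    nlinarith [sq_nonneg (x*(1-x)-y*(1-y))]
  have e1 : μ*((1-x)*(1-y)) ≤ x*y+μ*(1-x-y) := by nlinarith
  have s1 : (1-μ)*(μ*((1-x)*(1-y)))*(x*(1-x)+y*(1-y))^2*R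
      ≤ (1-μ)*(x*y+μ*(1-x-y))*(x*(1-x)+y*(1-y))^2*R := by gcongr
  have s2 : μ*((1-x)*(1-y))*(x*(1-x)+y*(1-y))^2 * (x*y*(x+y-2*μ)^2)
      ≤ μ*((1-x)*(1-y))*(x*(1-x)+y*(1-y))^2 * (4*(1-μ)*R) := by
    apply mul_le_mul_of_nonneg_left (by linarith) (by positivity)
  have s3 : 4*((x*y)*((1-x)*(1-y))) * (μ*((1-x)*(1-y))*(x*y*(x+y-2*μ)^2))
      ≤ (x*(1-x)+y*(1-y))^2 * (μ*((1-x)*(1-y))*(x*y*(x+y-2*μ)^2)) :=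
    mul_le_mul_of_nonneg_right hS (by positivity)
  linarith [s1, s2, s3]

theorem good_symm (h : Good μ x y R) : Good μ y x R := by
  unfold Good at *
  convert h using 1 <;> ring

theorem reg1 (hμ0 : 0 < μ) (hμ1 : μ ≤ 3/128) (hx0 : 0 ≤ x) (hx1 : x ≤ 1) (hy0 : 0 ≤ y)
    (hy1 : y ≤ 1) : Good μ x y (13/500*(x*y)) := by
  have hP : 0 ≤ x*y := mul_nonneg hx0 hy0
  have hQ : 0 ≤ (1-x)*(1-y) := mul_nonneg (by linarith) (by linarith)
  have hm : 0 < 1-μ := by linarith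
  rcases le_total (2*μ) (x+y) with hs | hs
  · unfold Good
    have hd : 0 ≤ x+y-2*μ := by linarith
    have h1 : (1-x)*(1-y)*(x+y-2*μ) ≤ x*(1-x)+y*(1-y) := by
      have := mul_nonneg hP (by linarith : 0 ≤ 1 - x)
      have := mul_nonneg hP (by linarith : 0 ≤ 1 - y)
      nlinarith [mul_nonneg hQ hμ0.le]
    have h2 : ((1-x)*(1-y)*(x+y-2*μ))^2 ≤ (x*(1-x)+y*(1-y))^2 :=
      pow_le_pow_left₀ (by positivity) h1 2
    have e1 : (1-μ)*(x*y) ≤ x*y+μ*(1-x-y) := by nlinarith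
    have s1 : (1-μ)*((1-μ)*(x*y))*(x*(1-x)+y*(1-y))^2*(13/500*(x*y))
      ≤ (1-μ)*(x*y+μ*(1-x-y))*(x*(1-x)+y*(1-y))^2*(13/500*(x*y)) := by gcongr
    have e2 : μ ≤ 13/500*(1-μ)^2 := by nlinarith
    have s2 : ((x*y)^2*(x*(1-x)+y*(1-y))^2)*μ
        ≤ ((x*y)^2*(x*(1-x)+y*(1-y))^2)*(13/500*(1-μ)^2) :=
      mul_le_mul_of_nonneg_left e2 (by positivity)
    have s3 : ((x*y)^2*μ)*((1-x)*(1-y)*(x+y-2*μ))^2 ≤ ((x*y)^2*μ)*(x*(1-x)+y*(1-y))^2 :=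
      mul_le_mul_of_nonneg_left h2 (by positivity)
    linarith [s1, s2, s3]
  · apply good_B hμ0 (by linarith) hx0 hx1 hy0 hy1
    have h1 : (x+y-2*μ)^2 ≤ (2*μ)^2 := by
      apply sq_le_sq'
      · linarith
      · linarith
    have h2 : (2*μ)^2 ≤ 4*(1-μ)*(13/500) := by nlinarith
    have := mul_le_mul_of_nonneg_left (h1.trans h2) hP
    linarith

def Ta (μ x y : ℝ) : ℝ := x*y-7/20*((x-μ)*(y-μ)*(x+y-μ))

theorem reg2_G (hμ0 : 0 < μ) (hμ1 : μ ≤ 27/128) (hx0 : 0 ≤ x) (hx1 : x ≤ 1) (hy0 : 0 ≤ y)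
    (hy1 : y ≤ 1) (h : 0 ≤ (2*μ-(x+y))*((x+y)-7/10*μ)) : Good μ x y (13/500*Ta μ x y) := by
  have hP : 0 ≤ x*y := mul_nonneg hx0 hy0
  have hs : x+y ≤ 2*μ := by by_contra hc; nlinarith
  have hs' : 7/10*μ ≤ x+y := by by_contra hc; nlinarith
  have hT : (1-7/20*μ)*(x*y) ≤ Ta μ x y := by
    unfold Ta
    have : (x-μ)*(y-μ)*(x+y-μ) ≤ μ*(x*y) := by
      rcases le_total μ (x+y) with h1 | h1
      · rcases le_total 0 ((x-μ)*(y-μ)) with h2 | h2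
        · calc (x-μ)*(y-μ)*(x+y-μ) ≤ (x-μ)*(y-μ)*μ :=
                mul_le_mul_of_nonneg_left (by linarith) h2
            _ ≤ μ*(x*y) := by nlinarith [mul_nonneg (mul_nonneg hμ0.le hμ0.le) (by linarith : 0 ≤ x+y-μ)]
        · have := mul_nonneg (by linarith : 0 ≤ -((x-μ)*(y-μ))) (by linarith : 0 ≤ x+y-μ)
          have := mul_nonneg hμ0.le hP
          linarith
      · have h2 : 0 ≤ (μ-x)*(μ-y) := mul_nonneg (by linarith) (by linarith)
        have := mul_nonneg h2 (by linarith : 0 ≤ μ-(x+y))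
        have := mul_nonneg hμ0.le hP
        linarith
    linarith
  apply good_B hμ0 (by linarith) hx0 hx1 hy0 hy1
  have h1 : (x+y-2*μ)^2 ≤ (13/10*μ)^2 := by
    apply sq_le_sq' <;> linarith
  have h2 : (13/10*μ)^2 ≤ 4*(1-μ)*(13/500)*(1-7/20*μ) := by nlinarith
  have s1 := mul_le_mul_of_nonneg_left (h1.trans h2) hP
  have s2 := mul_le_mul_of_nonneg_left hT (by linarith : 0 ≤ 4*(1-μ)*(13/500))
  linarith


theorem cont_pt (F : ℝ → ℝ) (hF : Continuous F) (hy : 0 < y)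
    (h : ∀ t, 0 ≤ t → t < y → 0 ≤ F t) : 0 ≤ F y := by
  have hc : IsClosed (F ⁻¹' Set.Ici 0) := isClosed_Ici.preimage hF
  have hs : Set.Ico 0 y ⊆ F ⁻¹' Set.Ici 0 := fun t ht => h t ht.1 ht.2
  have := hc.closure_subset_iff.mpr hs
  rw [closure_Ico hy.ne] at this
  exact this ⟨hy.le, le_refl y⟩

theorem good_ext (R : ℝ → ℝ → ℝ) (hR : ∀ x y, R x y = R y x) (hc : ∀ y, Continuous fun x => R x y)
    (h : ∀ x y, 0 ≤ x → x < y → y ≤ 1 → Good μ x y (R x y))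
    (hx0 : 0 ≤ x) (hx1 : x ≤ 1) (hy0 : 0 ≤ y) (hy1 : y ≤ 1) : Good μ x y (R x y) := by
  rcases lt_trichotomy x y with hl | hl | hl
  · exact h x y hx0 hl hy1
  · subst hl
    rcases eq_or_lt_of_le hx0 with h1 | h1
    · subst h1; unfold Good; norm_num
    · have := cont_pt (fun t => (1-μ)*(t*x+μ*(1-t-x))*(t*(1-t)+x*(1-x))^2*R t x
        - t^2*x^2*((1-t)^2*(1-x)^2)*(t+x-2*μ)^2*μ) (by have := hc x; fun_prop) h1
        (fun t ht0 htx => by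
          have := h t x ht0 htx hx1
          unfold Good at this
          linarith)
      unfold Good
      linarith
  · rw [hR x y]; exact good_symm (h y x hy0 hl hx1)

theorem reg2 (hμ0 : 3/128 ≤ μ) (hμ1 : μ ≤ 27/128) (hx0 : 0 ≤ x) (hx1 : x ≤ 1) (hy0 : 0 ≤ y)
    (hy1 : y ≤ 1) : Good μ x y (13/500*Ta μ x y) := by
  have hm : 0 < μ := by linarith
  have hm1 : μ < 1 := by linarith
  refine good_ext (fun x y => 13/500*Ta μ x y) (fun x y => by simp only [Ta]; ring)
    (fun y => by simp only [Ta]; fun_prop) ?_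
    hx0 hx1 hy0 hy1
  clear hx0 hx1 hy0 hy1
  intro x y hx0 hxy hy1
  have hx1 : x ≤ 1 := by linarith
  have hy0 : 0 ≤ y := by linarith
  obtain ⟨p, hp, hev⟩ := runT_sound polys1 tree1 _ _ _ _ _ _ run1 (1024*μ) (128*x) (128*y)
    (by norm_num; linarith) (by norm_num; linarith) (by norm_num; linarith)
    (by norm_num; linarith) (by norm_num; linarith) (by norm_num; linarith)
  simp only [polys1, List.mem_cons, List.not_mem_nil, or_false] at hp
  rcases hp with rfl | rfl | rfl | rfl | rfl
  · rw [aO_ev] at hev; linarith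
  · rw [aG_ev] at hev
    exact reg2_G hm hμ1 hx0 hx1 hy0 hy1 (nonneg_of_mul_nonneg_right hev (by norm_num))
  · rw [aA_ev] at hev
    apply good_A hm hm1 hx0 hx1 hy0 hy1
    have := nonneg_of_mul_nonneg_right hev (by norm_num)
    unfold Ta; linarith
  · rw [aB_ev] at hev
    apply good_B hm hm1 hx0 hx1 hy0 hy1
    have := nonneg_of_mul_nonneg_right hev (by norm_num)
    unfold Ta; linarith
  · rw [aF_ev] at hev
    have := nonneg_of_mul_nonneg_right hev (by norm_num)
    unfold Good Ta; linarith

theorem reg3_c00 (hμ0 : 27/128 ≤ μ) (hμ1 : μ ≤ 1/2) : 0 ≤ Rb μ 0 0 := by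
  have : 0 ≤ 482/10000 - 2*(14/100*(1-2*μ)+93/1000*(1-2*μ)^2)*μ + 14/100*μ^3 := by
    have h1 : 0 ≤ (μ-27/128)*(1/2-μ) := mul_nonneg (by linarith) (by linarith)
    nlinarith [sq_nonneg (μ-1/4), sq_nonneg (μ-1/2)]
  have e : Rb μ 0 0 = μ^2*(482/10000 - 2*(14/100*(1-2*μ)+93/1000*(1-2*μ)^2)*μ + 14/100*μ^3) := by
    unfold Rb; ring
  rw [e]; positivity

theorem c01_aux (a b : ℝ) (ha : a ≤ μ) (hb : μ ≤ b)
    (hab : (a = 27/128 ∧ b = 7/25) ∨ (a = 7/25 ∧ b = 7/20) ∨ (a = 7/20 ∧ b = 21/50)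
      ∨ (a = 21/50 ∧ b = 1/2)) :
    0 ≤ 13/500*μ + (14/100*(1-2*μ)+93/1000*(1-2*μ)^2)*μ*(1-2*μ) - 222/10000*(1-μ)
      + 7/100*μ^2*(1-μ)*(1-2*μ) := by
  have u : 0 ≤ μ - a := by linarith
  have v : 0 ≤ b - μ := by linarith
  have t0 : 0 ≤ (b-μ)^4 := by positivity
  have t1 : 0 ≤ (μ-a)*(b-μ)^3 := by positivity
  have t2 : 0 ≤ (μ-a)^2*(b-μ)^2 := by positivity
  have t3 : 0 ≤ (μ-a)^3*(b-μ) := by positivity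
  have t4 : 0 ≤ (μ-a)^4 := by positivity
  rcases hab with ⟨rfl, rfl⟩ | ⟨rfl, rfl⟩ | ⟨rfl, rfl⟩ | ⟨rfl, rfl⟩ <;>
    linarith [t0, t1, t2, t3, t4]

theorem reg3_c01 (hμ0 : 27/128 ≤ μ) (hμ1 : μ ≤ 1/2) : 0 ≤ Rb μ 0 1 := by
  have : 0 ≤ 13/500*μ + (14/100*(1-2*μ)+93/1000*(1-2*μ)^2)*μ*(1-2*μ) - 222/10000*(1-μ)
      + 7/100*μ^2*(1-μ)*(1-2*μ) := by
    rcases le_total μ (7/25) with g1 | g1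
    · exact c01_aux _ _ hμ0 g1 (by norm_num)
    rcases le_total μ (7/20) with g2 | g2
    · exact c01_aux _ _ g1 g2 (by norm_num)
    rcases le_total μ (21/50) with g3 | g3
    · exact c01_aux _ _ g2 g3 (by norm_num)
    · exact c01_aux _ _ g3 hμ1 (by norm_num)
  have e : Rb μ 0 1 = μ*(13/500*μ + (14/100*(1-2*μ)+93/1000*(1-2*μ)^2)*μ*(1-2*μ)
      - 222/10000*(1-μ) + 7/100*μ^2*(1-μ)*(1-2*μ)) := by
    unfold Rb; ring
  rw [e]; exact mul_nonneg (by linarith) this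

theorem reg3_c11 (hμ0 : 27/128 ≤ μ) (hμ1 : μ ≤ 1/2) : 0 ≤ Rb μ 1 1 := by
  have e : Rb μ 1 1 = 13/500*μ^2 + (14/100*(1-2*μ)+93/1000*(1-2*μ)^2)*μ^2*(2*(1-μ))
      + (1-μ)^2*(222/10000 - 14/100*μ^2*(1-μ)) := by unfold Rb; ring
  have h1 : 0 ≤ 1-2*μ := by linarith
  have h2 : 0 ≤ 1-μ := by linarith
  have h3 : 0 ≤ 222/10000 - 14/100*μ^2*(1-μ) := by
    nlinarith [mul_nonneg (sq_nonneg μ) (by linarith : 0 ≤ 1/2-μ), mul_nonneg (by linarith : 0 ≤ μ) (by linarith : 0 ≤ 1/2-μ)]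
  rw [e]; positivity

theorem reg3 (hμ0 : 27/128 ≤ μ) (hμ1 : μ ≤ 1/2) (hx0 : 0 ≤ x) (hx1 : x ≤ 1) (hy0 : 0 ≤ y)
    (hy1 : y ≤ 1) : Good μ x y (Rb μ x y) := by
  have hm : 0 < μ := by linarith
  have hm1 : μ < 1 := by linarith
  refine good_ext (fun x y => Rb μ x y) (fun x y => by simp only [Rb]; ring)
    (fun y => by simp only [Rb]; fun_prop) ?_
    hx0 hx1 hy0 hy1
  clear hx0 hx1 hy0 hy1
  intro x y hx0 hxy hy1
  have hx1 : x ≤ 1 := by linarith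
  have hy0 : 0 ≤ y := by linarith
  obtain ⟨p, hp, hev⟩ := runT_sound polys2 tree2 _ _ _ _ _ _ run2 (512*μ) (8*x) (8*y)
    (by norm_num; linarith) (by norm_num; linarith) (by norm_num; linarith)
    (by norm_num; linarith) (by norm_num; linarith) (by norm_num; linarith)
  simp only [polys2, List.mem_cons, List.not_mem_nil, or_false] at hp
  rcases hp with rfl | rfl | rfl | rfl
  · rw [bO_ev] at hev; linarith
  · rw [bA_ev] at hev
    exact good_A hm hm1 hx0 hx1 hy0 hy1 (nonneg_of_mul_nonneg_right hev (by norm_num))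
  · rw [bB_ev] at hev
    exact good_B hm hm1 hx0 hx1 hy0 hy1 (nonneg_of_mul_nonneg_right hev (by norm_num))
  · rw [bF_ev] at hev
    have := nonneg_of_mul_nonneg_right hev (by norm_num)
    unfold Good; linarith
end

/-- certificate inequality -/
def Cert (μ α ω q : ℝ) : Prop :=
  (∀ x y : ℝ, (x = 0 ∨ x = 1) → (y = 0 ∨ y = 1) → 0 ≤ Rf α ω q μ x y) ∧
  ∀ x y : ℝ, 0 ≤ x → x ≤ 1 → 0 ≤ y → y ≤ 1 →
    x^2*y^2*((1-x)^2*(1-y)^2)*(x+y-2*μ)^2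
      ≤ μ*(1-μ)*(x*y+μ*(1-x-y))*(x*(1-x)+y*(1-y))^2*Rf α ω q μ x y

theorem cert_of_good {μ α ω q : ℝ} (hμ : 0 < μ) (R : ℝ → ℝ → ℝ)
    (hR : ∀ x y, R x y = μ^2 * Rf α ω q μ x y)
    (h00 : 0 ≤ R 0 0) (h01 : 0 ≤ R 0 1) (h11 : 0 ≤ R 1 1)
    (h : ∀ x y : ℝ, 0 ≤ x → x ≤ 1 → 0 ≤ y → y ≤ 1 → Good μ x y (R x y)) : Cert μ α ω q := by
  have hm : 0 < μ^2 := by positivity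
  rw [hR] at h00 h01 h11
  have h00' := nonneg_of_mul_nonneg_right h00 hm
  have h01' := nonneg_of_mul_nonneg_right h01 hm
  have h11' := nonneg_of_mul_nonneg_right h11 hm
  refine ⟨?_, ?_⟩
  · rintro x y (rfl | rfl) (rfl | rfl)
    · exact h00'
    · exact h01'
    · rw [Rf_symm]; exact h01'
    · exact h11'
  · intro x y hx0 hx1 hy0 hy1
    have h1 := h x y hx0 hx1 hy0 hy1
    unfold Good at h1
    rw [hR] at h1
    have h2 := mul_le_mul_of_nonneg_left h1 hμ.le
    refine le_of_mul_le_mul_left (a := μ^2) ?_ hm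
    linarith

theorem cert_half {μ : ℝ} (hμ0 : 0 < μ) (hμ1 : μ ≤ 1/2) : ∃ α ω q, Cert μ α ω q := by
  rcases le_total μ (3/128) with h1 | h1
  · refine ⟨13/500/μ, 13/500/μ^2, 0, cert_of_good hμ0 (fun x y => 13/500*(x*y)) ?_ ?_ ?_ ?_
      (fun x y hx0 hx1 hy0 hy1 => reg1 hμ0 h1 hx0 hx1 hy0 hy1)⟩
    · intro x y; unfold Rf; field_simp; ring
    all_goals norm_num
  rcases le_total μ (27/128) with h2 | h2
  · refine ⟨13/500/μ, 13/500/μ^2*(1-7/20*μ), 13/500*(7/20)/μ^2,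
      cert_of_good hμ0 (fun x y => 13/500*Ta μ x y) ?_ ?_ ?_ ?_
      (fun x y hx0 hx1 hy0 hy1 => reg2 h1 h2 hx0 hx1 hy0 hy1)⟩
    · intro x y; unfold Rf Ta; field_simp; ring
    · simp only [Ta]; ring_nf; positivity
    · have e : 13/500*Ta μ 0 1 = 13/500*(7/20)*(μ*((1-μ)*(1-μ))) := by unfold Ta; ring
      have : 0 ≤ 1-μ := by linarith
      simp only [e]; positivity
    · have e : 13/500*Ta μ 1 1 = 13/500*(1 - 7/20*((1-μ)^2*(2-μ))) := by unfold Ta; ring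
      have : (1-μ)^2*(2-μ) ≤ 1^2*2 := by
        apply mul_le_mul
        · apply pow_le_pow_left₀ <;> linarith
        · linarith
        · linarith
        · norm_num
      simp only [e]; linarith
  · refine ⟨14/100*(1-2*μ)+93/1000*(1-2*μ)^2, 222/10000/μ^2, 7/100,
      cert_of_good hμ0 (fun x y => Rb μ x y) ?_ (reg3_c00 h2 hμ1) (reg3_c01 h2 hμ1)
      (reg3_c11 h2 hμ1) (fun x y hx0 hx1 hy0 hy1 => reg3 h2 hμ1 hx0 hx1 hy0 hy1)⟩
    intro x y; unfold Rf Rb; field_simp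

theorem cert_all {μ : ℝ} (hμ0 : 0 < μ) (hμ1 : μ < 1) : ∃ α ω q, Cert μ α ω q := by
  rcases le_total μ (1/2) with h | h
  · exact cert_half hμ0 h
  · obtain ⟨α, ω, q, h1, h2⟩ := cert_half (μ := 1-μ) (by linarith) (by linarith)
    refine ⟨-α, ω, -q, ?_, ?_⟩
    · intro x y hx hy
      rw [Rf_flip]
      apply h1
      · rcases hx with rfl | rfl <;> norm_num
      · rcases hy with rfl | rfl <;> norm_num
    · intro x y hx0 hx1 hy0 hy1
      rw [Rf_flip]
      have := h2 (1-x) (1-y) (by linarith) (by linarith) (by linarith) (by linarith)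
      have e1 : (1-x)^2*(1-y)^2*((1-(1-x))^2*(1-(1-y))^2)*((1-x)+(1-y)-2*(1-μ))^2
        = x^2*y^2*((1-x)^2*(1-y)^2)*(x+y-2*μ)^2 := by ring
      have e2 : (1-μ)*(1-(1-μ))*((1-x)*(1-y)+(1-μ)*(1-(1-x)-(1-y)))
            *((1-x)*(1-(1-x))+(1-y)*(1-(1-y)))^2
          = μ*(1-μ)*(x*y+μ*(1-x-y))*(x*(1-x)+y*(1-y))^2 := by ring
      rw [e1, e2] at this
      exact this

theorem summand {μ α ω q : ℝ} (hμ0 : 0 < μ) (hμ1 : μ < 1) (hc : Cert μ α ω q) {x y : ℝ}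
    (hx0 : 0 ≤ x) (hx1 : x ≤ 1) (hy0 : 0 ≤ y) (hy1 : y ≤ 1) :
    ((1-x)*(1-y)/(1-μ) + x*y/μ) * (gB μ x y - favg x y)^2 ≤ Rf α ω q μ x y := by
  have hm : 0 < 1-μ := by linarith
  by_cases hcor : (x = 0 ∨ x = 1) ∧ (y = 0 ∨ y = 1)
  · have h0 := hc.1 x y hcor.1 hcor.2
    refine le_trans (le_of_eq ?_) h0
    obtain ⟨rfl | rfl, rfl | rfl⟩ := hcor
    · simp [gB, favg]
    · simp
    · simp
    · have : gB μ 1 1 = 1 := by unfold gB; field_simp; simp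
      simp [this, favg]
  · have hA : 0 ≤ x*(1-x) := mul_nonneg hx0 (by linarith)
    have hB : 0 ≤ y*(1-y) := mul_nonneg hy0 (by linarith)
    have hP : 0 ≤ x*y := mul_nonneg hx0 hy0
    have hQ : 0 ≤ (1-x)*(1-y) := mul_nonneg (by linarith) (by linarith)
    have key : 0 < x*(1-x) ∨ 0 < y*(1-y) := by
      by_contra hcon
      push Not at hcon
      apply hcor
      constructor
      · rcases mul_eq_zero.mp (le_antisymm hcon.1 hA) with h | h
        · left; exact h
        · right; linarith
      · rcases mul_eq_zero.mp (le_antisymm hcon.2 hB) with h | h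
        · left; exact h
        · right; linarith
    have hS : 0 < x*(1-x)+y*(1-y) := by rcases key with h | h <;> linarith
    have hPQ : 0 < x*y ∨ 0 < (1-x)*(1-y) := by
      by_contra hcon
      push Not at hcon
      have h1 := mul_eq_zero.mp (le_antisymm hcon.1 hP)
      have h2 := mul_eq_zero.mp (le_antisymm hcon.2 hQ)
      rcases h1 with h1 | h1 <;> rcases h2 with h2 | h2
      · rw [h1] at h2; norm_num at h2
      · exact hcor ⟨Or.inl h1, Or.inr (by linarith)⟩
      · exact hcor ⟨Or.inr (by linarith), Or.inl h1⟩
      · rw [h1] at h2; norm_num at h2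
    have hN : 0 < x*y+μ*(1-x-y) := by
      have e : x*y+μ*(1-x-y) = (1-μ)*(x*y) + μ*((1-x)*(1-y)) := by ring
      rw [e]
      have h1 := mul_nonneg hm.le hP
      have h2 := mul_nonneg hμ0.le hQ
      rcases hPQ with h | h
      · have := mul_pos hm h; linarith
      · have := mul_pos hμ0 h; linarith
    have hne : ¬ (x = 1 ∧ y = 1) := fun h => hcor ⟨Or.inr h.1, Or.inr h.2⟩
    have hfin := hc.2 x y hx0 hx1 hy0 hy1
    have ed1 : x*y*(1-μ) + (1-x)*(1-y)*μ = x*y+μ*(1-x-y) := by ring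
    have ed2 : x*y*(1-(x+y)/2) + (1-x)*(1-y)*((x+y)/2) = (x*(1-x)+y*(1-y))/2 := by ring
    have ediff : gB μ x y - favg x y
        = x*y*((1-x)*(1-y))*(x+y-2*μ)/((x*y+μ*(1-x-y))*(x*(1-x)+y*(1-y))) := by
      unfold favg
      rw [if_neg hne]
      unfold gB
      rw [ed1, ed2]
      rw [div_sub_div _ _ hN.ne' (by positivity), div_eq_div_iff (by positivity) (by positivity)]
      ring
    have ew : (1-x)*(1-y)/(1-μ) + x*y/μ = (x*y+μ*(1-x-y))/(μ*(1-μ)) := by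
      rw [div_add_div _ _ hm.ne' hμ0.ne', div_eq_div_iff (by positivity) (by positivity)]
      ring
    have etot : ((1-x)*(1-y)/(1-μ) + x*y/μ) * (gB μ x y - favg x y)^2
        = x^2*y^2*((1-x)^2*(1-y)^2)*(x+y-2*μ)^2
          / (μ*(1-μ)*(x*y+μ*(1-x-y))*(x*(1-x)+y*(1-y))^2) := by
      rw [ew, ediff, div_pow, div_mul_div_comm, div_eq_div_iff (by positivity) (by positivity)]
      ring
    rw [etot, div_le_iff₀ (by positivity)]
    linarith

/-- the relative loss of the average-prior scheme on every extreme
conditionally independent two-expert information structure is at most 0.026.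
(Summands whose probability factor vanishes are automatically zero since `0/0 = 0`.) -/
theorem stmt_6 (μ y₁ z₁ y₂ z₂ : ℝ)
    (hμ0 : 0 < μ) (hμ1 : μ < 1)
    (hy₁0 : 0 ≤ y₁) (hy₁ : y₁ ≤ μ) (hz₁ : μ ≤ z₁) (hz₁1 : z₁ ≤ 1) (h₁ : y₁ < z₁)
    (hy₂0 : 0 ≤ y₂) (hy₂ : y₂ ≤ μ) (hz₂ : μ ≤ z₂) (hz₂1 : z₂ ≤ 1) (h₂ : y₂ < z₂) :
    ((z₁-μ)/(z₁-y₁)) * ((z₂-μ)/(z₂-y₂)) * ((1-y₁)*(1-y₂)/(1-μ) + y₁*y₂/μ)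
        * (gB μ y₁ y₂ - favg y₁ y₂)^2
    + ((z₁-μ)/(z₁-y₁)) * ((μ-y₂)/(z₂-y₂)) * ((1-y₁)*(1-z₂)/(1-μ) + y₁*z₂/μ)
        * (gB μ y₁ z₂ - favg y₁ z₂)^2
    + ((μ-y₁)/(z₁-y₁)) * ((z₂-μ)/(z₂-y₂)) * ((1-z₁)*(1-y₂)/(1-μ) + z₁*y₂/μ)
        * (gB μ z₁ y₂ - favg z₁ y₂)^2
    + ((μ-y₁)/(z₁-y₁)) * ((μ-y₂)/(z₂-y₂)) * ((1-z₁)*(1-z₂)/(1-μ) + z₁*z₂/μ)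
        * (gB μ z₁ z₂ - favg z₁ z₂)^2
    ≤ 0.026 := by
  obtain ⟨α, ω, q, hc⟩ := cert_all hμ0 hμ1
  have d1 : 0 < z₁-y₁ := by linarith
  have d2 : 0 < z₂-y₂ := by linarith
  obtain ⟨p, hp⟩ : ∃ p, p = (z₁-μ)/(z₁-y₁) := ⟨_, rfl⟩
  obtain ⟨p', hp'⟩ : ∃ p, p = (μ-y₁)/(z₁-y₁) := ⟨_, rfl⟩
  obtain ⟨r, hr⟩ : ∃ p, p = (z₂-μ)/(z₂-y₂) := ⟨_, rfl⟩
  obtain ⟨r', hr'⟩ : ∃ p, p = (μ-y₂)/(z₂-y₂) := ⟨_, rfl⟩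
  have hp0 : 0 ≤ p := by rw [hp]; exact div_nonneg (by linarith) d1.le
  have hp0' : 0 ≤ p' := by rw [hp']; exact div_nonneg (by linarith) d1.le
  have hr0 : 0 ≤ r := by rw [hr]; exact div_nonneg (by linarith) d2.le
  have hr0' : 0 ≤ r' := by rw [hr']; exact div_nonneg (by linarith) d2.le
  have hps : p' = 1 - p := by rw [hp, hp']; field_simp; ring
  have hrs : r' = 1 - r := by rw [hr, hr']; field_simp; ring
  have hpm : μ = p*y₁ + (1-p)*z₁ := by rw [hp]; field_simp; ring
  have hrm : μ = r*y₂ + (1-r)*z₂ := by rw [hr]; field_simp; ring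
  rw [← hp, ← hp', ← hr, ← hr']
  have s1 := mul_le_mul_of_nonneg_left (summand hμ0 hμ1 hc hy₁0 (by linarith) hy₂0 (by linarith))
    (mul_nonneg hp0 hr0)
  have s2 := mul_le_mul_of_nonneg_left
    (summand hμ0 hμ1 hc hy₁0 (by linarith) (by linarith : 0 ≤ z₂) hz₂1) (mul_nonneg hp0 hr0')
  have s3 := mul_le_mul_of_nonneg_left
    (summand hμ0 hμ1 hc (by linarith : 0 ≤ z₁) hz₁1 hy₂0 (by linarith)) (mul_nonneg hp0' hr0)
  have s4 := mul_le_mul_of_nonneg_left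
    (summand hμ0 hμ1 hc (by linarith : 0 ≤ z₁) hz₁1 (by linarith : 0 ≤ z₂) hz₂1)
    (mul_nonneg hp0' hr0')
  have m1 : p*(y₁-μ) + p'*(z₁-μ) = 0 := by rw [hps]; linarith
  have m2 : r*(y₂-μ) + r'*(z₂-μ) = 0 := by rw [hrs]; linarith
  have hp1 : p + p' = 1 := by linarith
  have hr1 : r + r' = 1 := by linarith
  have etot : p*r*Rf α ω q μ y₁ y₂ + p*r'*Rf α ω q μ y₁ z₂ + p'*r*Rf α ω q μ z₁ y₂
      + p'*r'*Rf α ω q μ z₁ z₂ = 13/500 := by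
    have e : p*r*Rf α ω q μ y₁ y₂ + p*r'*Rf α ω q μ y₁ z₂ + p'*r*Rf α ω q μ z₁ y₂
        + p'*r'*Rf α ω q μ z₁ z₂
      = 13/500*((p+p')*(r+r')) + α*((p*(y₁-μ) + p'*(z₁-μ))*(r+r')
          + (p+p')*(r*(y₂-μ) + r'*(z₂-μ)))
        + ω*((p*(y₁-μ) + p'*(z₁-μ))*(r*(y₂-μ) + r'*(z₂-μ)))
        - q*((p*(y₁-μ)^2 + p'*(z₁-μ)^2)*(r*(y₂-μ) + r'*(z₂-μ))
          + (p*(y₁-μ) + p'*(z₁-μ))*(r*(y₂-μ)^2 + r'*(z₂-μ)^2)) := by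
      unfold Rf; ring
    rw [e, m1, m2, hp1, hr1]; ring
  norm_num only
  linarith
end
end

section
/- Define g(μ, x₁, x₂) = x₁x₂(1−μ) / (x₁x₂(1−μ) + (1−x₁)(1−x₂)μ), ep(x₁,x₂) = 0.49x₁ + 0.49x₂ if x₁ + x₂ ≤ 1 and ep(x₁,x₂) = 0.49x₁ + 0.49x₂ + 0.02 otherwise, and f(x₁,x₂) = g(ep(x₁,x₂), x₁, x₂). For all real numbers μ, y₁, z₁, y₂, z₂ with 0 < μ < 1 and 0 ≤ y_i ≤ μ ≤ z_i ≤ 1 and y_i < z_i for i = 1, 2, the quantity Σ_{v₁ ∈ {y₁,z₁}} Σ_{v₂ ∈ {y₂,z₂}} p₁(v₁)·p₂(v₂)·( (1−v₁)(1−v₂)/(1−μ) + v₁v₂/μ )·( g(μ, v₁, v₂) − f(v₁, v₂) )² is at most 0.025, where p_i(y_i) = (z_i − μ)/(z_i − y_i) and p_i(z_i) = (μ − y_i)/(z_i − y_i), and any summand whose factor ((1−v₁)(1−v₂)/(1−μ) + v₁v₂/μ)·p₁(v₁)·p₂(v₂) is zero is taken to be zero. -/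
noncomputable section

/-- The modified dummy prior `ep`. -/
def ep (x₁ x₂ : ℝ) : ℝ :=
  if x₁ + x₂ ≤ 1 then 0.49 * x₁ + 0.49 * x₂ else 0.49 * x₁ + 0.49 * x₂ + 0.02

/-- The modified average-prior aggregation scheme `f(x₁,x₂) = g(ep(x₁,x₂), x₁, x₂)`
(with the natural value `1` at the singular point `(1,1)`). -/
def fmod (x₁ x₂ : ℝ) : ℝ :=
  if x₁ = 1 ∧ x₂ = 1 then 1 else gB (ep x₁ x₂) x₁ x₂


/-! ### A small reflective checker for nonnegativity of polynomials in three variables on boxes -/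

namespace Pf

def ladd {α : Type} (f : α → α → α) : List α → List α → List α
  | [], m => m
  | a :: l, [] => a :: l
  | a :: l, b :: m => f a b :: ladd f l m

def lmul {α : Type} (f g : α → α → α) (z : α) : List α → List α → List α
  | [], _ => []
  | a :: l, m => ladd f (m.map (g a)) (z :: lmul f g z l m)

def pev {α : Type} (ev : α → ℝ) (x : ℝ) : List α → ℝ
  | [] => 0
  | a :: l => ev a + x * pev ev x l

section
variable {α : Type} (ev : α → ℝ) (f g : α → α → α) (sm : ℤ → α → α) (z : α)

theorem pev_ladd (hf : ∀ a b, ev (f a b) = ev a + ev b) (x : ℝ) :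
    ∀ l m, pev ev x (ladd f l m) = pev ev x l + pev ev x m
  | [], m => by simp [ladd, pev]
  | a :: l, [] => by simp [ladd, pev]
  | a :: l, b :: m => by
      simp only [ladd, pev, hf, pev_ladd hf x l m]; ring

theorem pev_map (h : α → α) (c : ℝ) (hh : ∀ a, ev (h a) = c * ev a) (x : ℝ) :
    ∀ l, pev ev x (l.map h) = c * pev ev x l
  | [] => by simp [pev]
  | a :: l => by simp only [List.map, pev, hh, pev_map h c hh x l]; ring

theorem pev_lmul (hf : ∀ a b, ev (f a b) = ev a + ev b) (hg : ∀ a b, ev (g a b) = ev a * ev b)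
    (hz : ev z = 0) (x : ℝ) :
    ∀ l m, pev ev x (lmul f g z l m) = pev ev x l * pev ev x m
  | [], m => by simp [lmul, pev]
  | a :: l, m => by
      simp only [lmul, pev, pev_ladd ev f hf, pev_map ev (g a) (ev a) (hg a), hz,
        pev_lmul hf hg hz x l m]; ring

end

abbrev P1 := List ℤ
abbrev P2 := List P1
abbrev P3 := List P2

def sm1 (d : ℤ) (l : P1) : P1 := l.map (fun a => d * a)
def sm2 (d : ℤ) (l : P2) : P2 := l.map (sm1 d)
def sm3 (d : ℤ) (l : P3) : P3 := l.map (sm2 d)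
def add1 : P1 → P1 → P1 := ladd Int.add
def add2 : P2 → P2 → P2 := ladd add1
def add3 : P3 → P3 → P3 := ladd add2
def mul1 : P1 → P1 → P1 := lmul Int.add Int.mul 0
def mul2 : P2 → P2 → P2 := lmul add1 mul1 []
def mul3 : P3 → P3 → P3 := lmul add2 mul2 []

def ev0 (a : ℤ) : ℝ := a
def ev1 (z : ℝ) : P1 → ℝ := pev ev0 z
def ev2 (y z : ℝ) : P2 → ℝ := pev (ev1 z) y
def ev3 (x y z : ℝ) : P3 → ℝ := pev (ev2 y z) x

theorem ev0_add (a b : ℤ) : ev0 (Int.add a b) = ev0 a + ev0 b := by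
  show ((a + b : ℤ) : ℝ) = a + b
  push_cast; ring
theorem ev0_mul (a b : ℤ) : ev0 (Int.mul a b) = ev0 a * ev0 b := by
  show ((a * b : ℤ) : ℝ) = a * b
  push_cast; ring
theorem ev0_sm (a b : ℤ) : ev0 (Int.mul a b) = a * ev0 b := ev0_mul a b
theorem ev1_add (z : ℝ) (a b : P1) : ev1 z (add1 a b) = ev1 z a + ev1 z b :=
  pev_ladd _ _ ev0_add _ _ _
theorem ev1_mul (z : ℝ) (a b : P1) : ev1 z (mul1 a b) = ev1 z a * ev1 z b :=
  pev_lmul _ _ _ _ ev0_add ev0_mul (by simp [ev0]) _ _ _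
theorem ev1_sm (z : ℝ) (d : ℤ) (a : P1) : ev1 z (sm1 d a) = d * ev1 z a :=
  pev_map _ _ _ (ev0_sm d) _ _
theorem ev2_add (y z : ℝ) (a b : P2) : ev2 y z (add2 a b) = ev2 y z a + ev2 y z b :=
  pev_ladd _ _ (ev1_add z) _ _ _
theorem ev2_mul (y z : ℝ) (a b : P2) : ev2 y z (mul2 a b) = ev2 y z a * ev2 y z b :=
  pev_lmul _ _ _ _ (ev1_add z) (ev1_mul z) (by simp [ev1, pev]) _ _ _
theorem ev2_sm (y z : ℝ) (d : ℤ) (a : P2) : ev2 y z (sm2 d a) = d * ev2 y z a :=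
  pev_map _ _ _ (ev1_sm z d) _ _
theorem ev3_add (x y z : ℝ) (a b : P3) : ev3 x y z (add3 a b) = ev3 x y z a + ev3 x y z b :=
  pev_ladd _ _ (ev2_add y z) _ _ _
theorem ev3_mul (x y z : ℝ) (a b : P3) : ev3 x y z (mul3 a b) = ev3 x y z a * ev3 x y z b :=
  pev_lmul _ _ _ _ (ev2_add y z) (ev2_mul y z) (by simp [ev2, pev]) _ _ _
theorem ev3_sm (x y z : ℝ) (d : ℤ) (a : P3) : ev3 x y z (sm3 d a) = d * ev3 x y z a :=
  pev_map _ _ _ (ev2_sm y z d) _ _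

/-- Subdivision trees. -/
inductive Tr
  | L : Tr
  | X : Tr → Tr → Tr
  | Y : Tr → Tr → Tr
  | Z : Tr → Tr → Tr

end Pf

/-! ### Homogeneous (Bernstein type) tensors over `ℕ`, and subdivision -/

namespace Hb

section defs
variable {α β : Type}

noncomputable def zadd (f : α → α → α) (l : List α) : List α → List α :=
  @List.rec α (fun _ => List α → List α) (fun m => m)
    (fun a _ ih m => @List.rec α (fun _ => List α) [] (fun b m' _ => f a b :: ih m') m) l
noncomputable def go1 (f : α → α → α) (r : List α) : α → List α :=
  @List.rec α (fun _ => α → List α) (fun p => [p]) (fun b _ ih p => f p b :: ih b) r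
noncomputable def sh1 (f : α → α → α) (l : List α) : List α :=
  @List.rec α (fun _ => List α) [] (fun a _ ih => go1 f ih a) l
noncomputable def lmap (f : α → β) (l : List α) : List β :=
  @List.rec α (fun _ => List β) [] (fun a _ ih => f a :: ih) l
noncomputable def lall (f : α → Bool) (l : List α) : Bool :=
  @List.rec α (fun _ => Bool) true (fun a _ ih => @Bool.rec (fun _ => Bool) false ih (f a)) l
noncomputable def rv (l : List α) : List α → List α :=
  @List.rec α (fun _ => List α → List α) (fun acc => acc) (fun a _ ih acc => ih (a :: acc)) l
noncomputable def scl (sm : ℕ → α → α) (l : List α) : ℕ → List α :=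
  @List.rec α (fun _ => ℕ → List α) (fun _ => []) (fun a _ ih c => sm c a :: ih (Nat.mul 2 c)) l
noncomputable def cv (z : β) (h : α → β) (n : ℕ) : List α → List β :=
  @Nat.rec (fun _ => List α → List β)
    (fun l => @List.rec α (fun _ => List β) [z] (fun a _ _ => [h a]) l)
    (fun _ ih l => @List.rec α (fun _ => List β) (z :: ih []) (fun a l' _ => h a :: ih l') l) n
/-- length at most `n + 1` -/
noncomputable def lok (h : α → Bool) (n : ℕ) : List α → Bool :=
  @Nat.rec (fun _ => List α → Bool)
    (fun l => @List.rec α (fun _ => Bool) true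
      (fun a l' _ => @Bool.rec (fun _ => Bool) false
        (@List.rec α (fun _ => Bool) true (fun _ _ _ => false) l') (h a)) l)
    (fun _ ih l => @List.rec α (fun _ => Bool) true
      (fun a l' _ => @Bool.rec (fun _ => Bool) false (ih l') (h a)) l) n

noncomputable def sR (f : α → α → α) (sm : ℕ → α → α) (l : List α) : List α := scl sm (sh1 f l) 1
noncomputable def sL (f : α → α → α) (sm : ℕ → α → α) (l : List α) : List α :=
  rv (scl sm (sh1 f (rv l [])) 1) []
noncomputable def s0 (f : α → α → α) (l : List α) : List α := rv (sh1 f (rv l [])) []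
end defs

/-- `HR R x w n l r`: the list `l` of `n + 1` coefficients represents a homogeneous polynomial
with value `r` at `(x, w)`. -/
inductive HR {α : Type} (R : α → ℝ → Prop) (x w : ℝ) : ℕ → List α → ℝ → Prop
  | one (a : α) (r : ℝ) (h : R a r) : HR R x w 0 [a] r
  | cons (n : ℕ) (a : α) (l : List α) (r s : ℝ) (h : R a r) (h' : HR R x w n l s) :
      HR R x w (n + 1) (a :: l) (r * w ^ (n + 1) + x * s)

structure Lin {α : Type} (R : α → ℝ → Prop) (f : α → α → α) (sm : ℕ → α → α) : Prop where
  add : ∀ a b r s, R a r → R b s → R (f a b) (r + s)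
  sm : ∀ (c : ℕ) a r, R a r → R (sm c a) (c * r)

section
variable {α β : Type} {R : α → ℝ → Prop} {R' : β → ℝ → Prop} {f : α → α → α} {sm : ℕ → α → α} {x w : ℝ}

theorem HR.cast {n : ℕ} {l : List α} {r s : ℝ} (h : HR R x w n l r) (e : r = s) :
    HR R x w n l s := e ▸ h

theorem HR.zadd (hl : Lin R f sm) {n : ℕ} {l : List α} {r : ℝ} (h : HR R x w n l r) :
    ∀ {m : List α} {s : ℝ}, HR R x w n m s → HR R x w n (zadd f l m) (r + s) := by
  induction h with
  | one a r h =>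
    intro m s h2
    cases h2 with
    | one b s h2 => exact .one _ _ (hl.add _ _ _ _ h h2)
  | cons n a l r s h h' ih =>
    intro m s' h2
    cases h2 with
    | cons _ b m r2 s2 h2 h2' =>
      exact (HR.cons n _ _ _ _ (hl.add _ _ _ _ h h2) (ih h2')).cast (by ring)

theorem HR.map (g : α → β) (hg : ∀ a r, R a r → R' (g a) r) {n : ℕ} {l : List α} {r : ℝ}
    (h : HR R x w n l r) : HR R' x w n (lmap g l) r := by
  induction h with
  | one a r h => exact .one _ _ (hg _ _ h)
  | cons n a l r s h h' ih => exact .cons n _ _ _ _ (hg _ _ h) ih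

theorem HR.smul (g : α → α) (c : ℝ) (hg : ∀ a r, R a r → R (g a) (c * r)) {n : ℕ} {l : List α}
    {r : ℝ} (h : HR R x w n l r) : HR R x w n (lmap g l) (c * r) := by
  induction h with
  | one a r h => exact .one _ _ (hg _ _ h)
  | cons n a l r s h h' ih => exact (HR.cons n _ _ _ _ (hg _ _ h) ih).cast (by ring)

theorem Lin.HR (hl : Lin R f sm) (n : ℕ) :
    Lin (HR R x w n) (zadd f) (fun c => lmap (sm c)) where
  add _ _ _ _ h1 h2 := h1.zadd hl h2
  sm c _ _ h := h.smul _ _ (hl.sm c)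

theorem HR.go1 (hl : Lin R f sm) {n : ℕ} {l : List α} {s : ℝ} (h : HR R x w n l s) :
    ∀ {p : α} {r : ℝ}, R p r → HR R x w (n + 1) (go1 f l p) (r * w ^ (n + 1) + (x + w) * s) := by
  induction h with
  | one a r h =>
    intro p r' hp
    exact (HR.cons 0 _ _ _ _ (hl.add _ _ _ _ hp h) (.one _ _ h)).cast (by ring)
  | cons n a l r s h h' ih =>
    intro p r' hp
    exact (HR.cons (n + 1) _ _ _ _ (hl.add _ _ _ _ hp h) (ih h)).cast (by ring)

theorem HR.sh1 (hl : Lin R f sm) {n : ℕ} {l : List α} {r : ℝ} (h : HR R (x + w) w n l r) :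
    HR R x w n (sh1 f l) r := by
  induction h with
  | one a r h => exact .one _ _ h
  | cons n a l r s h h' ih => exact ih.go1 hl h

theorem HR.scl (hl : Lin R f sm) {n : ℕ} {l : List α} {r : ℝ} (h : HR R (2 * x) w n l r) :
    ∀ c : ℕ, HR R x w n (scl sm l c) (c * r) := by
  induction h with
  | one a r h => intro c; exact .one _ _ (hl.sm c _ _ h)
  | cons n a l r s h h' ih =>
    intro c
    refine (HR.cons n _ _ _ _ (hl.sm c _ _ h) (ih (Nat.mul 2 c))).cast ?_
    have : ((Nat.mul 2 c : ℕ) : ℝ) = 2 * c := by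
      show ((2 * c : ℕ) : ℝ) = 2 * c
      push_cast; ring
    rw [this]; ring

theorem rv_eq (l : List α) : ∀ m, rv l m = l.reverse ++ m := by
  induction l with
  | nil => intro m; rfl
  | cons a l ih => intro m; exact (ih (a :: m)).trans (by simp)

theorem HR.snoc {n : ℕ} {l : List α} {s : ℝ} (h : HR R x w n l s) {a : α} {r : ℝ} (ha : R a r) :
    HR R x w (n + 1) (l ++ [a]) (w * s + r * x ^ (n + 1)) := by
  induction h with
  | one b r' h => exact (HR.cons 0 _ _ _ _ h (.one _ _ ha)).cast (by ring)
  | cons n b l r' s h h' ih => exact (HR.cons (n + 1) _ _ _ _ h ih).cast (by ring)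

theorem HR.rv {n : ℕ} {l : List α} {r : ℝ} (h : HR R x w n l r) :
    HR R w x n (rv l []) r := by
  rw [rv_eq, List.append_nil]
  induction h with
  | one a r h => exact .one _ _ h
  | cons n a l r s h h' ih =>
    rw [List.reverse_cons]
    exact (ih.snoc h).cast (by ring)

theorem HR.sR (hl : Lin R f sm) {n : ℕ} {l : List α} {r : ℝ} (h : HR R x w n l r) :
    HR R ((x - w) / 2) w n (sR f sm l) r := by
  have h1 : HR R (2 * ((x - w) / 2) + w) w n l r := by
    rw [show 2 * ((x - w) / 2) + w = x by ring]; exact h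
  exact ((h1.sh1 hl).scl hl 1).cast (by simp)

theorem HR.sL (hl : Lin R f sm) {n : ℕ} {l : List α} {r : ℝ} (h : HR R x w n l r) :
    HR R x ((w - x) / 2) n (sL f sm l) r := (h.rv.sR hl).rv

theorem HR.s0 (hl : Lin R f sm) {n : ℕ} {l : List α} {r : ℝ} (h : HR R x w n l r) :
    HR R x (w - x) n (s0 f l) r := by
  have h1 : HR R ((w - x) + x) x n (Hb.rv l []) r := by
    rw [show (w - x) + x = w by ring]; exact h.rv
  exact (h1.sh1 hl).rv

theorem HR.nonneg (g : α → Bool) (hg : ∀ a r, g a = true → R a r → 0 ≤ r) (hx : 0 ≤ x) (hw : 0 ≤ w)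
    {n : ℕ} {l : List α} {r : ℝ} (h : HR R x w n l r) : lall g l = true → 0 ≤ r := by
  induction h with
  | one a r h =>
    intro hh
    refine hg a r ?_ h
    change @Bool.rec (fun _ => Bool) false _ (g a) = true at hh
    cases hga : g a
    · rw [hga] at hh; exact hh
    · rfl
  | cons n a l r s h h' ih =>
    intro hh
    change @Bool.rec (fun _ => Bool) false (lall g l) (g a) = true at hh
    cases hga : g a
    · rw [hga] at hh; exact absurd hh (by simp)
    · rw [hga] at hh
      have h1 := ih hh
      have h2 := hg a r hga h
      positivity

theorem cv_sound (z : β) (h : α → β) (k : α → Bool) (ev : α → ℝ) (hz : R' z 0)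
    (hh : ∀ a, k a = true → R' (h a) (ev a)) (x : ℝ) :
    ∀ n l, lok k n l = true → HR R' x 1 n (cv z h n l) (Pf.pev ev x l) := by
  intro n
  induction n with
  | zero =>
    intro l hl
    match l, hl with
    | [], _ => exact .one _ _ hz
    | [a], hl =>
      have hk : k a = true := by
        change @Bool.rec (fun _ => Bool) false true (k a) = true at hl
        cases hga : k a
        · rw [hga] at hl; exact hl
        · rfl
      exact (HR.one _ _ (hh a hk)).cast (by simp [Pf.pev])
    | a :: b :: l, hl =>
      exfalso
      change @Bool.rec (fun _ => Bool) false false (k a) = true at hl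
      cases hga : k a <;> rw [hga] at hl <;> simp at hl
  | succ n ih =>
    intro l hl
    match l, hl with
    | [], _ =>
      have h0 : lok k n [] = true := by cases n <;> rfl
      exact (HR.cons n _ _ _ _ hz (ih [] h0)).cast (by simp [Pf.pev])
    | a :: l, hl =>
      change @Bool.rec (fun _ => Bool) false (lok k n l) (k a) = true at hl
      cases hga : k a
      · rw [hga] at hl; exact absurd hl (by simp)
      · rw [hga] at hl
        exact (HR.cons n _ _ _ _ (hh a hga) (ih l hl)).cast (by simp [Pf.pev])
end

noncomputable def K : ℕ := Nat.pow (Nat.pow 2 200) 3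

theorem K_pos : 0 < K := Nat.pow_pos (Nat.pow_pos (show 0 < 2 by norm_num))

attribute [irreducible] K

def R0 (v : ℕ) (r : ℝ) : Prop := ∃ P N : ℕ, v = P + K * N ∧ r = P - N

theorem lin0 : Lin R0 Nat.add Nat.mul where
  add := by
    rintro a b r s ⟨P, N, rfl, rfl⟩ ⟨P', N', rfl, rfl⟩
    refine ⟨P + P', N + N', ?_, by push_cast; ring⟩
    show (P + K * N) + (P' + K * N') = _
    ring
  sm := by
    rintro c a r ⟨P, N, rfl, rfl⟩
    refine ⟨c * P, c * N, ?_, by push_cast; ring⟩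
    show c * (P + K * N) = _
    ring

noncomputable def n0 (v : ℕ) : Bool := Nat.ble (Nat.div v K) (Nat.mod v K)

theorem n0_sound (v : ℕ) (r : ℝ) (h : n0 v = true) (hr : R0 v r) : 0 ≤ r := by
  obtain ⟨P, N, rfl, rfl⟩ := hr
  have h1 : (P + K * N) / K ≤ (P + K * N) % K := Nat.le_of_ble_eq_true h
  rw [Nat.add_mul_div_left _ _ K_pos, Nat.add_mul_mod_self_left] at h1
  have h2 : N ≤ P := by
    have := Nat.mod_le P K
    have := Nat.zero_le (P / K)
    omega
  have : (N : ℝ) ≤ P := by exact_mod_cast h2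
  linarith

abbrev T1 := List ℕ
abbrev T2 := List T1
abbrev T3 := List T2

noncomputable def add1 : T1 → T1 → T1 := zadd Nat.add
noncomputable def add2 : T2 → T2 → T2 := zadd add1
noncomputable def sm1 (c : ℕ) : T1 → T1 := lmap (Nat.mul c)
noncomputable def sm2 (c : ℕ) : T2 → T2 := lmap (sm1 c)

noncomputable def chk (t : Pf.Tr) : T3 → Bool :=
  @Pf.Tr.rec (fun _ => T3 → Bool)
    (lall (lall (lall n0)))
    (fun _ _ i j p => @Bool.rec (fun _ => Bool) false (j (sR add2 sm2 p)) (i (sL add2 sm2 p)))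
    (fun _ _ i j p => @Bool.rec (fun _ => Bool) false (j (lmap (sR add1 sm1) p))
      (i (lmap (sL add1 sm1) p)))
    (fun _ _ i j p => @Bool.rec (fun _ => Bool) false (j (lmap (lmap (sR Nat.add Nat.mul)) p))
      (i (lmap (lmap (sL Nat.add Nat.mul)) p))) t

def R3 (n0 n1 n2 : ℕ) (x x' y y' z z' : ℝ) : T3 → ℝ → Prop :=
  HR (HR (HR R0 z z' n2) y y' n1) x x' n0

theorem band {a b : Bool} (h : @Bool.rec (fun _ => Bool) false b a = true) :
    a = true ∧ b = true := by
  cases a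
  · exact absurd h (by simp)
  · exact ⟨rfl, h⟩

theorem chk_sound (t : Pf.Tr) (a b c : ℕ) : ∀ (p : T3), chk t p = true →
    ∀ x x' y y' z z' : ℝ, 0 ≤ x → 0 ≤ x' → 0 ≤ y → 0 ≤ y' → 0 ≤ z → 0 ≤ z' →
    ∀ r, R3 a b c x x' y y' z z' p r → 0 ≤ r := by
  have l1 : ∀ z z', Lin (HR R0 z z' c) add1 sm1 := fun z z' => lin0.HR c
  have l2 : ∀ y y' z z', Lin (HR (HR R0 z z' c) y y' b) add2 sm2 :=
    fun y y' z z' => (l1 z z').HR b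
  induction t with
  | L =>
    intro p h x x' y y' z z' hx hx' hy hy' hz hz' r hr
    have e1 : ∀ l r, lall n0 l = true → HR R0 z z' c l r → 0 ≤ r :=
      fun _ _ h1 h2 => HR.nonneg n0 n0_sound hz hz' h2 h1
    have e2 : ∀ l r, lall (lall n0) l = true → HR (HR R0 z z' c) y y' b l r → 0 ≤ r :=
      fun _ _ h1 h2 => HR.nonneg (lall n0) e1 hy hy' h2 h1
    exact HR.nonneg (lall (lall n0)) e2 hx hx' hr h
  | X i j hi hj =>
    intro p h x x' y y' z z' hx hx' hy hy' hz hz' r hr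
    obtain ⟨h1, h2⟩ := band h
    rcases le_total x x' with hh | hh
    · exact hi _ h1 x ((x' - x) / 2) y y' z z' hx (by linarith) hy hy' hz hz' r (hr.sL (l2 _ _ _ _))
    · exact hj _ h2 ((x - x') / 2) x' y y' z z' (by linarith) hx' hy hy' hz hz' r
        (hr.sR (l2 _ _ _ _))
  | Y i j hi hj =>
    intro p h x x' y y' z z' hx hx' hy hy' hz hz' r hr
    obtain ⟨h1, h2⟩ := band h
    rcases le_total y y' with hh | hh
    · exact hi _ h1 x x' y ((y' - y) / 2) z z' hx hx' hy (by linarith) hz hz' r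
        (hr.map _ fun _ _ h => h.sL (l1 _ _))
    · exact hj _ h2 x x' ((y - y') / 2) y' z z' hx hx' (by linarith) hy' hz hz' r
        (hr.map _ fun _ _ h => h.sR (l1 _ _))
  | Z i j hi hj =>
    intro p h x x' y y' z z' hx hx' hy hy' hz hz' r hr
    obtain ⟨h1, h2⟩ := band h
    rcases le_total z z' with hh | hh
    · exact hi _ h1 x x' y y' z ((z' - z) / 2) hx hx' hy hy' hz (by linarith) r
        (hr.map _ fun _ _ h => h.map _ fun _ _ h => h.sL lin0)
    · exact hj _ h2 x x' y y' ((z - z') / 2) z' hx hx' hy hy' (by linarith) hz' r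
        (hr.map _ fun _ _ h => h.map _ fun _ _ h => h.sR lin0)

noncomputable def pk (i : ℤ) : ℕ :=
  @Int.rec (fun _ => ℕ) (fun n => n) (fun n => Nat.mul K (Nat.succ n)) i

theorem pk_sound : ∀ i : ℤ, R0 (pk i) (Pf.ev0 i)
  | .ofNat n => ⟨n, 0, by simp [pk], by simp [Pf.ev0]⟩
  | .negSucc n => ⟨0, n + 1, by
      show K * (n + 1) = _
      simp, by simp [Pf.ev0, Int.negSucc_eq]⟩

noncomputable def ini (a b c : ℕ) (p : Pf.P3) : T3 :=
  s0 add2 (lmap (s0 add1) (lmap (lmap (s0 Nat.add))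
    (cv (cv (cv 0 pk c []) (cv 0 pk c) b []) (cv (cv 0 pk c []) (cv 0 pk c) b) a p)))

noncomputable def top (a b c : ℕ) (t : Pf.Tr) (p : Pf.P3) : Bool :=
  @Bool.rec (fun _ => Bool) false (chk t (ini a b c p))
    (lok (lok (lok (fun _ => true) c) b) a p)

theorem lok_nil {α : Type} (k : α → Bool) (n : ℕ) : lok k n [] = true := by cases n <;> rfl

theorem top_sound (a b c : ℕ) (t : Pf.Tr) (p : Pf.P3) (h : top a b c t p = true) (x y z : ℝ)
    (hx : 0 ≤ x) (hx1 : x ≤ 1) (hy : 0 ≤ y) (hy1 : y ≤ 1) (hz : 0 ≤ z) (hz1 : z ≤ 1) :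
    0 ≤ Pf.ev3 x y z p := by
  obtain ⟨h1, h2⟩ := band h
  have c1 : ∀ l, lok (fun _ => true) c l = true → HR R0 z 1 c (cv 0 pk c l) (Pf.ev1 z l) :=
    fun l hl => cv_sound 0 pk _ Pf.ev0 ⟨0, 0, by simp, by simp⟩ (fun a _ => pk_sound a) z c l hl
  have c2 : ∀ l, lok (lok (fun _ => true) c) b l = true →
      HR (HR R0 z 1 c) y 1 b (cv (cv 0 pk c []) (cv 0 pk c) b l) (Pf.ev2 y z l) :=
    fun l hl => cv_sound _ _ _ (Pf.ev1 z) (c1 [] (lok_nil _ _)) c1 y b l hl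
  have c3 := cv_sound (R' := HR (HR R0 z 1 c) y 1 b) _ _ _ (Pf.ev2 y z) (c2 [] (lok_nil _ _)) c2
    x a p h1
  have l1 : ∀ z z', Lin (HR R0 z z' c) add1 sm1 := fun z z' => lin0.HR c
  have l2 : ∀ y y' z z', Lin (HR (HR R0 z z' c) y y' b) add2 sm2 :=
    fun y y' z z' => (l1 z z').HR b
  have d1 := c3.map (R' := HR (HR R0 z (1 - z) c) y 1 b) (lmap (s0 Nat.add))
    (fun _ _ h => h.map _ fun _ _ h => h.s0 lin0)
  have d2 := d1.map (R' := HR (HR R0 z (1 - z) c) y (1 - y) b) (s0 add1)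
    (fun _ _ h => h.s0 (l1 _ _))
  have d3 := d2.s0 (l2 _ _ _ _)
  exact chk_sound t a b c _ h2 x (1 - x) y (1 - y) z (1 - z) hx (by linarith) hy (by linarith)
    hz (by linarith) _ d3

end Hb

namespace Pf

/-- Polynomial expressions with rational constants. -/
inductive Ex
  | c : ℤ → ℕ → Ex
  | x0 : Ex
  | x1 : Ex
  | x2 : Ex
  | add : Ex → Ex → Ex
  | mul : Ex → Ex → Ex

noncomputable def Ex.val (x y z : ℝ) : Ex → ℝ
  | .c n d => (n : ℝ) / (d : ℝ)
  | .x0 => x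
  | .x1 => y
  | .x2 => z
  | .add a b => a.val x y z + b.val x y z
  | .mul a b => a.val x y z * b.val x y z

def addQ (p q : ℕ × P3) : ℕ × P3 :=
  if p.1 = q.1 then (p.1, add3 p.2 q.2)
  else (p.1 * q.1, add3 (sm3 q.1 p.2) (sm3 p.1 q.2))

def Ex.toQ : Ex → ℕ × P3
  | .c n d => if d = 0 then (1, []) else (d, [[[n]]])
  | .x0 => (1, [[], [[1]]])
  | .x1 => (1, [[[], [1]]])
  | .x2 => (1, [[[0, 1]]])
  | .add a b => addQ a.toQ b.toQ
  | .mul a b => (a.toQ.1 * b.toQ.1, mul3 a.toQ.2 b.toQ.2)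

theorem Ex.toQ_spec (x y z : ℝ) : ∀ e : Ex, e.toQ.1 ≠ 0 ∧ ev3 x y z e.toQ.2 = e.toQ.1 * e.val x y z
  | .c n d => by
      by_cases h : d = 0
      · simp [toQ, val, h, ev3, pev]
      · simp [toQ, val, h, ev3, pev, ev2, ev1, ev0]
        field_simp
  | .x0 => by simp [toQ, val, ev3, pev, ev2, ev1, ev0]
  | .x1 => by simp [toQ, val, ev3, pev, ev2, ev1, ev0]
  | .x2 => by simp [toQ, val, ev3, pev, ev2, ev1, ev0]
  | .add a b => by
      obtain ⟨ha, ha'⟩ := toQ_spec x y z a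
      obtain ⟨hb, hb'⟩ := toQ_spec x y z b
      simp only [toQ, val, addQ]
      split_ifs with h
      · refine ⟨ha, ?_⟩
        simp only [ev3_add, ha', hb', ← h]; ring
      · refine ⟨mul_ne_zero ha hb, ?_⟩
        simp only [ev3_add, ev3_sm, ha', hb']; push_cast; ring
  | .mul a b => by
      obtain ⟨ha, ha'⟩ := toQ_spec x y z a
      obtain ⟨hb, hb'⟩ := toQ_spec x y z b
      refine ⟨mul_ne_zero ha hb, ?_⟩
      simp only [toQ, val, ev3_mul, ha', hb']; push_cast; ring

theorem Ex.nonneg (e : Ex) (a b c : ℕ) (t : Tr) (h : Hb.top a b c t e.toQ.2 = true) (x y z : ℝ)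
    (hx : 0 ≤ x) (hxa : x ≤ 1) (hy : 0 ≤ y) (hyb : y ≤ 1) (hz : 0 ≤ z) (hzc : z ≤ 1) :
    0 ≤ e.val x y z := by
  have h1 := Hb.top_sound a b c t _ h x y z hx hxa hy hyb hz hzc
  obtain ⟨h2, h3⟩ := e.toQ_spec x y z
  rw [h3] at h1
  have h4 : (0 : ℝ) < e.toQ.1 := by exact_mod_cast Nat.pos_of_ne_zero h2
  exact nonneg_of_mul_nonneg_right h1 h4

/-! ### The polynomials of the problem -/

def Ex.neg (a : Ex) : Ex := .mul (.c (-1) 1) a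
def Ex.sub (a b : Ex) : Ex := .add a b.neg

/-- `n / d + (n' / d') * m` -/
def lin (n : ℤ) (d : ℕ) (n' : ℤ) (d' : ℕ) (m : Ex) : Ex := .add (.c n d) (.mul (.c n' d') m)

def rhoE (g0 g1 g2 g3 S a m : Ex) : Ex :=
  let a2 := Ex.mul (.c 2 1) a
  let q := (Ex.mul S S).sub a2
  .add (.mul m m) (.add (.mul g0 (S.sub (.mul (.c 2 1) m))) (.add (.mul g1 (a2.sub (.mul m S)))
    (.add (.mul g2 ((Ex.mul a S).sub (.mul m q)))
      (.mul g3 ((Ex.mul a q).sub (.mul m (.mul S (q.sub a))))))))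

noncomputable def rho (g0 g1 g2 g3 S a m : ℝ) : ℝ :=
  m * m + (g0 * (S - 2 * m) + (g1 * (2 * a - m * S) + (g2 * (a * S - m * (S * S - 2 * a))
    + g3 * (a * (S * S - 2 * a) - m * (S * (S * S - 2 * a - a))))))

/-- region `S ≤ 1` -/
def q0E (g0 g1 g2 g3 S t m : Ex) : Ex :=
  let k := Ex.mul (.c 1 4) (.mul S t)
  let a := Ex.mul S k
  let T := (Ex.c 1 1).sub S
  let d := Ex.add k (.mul (.c 49 100) T)
  let b := Ex.add a T
  let v := Ex.mul k (.mul b ((Ex.mul (.c 49 100) S).sub m))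
  (Ex.mul (.mul (.c 1 40) (.mul ((Ex.c 1 1).sub m) (rhoE g0 g1 g2 g3 S a m)))
    (.mul (.add a (.mul m T)) (.mul d d))).sub (.mul m (.mul v v))

noncomputable def q0 (g0 g1 g2 g3 S t m : ℝ) : ℝ :=
  let k := 1 / 4 * (S * t)
  let a := S * k
  let T := 1 - S
  let d := k + 49 / 100 * T
  let b := a + T
  let v := k * (b * (49 / 100 * S - m))
  1 / 40 * ((1 - m) * rho g0 g1 g2 g3 S a m) * ((a + m * T) * (d * d)) - m * (v * v)

/-- region `S ≥ 1`, in terms of `s = 2 - S` -/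
def q1E (g0 g1 g2 g3 s t m : Ex) : Ex :=
  let k := Ex.mul (.c 1 4) (.mul s t)
  let b := Ex.mul s k
  let T := (Ex.c 1 1).sub s
  let d := Ex.add k (.mul (.c 49 100) T)
  let a := Ex.add b T
  let n := (Ex.c 1 1).sub m
  let v := Ex.mul k (.mul a (n.sub (Ex.mul (.c 49 100) s)))
  (Ex.mul (.mul (.c 1 40) (.mul n (rhoE g0 g1 g2 g3 ((Ex.c 2 1).sub s) a m)))
    (.mul (.add b (.mul n T)) (.mul d d))).sub (.mul m (.mul v v))

noncomputable def q1 (g0 g1 g2 g3 s t m : ℝ) : ℝ :=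
  let k := 1 / 4 * (s * t)
  let b := s * k
  let T := 1 - s
  let d := k + 49 / 100 * T
  let a := b + T
  let n := 1 - m
  let v := k * (a * (n - 49 / 100 * s))
  1 / 40 * (n * rho g0 g1 g2 g3 (2 - s) a m) * ((b + n * T) * (d * d)) - m * (v * v)

theorem rhoE_val (g0 g1 g2 g3 S a m : Ex) (x y z : ℝ) :
    (rhoE g0 g1 g2 g3 S a m).val x y z = rho (g0.val x y z) (g1.val x y z) (g2.val x y z)
      (g3.val x y z) (S.val x y z) (a.val x y z) (m.val x y z) := by
  simp only [rhoE, rho, Ex.val, Ex.sub, Ex.neg]; push_cast; ring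

theorem q0E_val (g0 g1 g2 g3 S t m : Ex) (x y z : ℝ) :
    (q0E g0 g1 g2 g3 S t m).val x y z = q0 (g0.val x y z) (g1.val x y z) (g2.val x y z)
      (g3.val x y z) (S.val x y z) (t.val x y z) (m.val x y z) := by
  simp only [q0E, q0, Ex.val, Ex.sub, Ex.neg, rhoE_val]
  push_cast
  simp only [div_one, neg_mul, one_mul, ← sub_eq_add_neg]

theorem q1E_val (g0 g1 g2 g3 S t m : Ex) (x y z : ℝ) :
    (q1E g0 g1 g2 g3 S t m).val x y z = q1 (g0.val x y z) (g1.val x y z) (g2.val x y z)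
      (g3.val x y z) (S.val x y z) (t.val x y z) (m.val x y z) := by
  simp only [q1E, q1, Ex.val, Ex.sub, Ex.neg, rhoE_val]
  push_cast
  simp only [div_one, neg_mul, one_mul, ← sub_eq_add_neg]

/-- `m = p / 1000 + (w / 1000) * x2`: the prior ranges over `[p, p + w] / 1000`. -/
def mE (p w : ℕ) : Ex := .add (.c p 1000) (.mul (.c w 1000) .x2)

structure Cert where
  p : ℕ
  w : ℕ
  g0 : Ex → Ex
  g1 : Ex → Ex
  g2 : Ex → Ex
  g3 : Ex → Ex

def Cert.A (C : Cert) : Ex :=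
  let m := mE C.p C.w
  q0E (C.g0 m) (C.g1 m) (C.g2 m) (C.g3 m) .x0 .x1 m
def Cert.B (C : Cert) : Ex :=
  let m := mE C.p C.w
  q1E (C.g0 m) (C.g1 m) (C.g2 m) (C.g3 m) .x0 .x1 m
def Cert.D (C : Cert) : Ex :=
  let m := mE C.p C.w
  rhoE (C.g0 m) (C.g1 m) (C.g2 m) (C.g3 m) (.c 1 1) (.c 0 1) m

open Tr in
def tA1 : Tr := (X (X (X (Z (X (Z (X L L) L) L) (X L (Z (X L L) L))) (Z L L)) L) (Y (X (Y L L) (Z (X L L) (X (Y L (Z (X L L) (Y L (X L (Z (X L (Y L (X L L))) (X L (Y L (Z (X (Y L L) (Y L L)) L)))))))) (Y L (Z L (Y L (Z L L))))))) (X L (X (Z L (Z L (X L (Z L (X L L))))) (Z L (Z L L))))))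

def kfam (k : Ex) (p w : ℕ) : Cert where
  p := p
  w := w
  g0 m := .mul (.c 1 2) m
  g1 m := (lin 1 2 (-1) 1000 m).sub (.mul k (.mul m (.mul m m)))
  g2 m := .mul (.c 2 1) (.mul k (.mul m m))
  g3 m := .mul (.c (-1) 1) (.mul k m)

def C1 : Cert := kfam (.c 5 1) 0 128

def lfam (a0 : ℤ) (b0 : ℕ) (c0 : ℤ) (d0 : ℕ) (a1 : ℤ) (b1 : ℕ) (c1 : ℤ) (d1 : ℕ)
    (a2 : ℤ) (b2 : ℕ) (c2 : ℤ) (d2 : ℕ) (a3 : ℤ) (b3 : ℕ) (c3 : ℤ) (d3 : ℕ) (p w : ℕ) : Cert where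
  p := p
  w := w
  g0 m := lin a0 b0 c0 d0 m
  g1 m := lin a1 b1 c1 d1 m
  g2 m := lin a2 b2 c2 d2 m
  g3 m := lin a3 b3 c3 d3 m

def C2 : Cert := kfam (lin 14 1 (-75) 1 (mE 128 32)) 128 32
def C3 : Cert := lfam 2 125 2 5 27 50 (-2) 5 49 125 (-117) 100 (-162) 125 107 20 160 40
def C4 : Cert := lfam 9 500 39 100 387 500 (-157) 100 (-99) 125 19 4 261 500 (-187) 50 200 25
def C5 : Cert := lfam 0 1 47 100 1001 500 (-703) 100 (-27) 5 2523 100 2531 500 (-598) 25 225 25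
def C6 : Cert := lfam 13 250 13 50 511 200 (-231) 25 (-1387) 250 1291 50 947 250 (-941) 50 250 100
def C7 : Cert := lfam 2 25 9 50 727 100 (-2271) 100 (-364) 25 5157 100 813 100 (-3123) 100 350 150

section checks
open Tr

theorem A1 : Hb.top 8 5 6 tA1 C1.A.toQ.2 = true := by decide +kernel
theorem B1 : Hb.top 8 5 6 (Y L (Y L L)) C1.B.toQ.2 = true := by decide +kernel
theorem D1 : Hb.top 0 0 6 L C1.D.toQ.2 = true := by decide +kernel
theorem A2 : Hb.top 8 5 7 (X (X (X (X L L) (X L L)) L) (Y (X L (X (Y L L) (Y L L))) (X L (X L L))))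
    C2.A.toQ.2 = true := by decide +kernel
theorem B2 : Hb.top 8 5 7 (Y L L) C2.B.toQ.2 = true := by decide +kernel
theorem D2 : Hb.top 0 0 6 L C2.D.toQ.2 = true := by decide +kernel
theorem A3 : Hb.top 8 5 4 (X (X (X L L) L) (Y (X L (X (Y L L) (Y (X L L) (X L L)))) (X L L)))
    C3.A.toQ.2 = true := by decide +kernel
theorem B3 : Hb.top 8 5 4 (Y L (Y L L)) C3.B.toQ.2 = true := by decide +kernel
theorem D3 : Hb.top 0 0 6 L C3.D.toQ.2 = true := by decide +kernel
theorem A4 : Hb.top 8 5 4 (X (X L L) (Y (X L (X L (Y (X L L) (X L L)))) (X L L)))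
    C4.A.toQ.2 = true := by decide +kernel
theorem B4 : Hb.top 8 5 4 (X L (Y L (X L L))) C4.B.toQ.2 = true := by decide +kernel
theorem D4 : Hb.top 0 0 6 L C4.D.toQ.2 = true := by decide +kernel
theorem A5 : Hb.top 8 5 4 (X (X L L) (Y (X L (X L L)) L)) C5.A.toQ.2 = true := by decide +kernel
theorem B5 : Hb.top 8 5 4 (X L (Y L (X L L))) C5.B.toQ.2 = true := by decide +kernel
theorem D5 : Hb.top 0 0 6 L C5.D.toQ.2 = true := by decide +kernel
theorem A6 : Hb.top 8 5 4 (X (X L L) (Y L L)) C6.A.toQ.2 = true := by decide +kernel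
theorem B6 : Hb.top 8 5 4 (X L (Y L (X L (Z (Z (X L L) L) L)))) C6.B.toQ.2 = true := by
  decide +kernel
theorem D6 : Hb.top 0 0 6 L C6.D.toQ.2 = true := by decide +kernel
theorem A7 : Hb.top 8 5 4 (X L (Y L L)) C7.A.toQ.2 = true := by decide +kernel
theorem B7 : Hb.top 8 5 4 (X L (Y L (X L L))) C7.B.toQ.2 = true := by decide +kernel
theorem D7 : Hb.top 0 0 6 L C7.D.toQ.2 = true := by decide +kernel

end checks

/-! ### From the polynomial inequalities to the theorem -/

def Good (m : ℝ) : Prop := ∃ g0 g1 g2 g3 : ℝ,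
  (∀ S t : ℝ, 0 ≤ S → S ≤ 1 → 0 ≤ t → t ≤ 1 → 0 ≤ q0 g0 g1 g2 g3 S t m) ∧
  (∀ s t : ℝ, 0 ≤ s → s ≤ 1 → 0 ≤ t → t ≤ 1 → 0 ≤ q1 g0 g1 g2 g3 s t m) ∧
  0 ≤ rho g0 g1 g2 g3 1 0 m

theorem Cert.good (C : Cert) (a b c : ℕ) (tA tB : Tr)
    (hA : Hb.top 8 5 a tA C.A.toQ.2 = true) (hB : Hb.top 8 5 b tB C.B.toQ.2 = true)
    (hD : Hb.top 0 0 c .L C.D.toQ.2 = true)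
    (h0 : ∀ x y z, (C.g0 (mE C.p C.w)).val x y z = (C.g0 (mE C.p C.w)).val 0 0 z)
    (h1 : ∀ x y z, (C.g1 (mE C.p C.w)).val x y z = (C.g1 (mE C.p C.w)).val 0 0 z)
    (h2 : ∀ x y z, (C.g2 (mE C.p C.w)).val x y z = (C.g2 (mE C.p C.w)).val 0 0 z)
    (h3 : ∀ x y z, (C.g3 (mE C.p C.w)).val x y z = (C.g3 (mE C.p C.w)).val 0 0 z)
    (hw : 0 < C.w) (m : ℝ) (hm : (C.p : ℝ) / 1000 ≤ m) (hm' : m ≤ ((C.p : ℝ) + C.w) / 1000) :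
    Good m := by
  have hw' : (0 : ℝ) < C.w := by exact_mod_cast hw
  obtain ⟨z, hz⟩ : ∃ z : ℝ, z = (m * 1000 - C.p) / C.w := ⟨_, rfl⟩
  have hz0 : 0 ≤ z := by rw [hz]; apply div_nonneg _ hw'.le; linarith
  have hz1 : z ≤ 1 := by rw [hz, div_le_one hw']; linarith
  have hmv : ∀ x y, (mE C.p C.w).val x y z = m := by
    intro x y
    simp only [mE, Ex.val, hz]
    push_cast
    field_simp
    ring
  refine ⟨(C.g0 (mE C.p C.w)).val 0 0 z, (C.g1 (mE C.p C.w)).val 0 0 z,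
    (C.g2 (mE C.p C.w)).val 0 0 z, (C.g3 (mE C.p C.w)).val 0 0 z, fun S t hS hS1 ht ht1 => ?_, fun s t hs hs1 ht ht1 => ?_, ?_⟩
  · have h := C.A.nonneg 8 5 a tA hA S t z hS hS1 ht ht1 hz0 hz1
    rw [Cert.A, q0E_val, h0, h1, h2, h3, hmv] at h
    exact h
  · have h := C.B.nonneg 8 5 b tB hB s t z hs hs1 ht ht1 hz0 hz1
    rw [Cert.B, q1E_val, h0, h1, h2, h3, hmv] at h
    exact h
  · have h := C.D.nonneg 0 0 c .L hD 0 0 z le_rfl zero_le_one le_rfl zero_le_one hz0 hz1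
    rw [Cert.D, rhoE_val, hmv] at h
    simpa [Ex.val] using h

theorem good_half (m : ℝ) (h0 : 0 ≤ m) (h1 : m ≤ 1 / 2) : Good m := by
  by_cases c1 : m ≤ 128 / 1000
  · exact C1.good _ _ _ _ _ A1 B1 D1 (fun _ _ _ => rfl) (fun _ _ _ => rfl) (fun _ _ _ => rfl)
      (fun _ _ _ => rfl) (by simp [C1, kfam]) m (by simp [C1, kfam]; linarith)
      (by simp [C1, kfam]; linarith)
  by_cases c2 : m ≤ 160 / 1000
  · exact C2.good _ _ _ _ _ A2 B2 D2 (fun _ _ _ => rfl) (fun _ _ _ => rfl) (fun _ _ _ => rfl)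
      (fun _ _ _ => rfl) (by simp [C2, kfam]) m (by simp [C2, kfam]; linarith)
      (by simp [C2, kfam]; linarith)
  by_cases c3 : m ≤ 200 / 1000
  · exact C3.good _ _ _ _ _ A3 B3 D3 (fun _ _ _ => rfl) (fun _ _ _ => rfl) (fun _ _ _ => rfl)
      (fun _ _ _ => rfl) (by simp [C3, lfam]) m (by simp [C3, lfam]; linarith)
      (by simp [C3, lfam]; linarith)
  by_cases c4 : m ≤ 225 / 1000
  · exact C4.good _ _ _ _ _ A4 B4 D4 (fun _ _ _ => rfl) (fun _ _ _ => rfl) (fun _ _ _ => rfl)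
      (fun _ _ _ => rfl) (by simp [C4, lfam]) m (by simp [C4, lfam]; linarith)
      (by simp [C4, lfam]; linarith)
  by_cases c5 : m ≤ 250 / 1000
  · exact C5.good _ _ _ _ _ A5 B5 D5 (fun _ _ _ => rfl) (fun _ _ _ => rfl) (fun _ _ _ => rfl)
      (fun _ _ _ => rfl) (by simp [C5, lfam]) m (by simp [C5, lfam]; linarith)
      (by simp [C5, lfam]; linarith)
  by_cases c6 : m ≤ 350 / 1000
  · exact C6.good _ _ _ _ _ A6 B6 D6 (fun _ _ _ => rfl) (fun _ _ _ => rfl) (fun _ _ _ => rfl)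
      (fun _ _ _ => rfl) (by simp [C6, lfam]) m (by simp [C6, lfam]; linarith)
      (by simp [C6, lfam]; linarith)
  · exact C7.good _ _ _ _ _ A7 B7 D7 (fun _ _ _ => rfl) (fun _ _ _ => rfl) (fun _ _ _ => rfl)
      (fun _ _ _ => rfl) (by simp [C7, lfam]) m (by simp [C7, lfam]; linarith)
      (by simp [C7, lfam]; linarith)

noncomputable def Hf (m x y e : ℝ) : ℝ :=
  (x * y * ((1 - x) * (1 - y)) * (e - m)) ^ 2 /
    (m * (1 - m) * (x * y + m * (1 - (x + y))) * (x * y + e * (1 - (x + y))) ^ 2)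

def Er (x y e : ℝ) : Prop :=
  (x + y ≤ 1 ∧ e = 49 / 100 * (x + y)) ∨ (1 ≤ x + y ∧ e = 49 / 100 * (x + y) + 1 / 50)

theorem div_bound (V D E r m : ℝ) (h0 : 0 < m) (h1 : m < 1) (hD : 0 < D) (hE : 0 < E)
    (h : 0 ≤ 1 / 40 * ((1 - m) * r) * (D * (E * E)) - m * (V * V)) :
    V ^ 2 / (m * (1 - m) * D * E ^ 2) ≤ 1 / (40 * m ^ 2) * r := by
  have h2 : 0 < 1 - m := by linarith
  rw [div_le_iff₀ (by positivity)]
  have : 1 / (40 * m ^ 2) * r * (m * (1 - m) * D * E ^ 2)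
      = (1 / 40 * ((1 - m) * r) * (D * (E * E))) / m := by field_simp
  rw [this, le_div_iff₀ h0]
  nlinarith

theorem bound_rho (m : ℝ) (h0 : 0 < m) (h1 : m < 1) (g0 g1 g2 g3 : ℝ)
    (hA : ∀ S t : ℝ, 0 ≤ S → S ≤ 1 → 0 ≤ t → t ≤ 1 → 0 ≤ q0 g0 g1 g2 g3 S t m)
    (hB : ∀ s t : ℝ, 0 ≤ s → s ≤ 1 → 0 ≤ t → t ≤ 1 → 0 ≤ q1 g0 g1 g2 g3 s t m)
    (hD : 0 ≤ rho g0 g1 g2 g3 1 0 m) (x y e : ℝ) (hx : 0 ≤ x) (hx1 : x ≤ 1) (hy : 0 ≤ y)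
    (hy1 : y ≤ 1) (he : Er x y e) :
    Hf m x y e ≤ 1 / (40 * m ^ 2) * rho g0 g1 g2 g3 (x + y) (x * y) m := by
  have hn : 0 < 1 - m := by linarith
  have hxy : 0 ≤ x * y := mul_nonneg hx hy
  have hxy' : 0 ≤ (1 - x) * (1 - y) := mul_nonneg (by linarith) (by linarith)
  have hc : 0 < 1 / (40 * m ^ 2) := by positivity
  by_cases hz : x * y * ((1 - x) * (1 - y)) = 0 ∧ 0 ≤ rho g0 g1 g2 g3 (x + y) (x * y) m
  · rw [Hf, hz.1]
    simpa using mul_nonneg hc.le hz.2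
  rcases he with ⟨hS, rfl⟩ | ⟨hS, rfl⟩
  · rcases (add_nonneg hx hy).eq_or_lt with hS0 | hS0
    · exfalso
      have hx0 : x = 0 := by linarith
      have hy0 : y = 0 := by linarith
      subst hx0 hy0
      have h := hA 0 0 le_rfl zero_le_one le_rfl zero_le_one
      apply hz
      refine ⟨by simp, ?_⟩
      simp only [q0, rho] at h ⊢
      have h3 : 0 < (1 - m) * m := mul_pos hn h0
      norm_num at h ⊢
      by_contra hcon
      push Not at hcon
      nlinarith [mul_pos h3 (sub_pos.2 hcon)]
    · have ht1 : 4 * (x * y) / (x + y) ^ 2 ≤ 1 := by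
        rw [div_le_one (by positivity)]; nlinarith [sq_nonneg (x - y)]
      have h := hA (x + y) (4 * (x * y) / (x + y) ^ 2) hS0.le hS (by positivity) ht1
      have hk : 1 / 4 * ((x + y) * (4 * (x * y) / (x + y) ^ 2)) = x * y / (x + y) := by
        field_simp
      have hkS : (x + y) * (x * y / (x + y)) = x * y := by field_simp
      simp only [q0, hk, hkS] at h
      by_cases hs : x * y = 0 ∧ x + y = 1
      · exfalso
        exact hz ⟨by rw [hs.1, zero_mul], by rw [hs.1, hs.2]; exact hD⟩
      have hpos : 0 < x * y ∨ 0 < 1 - (x + y) := by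
        by_contra hcon
        push Not at hcon
        exact hs ⟨le_antisymm hcon.1 hxy, by linarith⟩
      have hT : 0 ≤ 1 - (x + y) := by linarith
      have hDm : 0 < x * y + m * (1 - (x + y)) := by
        rcases hpos with h' | h'
        · have := mul_nonneg h0.le hT
          linarith
        · have := mul_pos h0 h'
          linarith
      have hDe : 0 < x * y + 49 / 100 * (x + y) * (1 - (x + y)) := by
        rcases hpos with h' | h'
        · have := mul_nonneg (mul_nonneg (by norm_num : (0 : ℝ) ≤ 49 / 100) hS0.le) hT
          linarith
        · have := mul_pos (mul_pos (by norm_num : (0 : ℝ) < 49 / 100) hS0) h'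
          linarith
      refine div_bound _ _ _ _ m h0 h1 hDm hDe ?_
      have h2 := mul_nonneg (mul_nonneg hS0.le hS0.le) h
      refine h2.trans_eq ?_
      field_simp
      ring
  · rcases (show 0 ≤ 2 - (x + y) by linarith).eq_or_lt with hS0 | hS0
    · exfalso
      have hx0 : x = 1 := by linarith
      have hy0 : y = 1 := by linarith
      subst hx0 hy0
      have h := hB 0 0 le_rfl zero_le_one le_rfl zero_le_one
      apply hz
      refine ⟨by simp, ?_⟩
      simp only [q1, rho] at h ⊢
      have h3 : 0 < (1 - m) * (1 - m) := mul_pos hn hn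
      norm_num at h ⊢
      by_contra hcon
      push Not at hcon
      nlinarith [mul_neg_of_pos_of_neg h3 hcon]
    · obtain ⟨s, hs⟩ : ∃ s, s = 2 - (x + y) := ⟨_, rfl⟩
      obtain ⟨b, hb⟩ : ∃ b, b = (1 - x) * (1 - y) := ⟨_, rfl⟩
      have hab : x * y = b + (1 - s) := by rw [hb, hs]; ring
      rw [← hs] at hS0
      rw [← hb] at hxy'
      have ht1 : 4 * b / s ^ 2 ≤ 1 := by
        rw [div_le_one (by positivity)]; rw [hb, hs]; nlinarith [sq_nonneg (x - y)]
      have h := hB s (4 * b / s ^ 2) hS0.le (by linarith) (by positivity) ht1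
      have hk : 1 / 4 * (s * (4 * b / s ^ 2)) = b / s := by
        field_simp
      have hkS : s * (b / s) = b := by field_simp
      have hSs : x + y = 2 - s := by linarith
      have hT : 0 ≤ 1 - s := by linarith
      simp only [q1, hk, hkS] at h
      rw [← hab, ← hSs] at h
      by_cases hs' : b = 0 ∧ s = 1
      · exfalso
        have h5 : x * y = 0 := by rw [hab, hs'.1, hs'.2]; ring
        exact hz ⟨by rw [h5, zero_mul], by rw [h5, hSs, hs'.2]; norm_num; exact hD⟩
      have hpos : 0 < b ∨ 0 < 1 - s := by
        by_contra hcon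
        push Not at hcon
        exact hs' ⟨le_antisymm hcon.1 hxy', by linarith⟩
      have hDm : 0 < x * y + m * (1 - (x + y)) := by
        have e1 : x * y + m * (1 - (x + y)) = b + (1 - m) * (1 - s) := by rw [hab, hSs]; ring
        rw [e1]
        rcases hpos with h' | h'
        · have := mul_nonneg hn.le hT
          linarith
        · have := mul_pos hn h'
          linarith
      have hDe : 0 < x * y + (49 / 100 * (x + y) + 1 / 50) * (1 - (x + y)) := by
        have e1 : x * y + (49 / 100 * (x + y) + 1 / 50) * (1 - (x + y))
            = b + 49 / 100 * s * (1 - s) := by rw [hab, hSs]; ring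
        rw [e1]
        rcases hpos with h' | h'
        · have := mul_nonneg (mul_nonneg (by norm_num : (0 : ℝ) ≤ 49 / 100) hS0.le) hT
          linarith
        · have := mul_pos (mul_pos (by norm_num : (0 : ℝ) < 49 / 100) hS0) h'
          linarith
      refine div_bound _ _ _ _ m h0 h1 hDm hDe ?_
      have h2 := mul_nonneg (mul_nonneg hS0.le hS0.le) h
      refine h2.trans_eq ?_
      obtain ⟨r, hr⟩ : ∃ r, r = rho g0 g1 g2 g3 (x + y) (x * y) m := ⟨_, rfl⟩
      rw [← hr, ← hb, hab, hSs]
      field_simp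
      ring

theorem dual_half (m : ℝ) (h0 : 0 < m) (h1 : m ≤ 1 / 2) :
    ∃ A : ℝ → ℝ, ∀ x y e : ℝ, 0 ≤ x → x ≤ 1 → 0 ≤ y → y ≤ 1 → Er x y e →
      Hf m x y e ≤ 1 / 40 + (x - m) * A y + (y - m) * A x := by
  obtain ⟨g0, g1, g2, g3, hA, hB, hD⟩ := good_half m h0.le h1
  refine ⟨fun x => 1 / (40 * m ^ 2) * (g0 + g1 * x + g2 * x ^ 2 + g3 * x ^ 3), ?_⟩
  intro x y e hx hx1 hy hy1 he
  refine (bound_rho m h0 (by linarith) g0 g1 g2 g3 hA hB hD x y e hx hx1 hy hy1 he).trans_eq ?_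
  simp only [rho]
  field_simp
  ring

theorem dual (m : ℝ) (h0 : 0 < m) (h1 : m < 1) :
    ∃ A : ℝ → ℝ, ∀ x y e : ℝ, 0 ≤ x → x ≤ 1 → 0 ≤ y → y ≤ 1 → Er x y e →
      Hf m x y e ≤ 1 / 40 + (x - m) * A y + (y - m) * A x := by
  rcases le_total m (1 / 2) with h | h
  · exact dual_half m h0 h
  obtain ⟨A, hA⟩ := dual_half (1 - m) (by linarith) (by linarith)
  refine ⟨fun x => - A (1 - x), fun x y e hx hx1 hy hy1 he => ?_⟩
  have h2 := hA (1 - x) (1 - y) (1 - e) (by linarith) (by linarith) (by linarith) (by linarith)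
    (by
      rcases he with ⟨h3, h4⟩ | ⟨h3, h4⟩
      · right; constructor <;> linarith
      · left; constructor <;> linarith)
  have h5 : Hf (1 - m) (1 - x) (1 - y) (1 - e) = Hf m x y e := by
    unfold Hf
    congr 1
    · ring
    · ring
  rw [h5] at h2
  linarith

theorem term_eq (m x y : ℝ) (h0 : 0 < m) (h1 : m < 1) (hx : 0 ≤ x) (hx1 : x ≤ 1) (hy : 0 ≤ y)
    (hy1 : y ≤ 1) :
    ((1 - x) * (1 - y) / (1 - m) + x * y / m) * (gB m x y - fmod x y) ^ 2
      = Hf m x y (ep x y) := by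
  have hn : 0 < 1 - m := by linarith
  by_cases c1 : x = 1 ∧ y = 1
  · obtain ⟨rfl, rfl⟩ := c1
    have : gB m 1 1 = 1 := by
      simp only [gB]
      field_simp
      simp
    simp [this, fmod, Hf]
  have hf : fmod x y = gB (ep x y) x y := by rw [fmod, if_neg c1]
  by_cases c0 : x = 0 ∧ y = 0
  · obtain ⟨rfl, rfl⟩ := c0
    rw [hf]
    simp [gB, Hf]
  have hS0 : 0 < x + y := by
    by_contra hcon
    exact c0 ⟨by linarith, by linarith⟩
  have hS2 : x + y < 2 := by
    by_contra hcon
    exact c1 ⟨by linarith, by linarith⟩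
  rw [hf]
  have he : 0 < ep x y ∧ ep x y < 1 := by
    unfold ep
    split_ifs <;> constructor <;> norm_num <;> linarith
  obtain ⟨e, hee⟩ : ∃ e, e = ep x y := ⟨_, rfl⟩
  rw [← hee] at he ⊢
  obtain ⟨he0, he1⟩ := he
  have hne : 0 < 1 - e := by linarith
  have ha : 0 ≤ x * y := mul_nonneg hx hy
  have hb : 0 ≤ (1 - x) * (1 - y) := mul_nonneg (by linarith) (by linarith)
  have hDm : x * y + m * (1 - (x + y)) = x * y * (1 - m) + (1 - x) * (1 - y) * m := by ring
  have hDe : x * y + e * (1 - (x + y)) = x * y * (1 - e) + (1 - x) * (1 - y) * e := by ring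
  unfold Hf gB
  rw [hDm, hDe]
  generalize x * y = a at *
  generalize (1 - x) * (1 - y) = b at *
  rcases ha.eq_or_lt with ha0 | ha0
  · subst ha0
    simp
  · have hm1 : 0 < a * (1 - m) + b * m := by
      have := mul_pos ha0 hn
      have := mul_nonneg hb h0.le
      linarith
    have hm2 : 0 < a * (1 - e) + b * e := by
      have := mul_pos ha0 hne
      have := mul_nonneg hb he0.le
      linarith
    have e1 : b / (1 - m) + a / m = (a * (1 - m) + b * m) / (m * (1 - m)) := by
      field_simp
      ring
    have e2 : a * (1 - m) / (a * (1 - m) + b * m) - a * (1 - e) / (a * (1 - e) + b * e)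
        = a * b * (e - m) / ((a * (1 - m) + b * m) * (a * (1 - e) + b * e)) := by
      rw [div_sub_div _ _ hm1.ne' hm2.ne']
      congr 1
      ring
    rw [e1, e2]
    generalize a * (1 - m) + b * m = D at *
    generalize a * (1 - e) + b * e = E at *
    field_simp

theorem ep_Er (x y : ℝ) : Er x y (ep x y) := by
  unfold ep Er
  split_ifs with h
  · left; exact ⟨h, by norm_num; ring⟩
  · right; exact ⟨by linarith, by norm_num; ring⟩

end Pf

theorem stmt_7 (μ y₁ z₁ y₂ z₂ : ℝ)
    (hμ0 : 0 < μ) (hμ1 : μ < 1)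
    (hy₁0 : 0 ≤ y₁) (hy₁ : y₁ ≤ μ) (hz₁ : μ ≤ z₁) (hz₁1 : z₁ ≤ 1) (h₁ : y₁ < z₁)
    (hy₂0 : 0 ≤ y₂) (hy₂ : y₂ ≤ μ) (hz₂ : μ ≤ z₂) (hz₂1 : z₂ ≤ 1) (h₂ : y₂ < z₂) :
    ((z₁-μ)/(z₁-y₁)) * ((z₂-μ)/(z₂-y₂)) * ((1-y₁)*(1-y₂)/(1-μ) + y₁*y₂/μ)
        * (gB μ y₁ y₂ - fmod y₁ y₂)^2
    + ((z₁-μ)/(z₁-y₁)) * ((μ-y₂)/(z₂-y₂)) * ((1-y₁)*(1-z₂)/(1-μ) + y₁*z₂/μ)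
        * (gB μ y₁ z₂ - fmod y₁ z₂)^2
    + ((μ-y₁)/(z₁-y₁)) * ((z₂-μ)/(z₂-y₂)) * ((1-z₁)*(1-y₂)/(1-μ) + z₁*y₂/μ)
        * (gB μ z₁ y₂ - fmod z₁ y₂)^2
    + ((μ-y₁)/(z₁-y₁)) * ((μ-y₂)/(z₂-y₂)) * ((1-z₁)*(1-z₂)/(1-μ) + z₁*z₂/μ)
        * (gB μ z₁ z₂ - fmod z₁ z₂)^2
    ≤ 0.025 := by
  obtain ⟨A, hA⟩ := Pf.dual μ hμ0 hμ1
  have key : ∀ x y : ℝ, 0 ≤ x → x ≤ 1 → 0 ≤ y → y ≤ 1 →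
      ((1 - x) * (1 - y) / (1 - μ) + x * y / μ) * (gB μ x y - fmod x y) ^ 2
        ≤ 1 / 40 + (x - μ) * A y + (y - μ) * A x := by
    intro x y hx hx1 hy hy1
    rw [Pf.term_eq μ x y hμ0 hμ1 hx hx1 hy hy1]
    exact hA x y _ hx hx1 hy hy1 (Pf.ep_Er x y)
  have k1 := key y₁ y₂ hy₁0 (by linarith) hy₂0 (by linarith)
  have k2 := key y₁ z₂ hy₁0 (by linarith) (by linarith) hz₂1
  have k3 := key z₁ y₂ (by linarith) hz₁1 hy₂0 (by linarith)
  have k4 := key z₁ z₂ (by linarith) hz₁1 (by linarith) hz₂1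
  have d1 : 0 < z₁ - y₁ := by linarith
  have d2 : 0 < z₂ - y₂ := by linarith
  have p1 : 0 ≤ (z₁ - μ) / (z₁ - y₁) := div_nonneg (by linarith) d1.le
  have p1' : 0 ≤ (μ - y₁) / (z₁ - y₁) := div_nonneg (by linarith) d1.le
  have p2 : 0 ≤ (z₂ - μ) / (z₂ - y₂) := div_nonneg (by linarith) d2.le
  have p2' : 0 ≤ (μ - y₂) / (z₂ - y₂) := div_nonneg (by linarith) d2.le
  have m1 := mul_le_mul_of_nonneg_left k1 (mul_nonneg p1 p2)
  have m2 := mul_le_mul_of_nonneg_left k2 (mul_nonneg p1 p2')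
  have m3 := mul_le_mul_of_nonneg_left k3 (mul_nonneg p1' p2)
  have m4 := mul_le_mul_of_nonneg_left k4 (mul_nonneg p1' p2')
  simp only [← mul_assoc ((_ : ℝ) * _) (_ + _) (_ ^ 2)] at m1 m2 m3 m4
  refine (add_le_add (add_le_add (add_le_add m1 m2) m3) m4).trans ?_
  apply le_of_eq
  generalize A y₁ = u1
  generalize A y₂ = u2
  generalize A z₁ = v1
  generalize A z₂ = v2
  field_simp
  ring
end
end

section
/- For every integer n ≥ 2 and every function f : [0,1]^n → [0,1], there exists a finite set S and a probability distribution P on {0,1} × S^n with coordinates (ω, s₁, …, s_n), under which s₁, …, s_n are independent and identically distributed conditional on ω, such that E_P[ ( f(x₁(s₁), …, x_n(s_n)) − x̂(s₁, …, s_n) )² ] ≥ 1/4 − 3·√(log n / n), where x_i(t) = P(ω = 1 | s_i = t) and x̂(t₁, …, t_n) = P(ω = 1 | s₁ = t₁, …, s_n = t_n) (conditional probabilities taken on positive-probability events). -/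
noncomputable def QQ (o : ℝ) (t : Fin 2) : ℝ := if t = 1 then o / (1 + o) else 1 / (1 + o)

lemma QQ_pos {o : ℝ} (ho : 0 < o) (t : Fin 2) : 0 < QQ o t := by
  unfold QQ; split_ifs <;> positivity

lemma QQ_sum {o : ℝ} (ho : 0 < o) : ∑ t, QQ o t = 1 := by
  simp [QQ, Fin.sum_univ_two]; field_simp

lemma sum_prod_pow (n : ℕ) (g : Fin 2 → ℝ) :
    ∑ s : Fin n → Fin 2, ∏ i, g (s i) = (∑ t, g t) ^ n := by
  have := (Finset.prod_univ_sum (fun _ : Fin n => (Finset.univ : Finset (Fin 2))) (fun _ t => g t)).symm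
  simpa using this

lemma pt_bound (a b F : ℝ) (ha : 0 < a) (hb : 0 < b) :
    a * F ^ 2 + b * (1 - F) ^ 2 - Real.sqrt (a * b) / 2 ≤
      a * (F - b / (a + b)) ^ 2 + b * (F - b / (a + b)) ^ 2 := by
  have h1 : a * (F - b / (a + b)) ^ 2 + b * (F - b / (a + b)) ^ 2
      = a * F ^ 2 + b * (1 - F) ^ 2 - a * b / (a + b) := by
    field_simp; ring
  rw [h1]
  have hs : Real.sqrt (a * b) = Real.sqrt a * Real.sqrt b := Real.sqrt_mul ha.le b
  have ea := Real.sq_sqrt ha.le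
  have eb := Real.sq_sqrt hb.le
  have : a * b / (a + b) ≤ Real.sqrt (a * b) / 2 := by
    rw [hs, div_le_div_iff₀ (by positivity) (by norm_num)]
    set u := Real.sqrt a
    set v := Real.sqrt b
    have hu : 0 ≤ u := Real.sqrt_nonneg _
    have hv : 0 ≤ v := Real.sqrt_nonneg _
    rw [← ea, ← eb]
    nlinarith [mul_nonneg (mul_nonneg hu hv) (sq_nonneg (u - v))]
  linarith

/-- Bhattacharyya bound -/
lemma bc_bound (n : ℕ) (hn : 2 ≤ n) (ε o : ℝ) (he : ε = Real.sqrt (Real.log n / n))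
    (he2 : ε ≤ 1 / 12) (ho : 0 < o) (hy1 : 1 ≤ (1 + 3 * ε) * o) (hy3 : (1 + 3 * ε) * o ≤ 3) :
    (∑ t, Real.sqrt (QQ o t * QQ ((1 + 3 * ε) ^ 2 * o) t)) ^ n ≤ 1 / Real.sqrt n := by
  have hn0 : (0:ℝ) < n := by positivity
  have he0 : 0 ≤ ε := he ▸ Real.sqrt_nonneg _
  have hlog : 0 ≤ Real.log n := Real.log_natCast_nonneg n
  have hesq : ε ^ 2 * n = Real.log n := by
    rw [he, Real.sq_sqrt (by positivity)]; field_simp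
  set ρ := 1 + 3 * ε with hρ
  have hρ0 : 0 < ρ := by positivity
  set B := ∑ t, Real.sqrt (QQ o t * QQ (ρ ^ 2 * o) t) with hB
  have hB0 : 0 ≤ B := Finset.sum_nonneg fun _ _ => Real.sqrt_nonneg _
  have hD : 0 < (1 + o) * (1 + ρ ^ 2 * o) := by positivity
  have hBe : B = (1 + ρ * o) / Real.sqrt ((1 + o) * (1 + ρ ^ 2 * o)) := by
    rw [hB, Fin.sum_univ_two]
    have e0 : QQ o 0 * QQ (ρ ^ 2 * o) 0 = 1 / ((1 + o) * (1 + ρ ^ 2 * o)) := by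
      simp [QQ]; ring
    have e1 : QQ o 1 * QQ (ρ ^ 2 * o) 1 = (ρ * o) ^ 2 / ((1 + o) * (1 + ρ ^ 2 * o)) := by
      simp [QQ]; field_simp
    rw [e0, e1, Real.sqrt_div (by positivity), Real.sqrt_div (by positivity),
      Real.sqrt_sq (by positivity), Real.sqrt_one]
    ring
  have hB2 : B ^ 2 ≤ 1 - ε ^ 2 := by
    rw [hBe, div_pow, Real.sq_sqrt hD.le, div_le_iff₀ hD]
    have key : (1 + o) * (1 + ρ ^ 2 * o) ≤ 9 * o := by
      have hr : ρ ≤ 5 / 4 := by linarith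
      have hr1 : 1 ≤ ρ := by linarith
      have h2 : ρ * ((1 + o) * (1 + ρ ^ 2 * o)) ≤ ρ * (9 * o) := by
        set y := ρ * o with hy
        have e : ρ * ((1 + o) * (1 + ρ ^ 2 * o)) = ρ * (1 + y ^ 2) + y * (1 + ρ ^ 2) := by
          rw [hy]; ring
        rw [e]
        have : ρ * (9 * o) = 9 * y := by rw [hy]; ring
        rw [this]
        have a1 : ρ * (1 + y ^ 2) ≤ 5 / 4 * (1 + y ^ 2) :=
          mul_le_mul_of_nonneg_right hr (by positivity)
        have a2 : y * (1 + ρ ^ 2) ≤ y * (1 + (5/4) ^ 2) := by gcongr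
        nlinarith [mul_nonneg (sub_nonneg.2 hy1) (sub_nonneg.2 hy3)]
      exact le_of_mul_le_mul_left h2 hρ0
    have e2 : (1 + o) * (1 + ρ ^ 2 * o) - (1 + ρ * o) ^ 2 = 9 * o * ε ^ 2 := by
      rw [hρ]; ring
    nlinarith [mul_le_mul_of_nonneg_right key (sq_nonneg ε)]
  have h3 : (B ^ n) ^ 2 ≤ 1 / n := by
    calc (B ^ n) ^ 2 = (B ^ 2) ^ n := by rw [← pow_mul, ← pow_mul, mul_comm]
      _ ≤ (Real.exp (-ε ^ 2)) ^ n := by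
        gcongr
        have := Real.add_one_le_exp (-ε ^ 2)
        linarith
      _ = 1 / n := by
        rw [← Real.exp_nat_mul, show (n:ℝ) * -ε ^ 2 = - Real.log n by rw [← hesq]; ring,
          Real.exp_neg, Real.exp_log hn0, one_div]
  have := Real.le_sqrt_of_sq_le h3
  rwa [Real.sqrt_div (by norm_num), Real.sqrt_one] at this

lemma loss_bound (n : ℕ) (hn : 2 ≤ n) (ε o : ℝ) (he : ε = Real.sqrt (Real.log n / n))
    (he2 : ε ≤ 1 / 12) (ho : 0 < o) (hy1 : 1 ≤ (1 + 3 * ε) * o) (hy3 : (1 + 3 * ε) * o ≤ 3)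
    (F : (Fin n → Fin 2) → ℝ) (w0 w1 : ℝ) (hs : w0 + w1 = 1)
    (h0 : 1 / 2 - 3 * ε / 4 ≤ w0) (h1 : 1 / 2 - 3 * ε / 4 ≤ w1) :
    (1 / 2 - 3 * ε / 4) * (∑ s, (∏ i, QQ o (s i)) * F s ^ 2
        + ∑ s, (∏ i, QQ ((1 + 3 * ε) ^ 2 * o) (s i)) * (1 - F s) ^ 2) - 1 / 4 * (1 / Real.sqrt n)
      ≤ ∑ s, (w0 * ∏ i, QQ o (s i)) * (F s - (w1 * ∏ i, QQ ((1 + 3 * ε) ^ 2 * o) (s i)) /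
          (w0 * ∏ i, QQ o (s i) + w1 * ∏ i, QQ ((1 + 3 * ε) ^ 2 * o) (s i))) ^ 2
        + ∑ s, (w1 * ∏ i, QQ ((1 + 3 * ε) ^ 2 * o) (s i)) *
          (F s - (w1 * ∏ i, QQ ((1 + 3 * ε) ^ 2 * o) (s i)) /
          (w0 * ∏ i, QQ o (s i) + w1 * ∏ i, QQ ((1 + 3 * ε) ^ 2 * o) (s i))) ^ 2 := by
  have hbc := bc_bound n hn ε o he he2 ho hy1 hy3
  have he0 : 0 ≤ ε := he ▸ Real.sqrt_nonneg _
  have ho' : 0 < (1 + 3 * ε) ^ 2 * o := by positivity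
  set o' := (1 + 3 * ε) ^ 2 * o
  have hw0 : 0 < w0 := by linarith
  have hw1 : 0 < w1 := by linarith
  have hG : ∀ s : Fin n → Fin 2, 0 < ∏ i, QQ o (s i) := fun s => Finset.prod_pos fun i _ => QQ_pos ho _
  have hG' : ∀ s : Fin n → Fin 2, 0 < ∏ i, QQ o' (s i) := fun s => Finset.prod_pos fun i _ => QQ_pos ho' _
  rw [← sum_prod_pow] at hbc
  rw [← Finset.sum_add_distrib, ← Finset.sum_add_distrib, Finset.mul_sum]
  have : ∀ s ∈ (Finset.univ : Finset (Fin n → Fin 2)),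
    (1 / 2 - 3 * ε / 4) * ((∏ i, QQ o (s i)) * F s ^ 2 + (∏ i, QQ o' (s i)) * (1 - F s) ^ 2)
     - 1 / 4 * ∏ i, Real.sqrt (QQ o (s i) * QQ o' (s i)) ≤
    (w0 * ∏ i, QQ o (s i)) * (F s - (w1 * ∏ i, QQ o' (s i)) /
          (w0 * ∏ i, QQ o (s i) + w1 * ∏ i, QQ o' (s i))) ^ 2
        + (w1 * ∏ i, QQ o' (s i)) *
          (F s - (w1 * ∏ i, QQ o' (s i)) /
          (w0 * ∏ i, QQ o (s i) + w1 * ∏ i, QQ o' (s i))) ^ 2 := by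
    intro s _
    refine le_trans ?_ (pt_bound _ _ (F s) (mul_pos hw0 (hG s)) (mul_pos hw1 (hG' s)))
    have e1 : ∏ i, Real.sqrt (QQ o (s i) * QQ o' (s i))
        = Real.sqrt ((∏ i, QQ o (s i)) * ∏ i, QQ o' (s i)) := by
      rw [← Finset.prod_mul_distrib, Real.sqrt_prod]
      intro i _
      exact (mul_pos (QQ_pos ho _) (QQ_pos ho' _)).le
    rw [e1, show w0 * (∏ i, QQ o (s i)) * (w1 * ∏ i, QQ o' (s i))
      = (w0 * w1) * ((∏ i, QQ o (s i)) * ∏ i, QQ o' (s i)) by ring,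
      Real.sqrt_mul (mul_pos hw0 hw1).le]
    have e2 : Real.sqrt (w0 * w1) ≤ 1 / 2 := by
      rw [Real.sqrt_le_left (by norm_num)]
      nlinarith [sq_nonneg (w0 - w1)]
    have e3 := mul_le_mul_of_nonneg_right e2 (Real.sqrt_nonneg ((∏ i, QQ o (s i)) * ∏ i, QQ o' (s i)))
    have e4 := mul_le_mul_of_nonneg_right h0 (mul_nonneg (hG s).le (sq_nonneg (F s)))
    have e5 := mul_le_mul_of_nonneg_right h1 (mul_nonneg (hG' s).le (sq_nonneg (1 - F s)))
    linarith
  have := Finset.sum_le_sum this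
  rw [Finset.sum_sub_distrib, ← Finset.mul_sum (f := fun s : Fin n → Fin 2 => ∏ i, Real.sqrt (QQ o (s i) * QQ o' (s i)))] at this
  linarith

lemma chain_bound (A C : ℕ → ℝ) (hA : ∀ k, 0 ≤ A k) (h : ∀ k, 1 / 2 ≤ A k + C k) (m : ℕ) :
    (m : ℝ) / 2 + C (m + 1) ≤ ∑ k ∈ Finset.range (m + 1), (A k + C (k + 1)) := by
  induction m with
  | zero => simp; exact hA 0
  | succ m ih =>
    rw [Finset.sum_range_succ]
    have := h (m + 1)
    push_cast
    linarith

/-- Theorem 3: for every `n ≥ 2` and every aggregation scheme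
`f : [0,1]^n → [0,1]`, there is a conditionally i.i.d. information structure — given by a
finite signal set `Fin N`, a prior `w` on the state, and a conditional signal distribution
`q` — on which the relative loss `E[(f(x₁,…,x_n) - x̂)²]` is at least `1/4 - 3√(log n / n)`. -/
theorem stmt_19 (n : ℕ) (hn : 2 ≤ n) (f : (Fin n → ℝ) → ℝ)
    (hf : ∀ v : Fin n → ℝ, (∀ i, v i ∈ Set.Icc (0:ℝ) 1) → f v ∈ Set.Icc (0:ℝ) 1) :
    ∃ (N : ℕ) (w : Bool → ℝ) (q : Bool → Fin N → ℝ),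
      (∀ b, 0 ≤ w b) ∧ w false + w true = 1 ∧
      (∀ b t, 0 ≤ q b t) ∧ (∀ b, ∑ t : Fin N, q b t = 1) ∧
      1/4 - 3 * Real.sqrt (Real.log n / n) ≤
        ∑ b : Bool, ∑ s : Fin n → Fin N,
          (w b * ∏ i, q b (s i)) *
          (f (fun i => (w true * q true (s i)) /
                (w false * q false (s i) + w true * q true (s i)))
            - (w true * ∏ i, q true (s i)) /
               (w false * ∏ i, q false (s i) + w true * ∏ i, q true (s i)))^2 := by
  set ε := Real.sqrt (Real.log n / n) with he
  have he0 : 0 ≤ ε := Real.sqrt_nonneg _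
  have hn0 : (0:ℝ) < n := by positivity
  have hlog2 : Real.log 2 ≤ Real.log n :=
    Real.log_le_log (by norm_num) (by exact_mod_cast hn)
  have hl2 := Real.log_two_gt_d9
  have hesq : ε ^ 2 * n = Real.log n := by
    rw [he, Real.sq_sqrt (by positivity)]; field_simp
  by_cases he2 : 1 / 12 < ε
  · refine ⟨1, fun _ => 1 / 2, fun _ _ => 1, by norm_num, by norm_num, by norm_num, by simp, ?_⟩
    refine le_trans (by linarith : _ ≤ (0:ℝ)) ?_
    refine Finset.sum_nonneg fun b _ => Finset.sum_nonneg fun s _ => ?_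
    exact mul_nonneg (by simp) (sq_nonneg _)
  push Not at he2
  have hepos : 0 < ε := by
    rcases he0.lt_or_eq with h | h
    · exact h
    · rw [← h] at hesq; norm_num at hesq; linarith
  have hn3 : (3:ℝ) ≤ n := by nlinarith
  have hlog1 : 1 ≤ Real.log n := by
    rw [Real.le_log_iff_exp_le hn0]
    linarith [Real.exp_one_lt_d9]
  have hse : 1 / Real.sqrt n ≤ ε := by
    rw [he, Real.sqrt_div (by positivity)]
    gcongr
    exact Real.one_le_sqrt.2 hlog1
  by_contra hcon
  have hρ0 : 0 < 1 + 3 * ε := by positivity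
  set ρ := 1 + 3 * ε with hρ
  let v : Fin 2 → ℝ := fun t => if t = 1 then ρ / (1 + ρ) else 1 / (1 + ρ)
  let F : (Fin n → Fin 2) → ℝ := fun s => f (fun i => v (s i))
  let o : ℕ → ℝ := fun k => ρ ^ (2 * k) / ρ
  have hopos : ∀ k, 0 < o k := fun k => by positivity
  have hosucc : ∀ k, o (k + 1) = ρ ^ 2 * o k := fun k => by
    simp only [o]; ring
  let A : ℕ → ℝ := fun k => ∑ s, (∏ i, QQ (o k) (s i)) * F s ^ 2
  let C : ℕ → ℝ := fun k => ∑ s, (∏ i, QQ (o k) (s i)) * (1 - F s) ^ 2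
  have hGn : ∀ k (s : Fin n → Fin 2), 0 ≤ ∏ i, QQ (o k) (s i) :=
    fun k s => Finset.prod_nonneg fun i _ => (QQ_pos (hopos k) _).le
  have hA : ∀ k, 0 ≤ A k := fun k => Finset.sum_nonneg fun s _ => mul_nonneg (hGn k s) (sq_nonneg _)
  have hC : ∀ k, 0 ≤ C k := fun k => Finset.sum_nonneg fun s _ => mul_nonneg (hGn k s) (sq_nonneg _)
  have hAC : ∀ k, 1 / 2 ≤ A k + C k := by
    intro k
    have h1 : ∑ s : Fin n → Fin 2, ∏ i, QQ (o k) (s i) = 1 := by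
      rw [sum_prod_pow, QQ_sum (hopos k), one_pow]
    simp only [A, C]
    have h2 : (1 / 2 : ℝ) = ∑ s : Fin n → Fin 2, 1 / 2 * ∏ i, QQ (o k) (s i) := by
      rw [← Finset.mul_sum, h1, mul_one]
    rw [← Finset.sum_add_distrib, h2]
    refine Finset.sum_le_sum fun s _ => ?_
    nlinarith [mul_nonneg (hGn k s) (sq_nonneg (2 * F s - 1))]
  set m := ⌊1 / (6 * ε)⌋₊ with hm
  have hm1 : (m : ℝ) * (6 * ε) ≤ 1 := by
    have := Nat.floor_le (by positivity : 0 ≤ 1 / (6 * ε))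
    rwa [le_div_iff₀ (by positivity)] at this
  have hm2 : 1 ≤ ((m : ℝ) + 1) * (6 * ε) := by
    have := (Nat.lt_floor_add_one (1 / (6 * ε))).le
    rwa [div_le_iff₀ (by positivity)] at this
  have main : ∀ k ∈ Finset.range (m + 1),
      A k + C (k + 1) ≤ (1 / 4 - 3 * ε + 1 / 4 * ε) / (1 / 2 - 3 * ε / 4) := by
    intro k hk
    have hkm : (k : ℝ) ≤ m := by
      have := Finset.mem_range.1 hk
      exact_mod_cast (by omega : k ≤ m)
    have hy : ρ * o k = ρ ^ (2 * k) := by simp only [o]; field_simp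
    have hy1 : 1 ≤ ρ * o k := by
      rw [hy]; exact one_le_pow₀ (by linarith)
    have hy3 : ρ * o k ≤ 3 := by
      rw [hy]
      calc ρ ^ (2 * k) ≤ (Real.exp (3 * ε)) ^ (2 * k) := by
            gcongr
            have := Real.add_one_le_exp (3 * ε)
            linarith
        _ = Real.exp ((k : ℝ) * (6 * ε)) := by
            rw [← Real.exp_nat_mul]; push_cast; ring_nf
        _ ≤ Real.exp 1 := by
            apply Real.exp_le_exp.2
            nlinarith
        _ ≤ 3 := by linarith [Real.exp_one_lt_d9]
    have hok := hopos k
    have hoke := hosucc k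
    generalize hx : o k = x at *
    have hD : 0 < (1 + ρ) * (1 + ρ * x) := by positivity
    set w0 := ρ * (1 + x) / ((1 + ρ) * (1 + ρ * x)) with hw0
    set w1 := (1 + ρ ^ 2 * x) / ((1 + ρ) * (1 + ρ * x)) with hw1
    have hsum : w0 + w1 = 1 := by rw [hw0, hw1]; field_simp; ring
    have hc : 1 / 2 - 3 * ε / 4 ≤ 1 / (1 + ρ) := by
      rw [le_div_iff₀ (by positivity), hρ]; nlinarith
    have h0 : 1 / 2 - 3 * ε / 4 ≤ w0 := by
      refine hc.trans ?_
      rw [hw0, div_le_div_iff₀ (by positivity) hD]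
      have : 1 * ((1 + ρ) * (1 + ρ * x)) ≤ ρ * (1 + x) * (1 + ρ) := by nlinarith
      exact this
    have h1 : 1 / 2 - 3 * ε / 4 ≤ w1 := by
      refine hc.trans ?_
      rw [hw1, div_le_div_iff₀ (by positivity) hD]
      have : 1 * ((1 + ρ) * (1 + ρ * x)) ≤ (1 + ρ ^ 2 * x) * (1 + ρ) := by
        have h2 : ρ * x ≤ ρ ^ 2 * x := by nlinarith
        nlinarith
      exact this
    have hlb := loss_bound n hn ε x he he2 hok hy1 hy3 F w0 w1 hsum h0 h1
    rw [← hρ] at hlb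
    rw [le_div_iff₀ (by linarith)]
    by_contra hlt
    push Not at hlt
    apply hcon
    have hx' : 0 < ρ ^ 2 * x := by positivity
    refine ⟨2, fun b => if b then w1 else w0, fun b => if b then QQ (ρ ^ 2 * x) else QQ x,
      ?_, by simpa using hsum, ?_, ?_, ?_⟩
    · rintro (_ | _) <;> simp <;> positivity
    · rintro (_ | _) t
      · simpa using (QQ_pos hok t).le
      · simpa using (QQ_pos hx' t).le
    · rintro (_ | _)
      · simpa using QQ_sum hok
      · simpa using QQ_sum hx'
    · have hF : ∀ s : Fin n → Fin 2, f (fun i => (w1 * QQ (ρ ^ 2 * x) (s i)) /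
          (w0 * QQ x (s i) + w1 * QQ (ρ ^ 2 * x) (s i))) = F s := by
        intro s
        simp only [F]
        congr 1
        funext i
        simp only [v, QQ, hw0, hw1]
        split_ifs
        · field_simp
        · field_simp
          try ring
      simp only [Fintype.sum_bool, if_true, Bool.false_eq_true, if_false, hF]
      have hAe : A k = ∑ s, (∏ i, QQ x (s i)) * F s ^ 2 := by simp only [A, hx]
      have hCe : C (k + 1) = ∑ s, (∏ i, QQ (ρ ^ 2 * x) (s i)) * (1 - F s) ^ 2 := by
        simp only [C, hoke]
      rw [← hAe, ← hCe] at hlb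
      linarith
  have hch := chain_bound A C hA hAC m
  have hup := Finset.sum_le_sum main
  rw [Finset.sum_const, Finset.card_range, nsmul_eq_mul] at hup
  have hCm := hC (m + 1)
  have hfin : (m : ℝ) / 2 ≤
      ((m + 1 : ℕ) : ℝ) * ((1 / 4 - 3 * ε + 1 / 4 * ε) / (1 / 2 - 3 * ε / 4)) := by linarith
  rw [← mul_div_assoc, le_div_iff₀ (by linarith)] at hfin
  push_cast at hfin
  nlinarith
end
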